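/- arXiv:math/0305411 — 3 statements merged into one kernel-verified Lean document; each statement's English description precedes it below -/
import Mathlib

section
/- Let K be a symmetric convex body in ℝ^n and let K_t, t in an interval I, be an SRS-movement of K. Then for every real p ≥ 1 and every integer N ≥ n, the function t ↦ 𝔼 V_{K_t, N}^p is convex on I. -/
open MeasureTheory Set
open scoped RealInnerProductSpace

noncomputable section

variable {E : Type*} [NormedAddCommGroup E] [InnerProductSpace ℝ E]

/-- Orthogonal projection `π_v` onto the hyperplane `v^⊥`. -/
def projPerp (v x : E) : E := x - (⟪x, v⟫ / ⟪v, v⟫) • v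

/-- The family of sets `K_t = { x + t β(π_v(x)) v : x ∈ K }` underlying an RS-movement
with direction `v` and speed function `β`. -/
def RSFamily (K : Set E) (v : E) (β : E → ℝ) (t : ℝ) : Set E :=
  (fun x => x + (t * β (projPerp v x)) • v) '' K

/-- A symmetric convex body `K` is SRS-decomposable if there are `ε > 0`, a direction
`v ≠ 0` and a speed function `β` which is odd on `π_v(K)` and is not the restriction of a
linear functional, such that `K_t` is convex for every `t ∈ (-ε, ε)`
(note `K_0 = K` automatically). -/
def IsSRSDecomposable (K : Set E) : Prop :=
  ∃ (v : E) (β : E → ℝ) (ε : ℝ), 0 < ε ∧ v ≠ 0 ∧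
    (∀ x ∈ projPerp v '' K, β (-x) = -β x) ∧
    (∀ t ∈ Set.Ioo (-ε) ε, Convex ℝ (RSFamily K v β t)) ∧
    ¬∃ ℓ : E →ₗ[ℝ] ℝ, ∀ x ∈ projPerp v '' K, β x = ℓ x

/-- A symmetric convex body: a compact convex set with nonempty interior with `K = -K`. -/
def IsSymConvexBody (K : Set E) : Prop :=
  IsCompact K ∧ Convex ℝ K ∧ (interior K).Nonempty ∧ K = -K

/-- `momentU n N K p = 𝔼 U_{K,N}^p`, the `p`-th moment of the normalized volume of the
convex hull of `N` independent uniform random points in `K ⊆ ℝⁿ`. -/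
def momentU (n N : ℕ) (K : Set (EuclideanSpace ℝ (Fin n))) (p : ℝ) : ℝ :=
  (∫ x : Fin N → EuclideanSpace ℝ (Fin n) in {x | ∀ i, x i ∈ K},
      ((volume (convexHull ℝ (Set.range x))).toReal / (volume K).toReal) ^ p) /
    (volume K).toReal ^ N

/-- `momentV n N K p = 𝔼 V_{K,N}^p`, the `p`-th moment of the normalized volume of the
symmetric convex hull `conv{±x₁, …, ±x_N}` of `N` independent uniform random points
in `K ⊆ ℝⁿ`. -/
def momentV (n N : ℕ) (K : Set (EuclideanSpace ℝ (Fin n))) (p : ℝ) : ℝ :=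
  (∫ x : Fin N → EuclideanSpace ℝ (Fin n) in {x | ∀ i, x i ∈ K},
      ((volume (convexHull ℝ (Set.range x ∪ -Set.range x))).toReal / (volume K).toReal) ^ p) /
    (volume K).toReal ^ N


section aux

open scoped ENNReal

lemma aux_hull_range {ι F : Type*} [Fintype ι] [AddCommGroup F] [Module ℝ F] (y : ι → F) :
    convexHull ℝ (Set.range y) = (fun w : ι → ℝ => ∑ i, w i • y i) '' stdSimplex ℝ ι := by
  classical
  have h := convexHull_rangle_single_eq_stdSimplex ℝ ι
  let f : (ι → ℝ) →ₗ[ℝ] F := ∑ i, (LinearMap.proj (R := ℝ) i).smulRight (y i)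
  have hf : (fun w : ι → ℝ => ∑ i, w i • y i) = f := by
    ext w; simp [f]
  rw [hf, ← h, LinearMap.image_convexHull, ← Set.range_comp]
  congr 2
  ext i
  simp [f, Pi.single_apply]

lemma aux_fibre {F : Type*} [NormedAddCommGroup F] [NormedSpace ℝ F] {W : Set F}
    (hW : Convex ℝ W) (hWc : IsCompact W) (f g : F → ℝ)
    (hf : ContinuousOn f W) (hg : ContinuousOn g W) {a b : ℝ} (ha : 0 ≤ a) (hb : 0 ≤ b) :
    volume ((fun w => a * f w + b * g w) '' W) ≤
      ENNReal.ofReal a * volume (f '' W) + ENNReal.ofReal b * volume (g '' W) := by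
  rcases W.eq_empty_or_nonempty with rfl | hne
  · simp
  have hcon : IsConnected W := ⟨hne, hW.isPreconnected⟩
  have key : ∀ f : F → ℝ, ContinuousOn f W → ∃ l u, l ≤ u ∧ f '' W = Set.Icc l u := by
    intro f hf
    have := eq_Icc_of_connected_compact (hcon.image f hf) (hWc.image_of_continuousOn hf)
    refine ⟨_, _, ?_, this⟩
    have h2 : (f '' W).Nonempty := hne.image f
    rw [this] at h2
    exact Set.nonempty_Icc.1 h2
  obtain ⟨l1, u1, h1, e1⟩ := key f hf
  obtain ⟨l2, u2, h2, e2⟩ := key g hg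
  have hsub : (fun w => a * f w + b * g w) '' W ⊆ Set.Icc (a * l1 + b * l2) (a * u1 + b * u2) := by
    rintro _ ⟨w, hw, rfl⟩
    have m1 : f w ∈ Set.Icc l1 u1 := e1 ▸ Set.mem_image_of_mem f hw
    have m2 : g w ∈ Set.Icc l2 u2 := e2 ▸ Set.mem_image_of_mem g hw
    have := mul_le_mul_of_nonneg_left m1.1 ha
    have := mul_le_mul_of_nonneg_left m1.2 ha
    have := mul_le_mul_of_nonneg_left m2.1 hb
    have := mul_le_mul_of_nonneg_left m2.2 hb
    constructor <;> simp only <;> linarith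
  refine (measure_mono hsub).trans ?_
  rw [e1, e2, Real.volume_Icc, Real.volume_Icc, Real.volume_Icc, ← ENNReal.ofReal_mul ha,
    ← ENNReal.ofReal_mul hb, ← ENNReal.ofReal_add (by nlinarith) (by nlinarith)]
  apply ENNReal.ofReal_le_ofReal
  linarith

variable {F H : Type*} [NormedAddCommGroup F] [NormedSpace ℝ F] [MeasurableSpace F] [BorelSpace F]
  [FiniteDimensional ℝ F]
  [NormedAddCommGroup H] [NormedSpace ℝ H] [MeasurableSpace H] [BorelSpace H]
  [FiniteDimensional ℝ H]

lemma aux_measure (ν : Measure F) [ν.IsAddHaarMeasure] (μ : Measure H) [μ.IsAddHaarMeasure]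
    (L : (H × ℝ) ≃L[ℝ] F) :
    ∃ c : ℝ≥0∞, c ≠ ∞ ∧ ν = c • Measure.map L (μ.prod volume) := by
  have : (Measure.map L (μ.prod (volume : Measure ℝ))).IsAddHaarMeasure :=
    L.isAddHaarMeasure_map _
  have h := Measure.isAddLeftInvariant_eq_smul ν (Measure.map L (μ.prod volume))
  exact ⟨_, ENNReal.coe_ne_top, h⟩

lemma aux_shadow (ν : Measure F) [ν.IsAddHaarMeasure] (μ : Measure H) [μ.IsAddHaarMeasure]
    (L : (H × ℝ) ≃L[ℝ] F) {ι : Type*} [Fintype ι] (y : ι → F) (b : ι → ℝ) :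
    ConvexOn ℝ Set.univ (fun t : ℝ =>
      (ν (convexHull ℝ (Set.range fun i => y i + (t * b i) • L (0, 1)))).toReal) := by
  obtain ⟨c, hc, hν⟩ := aux_measure ν μ L
  set C : ℝ → Set F := fun t => convexHull ℝ (Set.range fun i => y i + (t * b i) • L (0, 1))
    with hC
  have hCc : ∀ t, IsCompact (C t) := fun t => (Set.finite_range _).isCompact_convexHull (𝕜 := ℝ)
  have hfin : ∀ t, ν (C t) ≠ ∞ := fun t => (hCc t).measure_lt_top.ne
  have hmeas : ∀ t, MeasurableSet (L ⁻¹' C t) := fun t =>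
    L.continuous.measurable (hCc t).measurableSet
  have hv : ∀ t, ν (C t) = c * ∫⁻ z, volume (Prod.mk z ⁻¹' (L ⁻¹' C t)) ∂μ := by
    intro t
    rw [hν, Measure.smul_apply, Measure.map_apply L.continuous.measurable (hCc t).measurableSet,
      Measure.prod_apply (hmeas t), smul_eq_mul]
  set W : H → Set (ι → ℝ) := fun z => {w | w ∈ stdSimplex ℝ ι ∧
    ∑ i, w i • (L.symm (y i)).1 = z} with hW
  have hWc : ∀ z, IsCompact (W z) := by
    intro z
    refine (isCompact_stdSimplex ℝ ι).inter_right (t := {w | ∑ i, w i • (L.symm (y i)).1 = z}) ?_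
    exact isClosed_eq (by fun_prop) continuous_const
  have hWcv : ∀ z, Convex ℝ (W z) := by
    intro z w hw w' hw' p q hp hq hpq
    refine ⟨convex_stdSimplex ℝ ι hw.1 hw'.1 hp hq hpq, ?_⟩
    simp only [Pi.add_apply, Pi.smul_apply, smul_eq_mul, add_smul, mul_smul, Finset.sum_add_distrib,
      ← Finset.smul_sum, hw.2, hw'.2]
    rw [← add_smul, hpq, one_smul]
  have hfib : ∀ t z, Prod.mk z ⁻¹' (L ⁻¹' C t) =
      (fun w : ι → ℝ => ∑ i, w i * ((L.symm (y i)).2 + t * b i)) '' W z := by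
    intro t z
    have hL : ∀ i, y i + (t * b i) • L (0, 1) =
        L ((L.symm (y i)).1, (L.symm (y i)).2 + t * b i) := by
      intro i
      have : ((L.symm (y i)).1, (L.symm (y i)).2 + t * b i)
        = L.symm (y i) + (t * b i) • ((0 : H), (1 : ℝ)) := by
        ext <;> simp
      rw [this, map_add, map_smul, L.apply_symm_apply]
    ext s
    simp only [hC, Set.mem_preimage, aux_hull_range, Set.mem_image, hL]
    simp only [← map_smul, ← map_sum,
      L.injective.eq_iff, hW, Set.mem_ofPred_eq, Prod.ext_iff, Prod.fst_sum, Prod.snd_sum,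
      Prod.smul_fst, Prod.smul_snd, smul_eq_mul, and_assoc]
  refine ⟨convex_univ, ?_⟩
  intro t _ s _ p q hp hq hpq
  have main : ν (C (p • t + q • s)) ≤ ENNReal.ofReal p * ν (C t) + ENNReal.ofReal q * ν (C s) := by
    have hm : ∀ t, Measurable fun z => volume (Prod.mk z ⁻¹' (L ⁻¹' C t)) := fun t =>
      measurable_measure_prodMk_left (hmeas t)
    have : ∫⁻ z, volume (Prod.mk z ⁻¹' (L ⁻¹' C (p • t + q • s))) ∂μ ≤
        ∫⁻ z, (ENNReal.ofReal p * volume (Prod.mk z ⁻¹' (L ⁻¹' C t)) +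
          ENNReal.ofReal q * volume (Prod.mk z ⁻¹' (L ⁻¹' C s))) ∂μ := by
      apply lintegral_mono
      intro z
      simp only [hfib]
      refine le_trans (le_of_eq ?_) (aux_fibre (hWcv z) (hWc z)
        (fun w : ι → ℝ => ∑ i, w i * ((L.symm (y i)).2 + t * b i))
        (fun w : ι → ℝ => ∑ i, w i * ((L.symm (y i)).2 + s * b i))
        (by fun_prop) (by fun_prop) hp hq)
      congr 2
      ext w
      rw [Finset.mul_sum, Finset.mul_sum, ← Finset.sum_add_distrib]
      apply Finset.sum_congr rfl
      intro i _
      simp only [smul_eq_mul]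
      have : q = 1 - p := by linarith
      subst this
      ring
    rw [lintegral_add_left ((hm t).const_mul _), lintegral_const_mul _ (hm t),
      lintegral_const_mul _ (hm s)] at this
    rw [hv, hv t, hv s]
    refine (mul_le_mul_right this c).trans (le_of_eq ?_)
    ring
  have h3 := ENNReal.toReal_mono (by
    refine ENNReal.add_ne_top.2 ⟨?_, ?_⟩ <;> exact ENNReal.mul_ne_top ENNReal.ofReal_ne_top (hfin _)) main
  rw [ENNReal.toReal_add (ENNReal.mul_ne_top ENNReal.ofReal_ne_top (hfin _))
    (ENNReal.mul_ne_top ENNReal.ofReal_ne_top (hfin _)), ENNReal.toReal_mul, ENNReal.toReal_mul,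
    ENNReal.toReal_ofReal hp, ENNReal.toReal_ofReal hq] at h3
  exact h3

lemma aux_bddBelow {P : Set H} (hP : Bornology.IsBounded P) (hPi : (interior P).Nonempty)
    {h : H → ℝ} (hh : ConvexOn ℝ P h) : ∃ m, ∀ z ∈ P, m ≤ h z := by
  obtain ⟨z0, hz0⟩ := hPi
  have hcont : ContinuousAt h z0 :=
    hh.continuousOn_interior.continuousAt (isOpen_interior.mem_nhds hz0)
  have hev : ∀ᶠ w in nhds z0, h w < h z0 + 1 ∧ w ∈ P :=
    (hcont.eventually (gt_mem_nhds (by linarith))).and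
      (mem_interior_iff_mem_nhds.1 hz0)
  obtain ⟨r, hr, hball⟩ := Metric.eventually_nhds_iff.1 hev
  obtain ⟨R, hR⟩ := hP.subset_closedBall z0
  set ρ := max R 1
  have hρ : 0 < ρ := lt_of_lt_of_le one_pos (le_max_right _ _)
  set ε := r / (2 * ρ) with hε
  have hεp : 0 < ε := by positivity
  refine ⟨((1 + ε) * h z0 - (h z0 + 1)) / ε, fun z hz => ?_⟩
  have hd : dist z z0 ≤ ρ := (hR hz).trans (le_max_left _ _)
  set w := z0 - ε • (z - z0) with hw
  have hwd : dist w z0 < r := by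
    rw [hw, dist_eq_norm, sub_sub_cancel_left, norm_neg, norm_smul, Real.norm_of_nonneg hεp.le,
      ← dist_eq_norm]
    calc ε * dist z z0 ≤ ε * ρ := by gcongr
      _ = r / 2 := by rw [hε]; field_simp
      _ < r := by linarith
  obtain ⟨hw1, hw2⟩ := hball hwd
  have := hh.2 hz hw2 (show 0 ≤ ε / (1 + ε) by positivity) (show 0 ≤ 1 / (1 + ε) by positivity)
    (by field_simp; ring)
  have e : (ε / (1 + ε)) • z + (1 / (1 + ε)) • w = z0 := by
    have h1 : (ε / (1 + ε)) = (1 / (1 + ε)) * ε := by ring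
    rw [h1, mul_smul, ← smul_add, hw]
    have : ε • z + (z0 - ε • (z - z0)) = (1 + ε) • z0 := by module
    rw [this, smul_smul, one_div, inv_mul_cancel₀ (by positivity), one_smul]
  rw [e] at this
  simp only [smul_eq_mul] at this
  rw [div_le_iff₀ hεp]
  have h5 : (1 + ε) * h z0 ≤ ε * h z + h w := by
    calc (1 + ε) * h z0 ≤ (1 + ε) * (ε / (1 + ε) * h z + 1 / (1 + ε) * h w) := by gcongr
      _ = _ := by field_simp
  linarith

lemma aux_speed {A : Set (H × ℝ)} (hA : IsCompact A) (hAc : Convex ℝ A)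
    (hAi : (interior A).Nonempty) (hAs : ∀ z ∈ Prod.fst '' A, -z ∈ Prod.fst '' A) {γ : H → ℝ}
    (hodd : ∀ z ∈ Prod.fst '' A, γ (-z) = - γ z) {t : ℝ} (ht : t ≠ 0)
    (hconv : Convex ℝ ((fun q : H × ℝ => (q.1, q.2 + t * γ q.1)) '' A)) :
    ContinuousOn γ (interior (Prod.fst '' A)) ∧ ∃ C, ∀ z ∈ Prod.fst '' A, |γ z| ≤ C := by
  set P : Set H := Prod.fst '' A with hP
  have hPc : IsCompact P := hA.image continuous_fst
  have hPcv : Convex ℝ P := hAc.linear_image (LinearMap.fst ℝ H ℝ)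
  have hPi : (interior P).Nonempty := by
    refine (hAi.image Prod.fst).mono ?_
    exact interior_maximal (Set.image_mono interior_subset) (isOpenMap_fst _ isOpen_interior)
  set f : H → ℝ := fun z => sInf (Prod.mk z ⁻¹' A) with hf
  have hfc : ∀ z, IsCompact (Prod.mk z ⁻¹' A) := by
    intro z
    have : Prod.mk z ⁻¹' A = Prod.snd '' (A ∩ Prod.fst ⁻¹' {z}) := by
      ext s
      constructor
      · intro h; exact ⟨(z, s), ⟨h, rfl⟩, rfl⟩
      · rintro ⟨⟨z', s'⟩, ⟨h, h'⟩, rfl⟩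
        simp only [Set.mem_preimage, Set.mem_singleton_iff] at h' ⊢
        subst h'; exact h
    rw [this]
    exact (hA.inter_right (isClosed_singleton.preimage continuous_fst)).image continuous_snd
  have hfm : ∀ z ∈ P, (z, f z) ∈ A := by
    rintro z ⟨⟨z', s⟩, hq, rfl⟩
    exact (hfc z').sInf_mem ⟨s, hq⟩
  have hfle : ∀ z s, (z, s) ∈ A → f z ≤ s := fun z s h => csInf_le (hfc z).bddBelow h
  have hcf : ConvexOn ℝ P f := by
    refine ⟨hPcv, ?_⟩
    intro x hx y hy a b ha hb hab
    exact hfle _ _ (hAc (hfm x hx) (hfm y hy) ha hb hab)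
  have hcg : ConvexOn ℝ P (fun z => f z + t * γ z) := by
    refine ⟨hPcv, ?_⟩
    intro x hx y hy a b ha hb hab
    obtain ⟨⟨z, s⟩, hz, he⟩ := hconv (Set.mem_image_of_mem _ (hfm x hx))
      (Set.mem_image_of_mem _ (hfm y hy)) ha hb hab
    simp only [Prod.ext_iff, Prod.fst_add, Prod.snd_add, Prod.smul_fst, Prod.smul_snd] at he
    obtain ⟨he1, he2⟩ := he
    rw [← he2, ← he1]
    have := hfle _ _ hz
    simp only
    linarith
  constructor
  · have h1 := hcg.continuousOn_interior.sub hcf.continuousOn_interior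
    refine (h1.const_smul t⁻¹).congr ?_
    intro z _
    simp only [Pi.smul_apply, Pi.sub_apply, smul_eq_mul]
    field_simp
    ring
  · obtain ⟨m, hm⟩ := aux_bddBelow hPc.isBounded hPi hcg
    obtain ⟨R, hR⟩ := hA.isBounded.exists_norm_le
    have hfR : ∀ z ∈ P, f z ≤ R := fun z hz =>
      (le_abs_self _).trans ((norm_snd_le (z, f z)).trans (hR _ (hfm z hz)))
    refine ⟨(R - m) / |t|, fun z hz => ?_⟩
    rw [le_div_iff₀ (abs_pos.2 ht), ← abs_mul, abs_le]
    have h1 := hm z hz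
    have h2 := hm (-z) (hAs z hz)
    rw [hodd z hz] at h2
    have h3 := hfR z hz
    have h4 := hfR _ (hAs z hz)
    constructor <;> linarith [mul_comm (γ z) t, mul_neg t (γ z)]

lemma aux_meas (ν : Measure F) [SFinite ν] {ι : Type*} [Fintype ι] :
    Measurable fun x : ι → F => ν (convexHull ℝ (Set.range x)) := by
  have hS : IsClosed {q : (ι → F) × F | q.2 ∈ convexHull ℝ (Set.range q.1)} := by
    have hT : IsClosed {q : stdSimplex ℝ ι × ((ι → F) × F) |
        ∑ i, (q.1 : ι → ℝ) i • q.2.1 i = q.2.2} := by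
      refine isClosed_eq ?_ (by fun_prop)
      refine continuous_finsetSum _ fun i _ => ?_
      exact ((continuous_apply i).comp (continuous_subtype_val.comp continuous_fst)).smul
        (by fun_prop)
    have : CompactSpace (stdSimplex ℝ ι) := isCompact_iff_compactSpace.1 (isCompact_stdSimplex ℝ ι)
    have h := isClosedMap_snd_of_compactSpace _ hT
    convert h using 1
    ext ⟨x, z⟩
    simp only [aux_hull_range]
    constructor
    · rintro ⟨w, hw, h⟩
      exact ⟨(⟨w, hw⟩, x, z), h, rfl⟩
    · rintro ⟨⟨w, x', z'⟩, h, h'⟩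
      obtain ⟨rfl, rfl⟩ := Prod.ext_iff.1 h'
      exact ⟨w, w.2, h⟩
  exact measurable_measure_prodMk_left hS.measurableSet

/-- Shear along the last coordinate. -/
def auxShear (L : (H × ℝ) ≃L[ℝ] F) (γ : H → ℝ) (t : ℝ) (x : F) : F :=
  x + (t * γ (L.symm x).1) • L (0, 1)

lemma auxShear_fst (L : (H × ℝ) ≃L[ℝ] F) (γ : H → ℝ) (t : ℝ) (x : F) :
    (L.symm (auxShear L γ t x)).1 = (L.symm x).1 := by
  simp [auxShear]

lemma auxShear_neg (L : (H × ℝ) ≃L[ℝ] F) (γ : H → ℝ) (t : ℝ) (x : F) :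
    auxShear L γ (-t) (auxShear L γ t x) = x := by
  rw [auxShear, auxShear_fst, auxShear, add_assoc, ← add_smul]
  simp

lemma auxShear_measurable (L : (H × ℝ) ≃L[ℝ] F) {γ : H → ℝ} (hγ : Measurable γ) (t : ℝ) :
    Measurable (auxShear L γ t) := by
  have h : Measurable fun x : F => (L.symm x).1 := (continuous_fst.comp L.symm.continuous).measurable
  unfold auxShear
  exact measurable_id.add (((hγ.comp h).const_mul t).smul_const _)

lemma auxShear_mp (ν : Measure F) [ν.IsAddHaarMeasure] (μ : Measure H) [μ.IsAddHaarMeasure]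
    (L : (H × ℝ) ≃L[ℝ] F) {γ : H → ℝ} (hγ : Measurable γ) (t : ℝ) :
    MeasurePreserving (auxShear L γ t) ν ν := by
  refine ⟨auxShear_measurable L hγ t, ?_⟩
  obtain ⟨c, hc, hν⟩ := aux_measure ν μ L
  have hg : MeasurePreserving (fun q : H × ℝ => (q.1, q.2 + t * γ q.1)) (μ.prod volume)
      (μ.prod volume) := by
    refine MeasurePreserving.skew_product (g := fun z s => s + t * γ z) (MeasurePreserving.id μ)
      ?_ (Filter.Eventually.of_forall fun z => ?_)
    · exact measurable_snd.add ((hγ.comp measurable_fst).const_mul t)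
    · exact map_add_right_eq_self volume (t * γ z)
  have hcomp : auxShear L γ t ∘ L = L ∘ (fun q : H × ℝ => (q.1, q.2 + t * γ q.1)) := by
    ext q
    have : (q.1, q.2 + t * γ q.1) = q + (t * γ q.1) • ((0 : H), (1 : ℝ)) := by
      ext <;> simp
    simp only [Function.comp_apply, this, map_add, map_smul, auxShear, L.symm_apply_apply]
  rw [hν, Measure.map_smul, Measure.map_map (auxShear_measurable L hγ t) L.continuous.measurable,
    hcomp, ← Measure.map_map L.continuous.measurable hg.measurable, hg.map_eq]

lemma auxShear_ae (ν : Measure F) [ν.IsAddHaarMeasure] (μ : Measure H) [μ.IsAddHaarMeasure]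
    (L : (H × ℝ) ≃L[ℝ] F) {K : Set F} (hK : IsCompact K) (hKc : Convex ℝ K) {γ γ' : H → ℝ}
    (hγ : ∀ z ∈ interior ((fun x => (L.symm x).1) '' K), γ' z = γ z) (t : ℝ) :
    (auxShear L γ t '' K : Set F) =ᵐ[ν] auxShear L γ' (-t) ⁻¹' K := by
  set P := (fun x => (L.symm x).1) '' K with hP
  have hcont : Continuous fun x : F => (L.symm x).1 := continuous_fst.comp L.symm.continuous
  have hPc : IsCompact P := hK.image hcont
  have hPcv : Convex ℝ P :=
    hKc.linear_image ((LinearMap.fst ℝ H ℝ).comp L.symm.toLinearEquiv.toLinearMap)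
  have hnull : ν ((fun x => (L.symm x).1) ⁻¹' frontier P) = 0 := by
    obtain ⟨c, hc, hν⟩ := aux_measure ν μ L
    have hm : MeasurableSet (frontier P) := isClosed_frontier.measurableSet
    rw [hν, Measure.smul_apply, Measure.map_apply L.continuous.measurable (hcont.measurable hm)]
    have : L ⁻¹' ((fun x => (L.symm x).1) ⁻¹' frontier P) = frontier P ×ˢ Set.univ := by
      ext q; simp
    rw [this, Measure.prod_prod, hPcv.addHaar_frontier μ]
    simp
  have hae : ∀ᵐ x ∂ν, (L.symm x).1 ∉ frontier P := by
    rw [ae_iff]; simp only [not_not]; exact hnull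
  filter_upwards [hae] with x hx
  apply propext
  change x ∈ auxShear L γ t '' K ↔ auxShear L γ' (-t) x ∈ K
  have h1 : x ∈ auxShear L γ t '' K ↔ auxShear L γ (-t) x ∈ K := by
    constructor
    · rintro ⟨y, hy, rfl⟩
      rwa [auxShear_neg]
    · intro h
      refine ⟨_, h, ?_⟩
      have := auxShear_neg L γ (-t) x
      rwa [neg_neg] at this
  rw [h1]
  by_cases hxP : (L.symm x).1 ∈ P
  · have hi : (L.symm x).1 ∈ interior P := by
      rw [hPc.isClosed.frontier_eq] at hx
      by_contra h
      exact hx ⟨hxP, h⟩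
    simp only [auxShear, hγ _ hi]
  · have : ∀ γ : H → ℝ, auxShear L γ (-t) x ∉ K := by
      intro γ h
      apply hxP
      rw [← auxShear_fst L γ (-t) x]
      exact ⟨_, h, rfl⟩
    simp [this]

lemma aux_moment {n N : ℕ} (μ : Measure H) [μ.IsAddHaarMeasure]
    (L : (H × ℝ) ≃L[ℝ] EuclideanSpace ℝ (Fin n))
    {K : Set (EuclideanSpace ℝ (Fin n))} (hK : IsCompact K) (hKc : Convex ℝ K) {γ γ' : H → ℝ}
    (hγm : Measurable γ')
    (hγ : ∀ z ∈ interior ((fun x => (L.symm x).1) '' K), γ' z = γ z) (t p : ℝ) :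
    momentV n N (auxShear L γ t '' K) p =
      (∫ y : Fin N → EuclideanSpace ℝ (Fin n) in {x | ∀ i, x i ∈ K},
        ((volume (convexHull ℝ (Set.range (fun i => auxShear L γ' t (y i)) ∪
          -Set.range (fun i => auxShear L γ' t (y i))))).toReal / (volume K).toReal) ^ p) /
      (volume K).toReal ^ N := by
  have hae := auxShear_ae volume μ L hK hKc hγ t
  have hvol : volume (auxShear L γ t '' K) = volume K := by
    rw [measure_congr hae]
    exact (auxShear_mp volume μ L hγm (-t)).measure_preimage hK.measurableSet.nullMeasurableSet
  have hpi : ({x | ∀ i, x i ∈ auxShear L γ t '' K} : Set (Fin N → EuclideanSpace ℝ (Fin n)))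
      =ᵐ[volume] {x | ∀ i, x i ∈ auxShear L γ' (-t) ⁻¹' K} := by
    have := Measure.ae_eq_set_pi (μ := fun _ : Fin N => (volume : Measure (EuclideanSpace ℝ (Fin n))))
      (I := Set.univ) (fun i _ => hae)
    have hset : ∀ S : Set (EuclideanSpace ℝ (Fin n)),
        ({x | ∀ i, x i ∈ S} : Set (Fin N → EuclideanSpace ℝ (Fin n))) =
          Set.univ.pi fun _ => S := by
      intro S; ext x; simp
    rw [hset, hset]
    exact this
  let e : EuclideanSpace ℝ (Fin n) ≃ᵐ EuclideanSpace ℝ (Fin n) :=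
    { toFun := auxShear L γ' t
      invFun := auxShear L γ' (-t)
      left_inv := auxShear_neg L γ' t
      right_inv := fun x => by
        have := auxShear_neg L γ' (-t) x
        rwa [neg_neg] at this
      measurable_toFun := auxShear_measurable L hγm t
      measurable_invFun := auxShear_measurable L hγm (-t) }
  have hmp : MeasurePreserving (MeasurableEquiv.piCongrRight fun _ : Fin N => e) volume volume :=
    volume_preserving_pi fun _ : Fin N => auxShear_mp volume μ L hγm t
  unfold momentV
  rw [hvol, setIntegral_congr_set hpi, ← hmp.setIntegral_preimage_emb
    (MeasurableEquiv.measurableEmbedding _)]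
  have hset : (MeasurableEquiv.piCongrRight fun _ : Fin N => e) ⁻¹'
      {x | ∀ i, x i ∈ auxShear L γ' (-t) ⁻¹' K} = {x | ∀ i, x i ∈ K} := by
    ext x
    change (∀ i, auxShear L γ' (-t) (auxShear L γ' t (x i)) ∈ K) ↔ ∀ i, x i ∈ K
    simp only [auxShear_neg]
  rw [hset]
  rfl

lemma aux_sym_range {ι G : Type*} [AddCommGroup G] (x : ι → G) :
    Set.range x ∪ -Set.range x = Set.range (Sum.elim x (fun i => - x i)) := by
  rw [Set.Sum.elim_range]
  congr 1
  ext z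
  simp only [Set.mem_neg, Set.mem_range]
  exact ⟨fun ⟨i, h⟩ => ⟨i, by rw [h, neg_neg]⟩, fun ⟨i, h⟩ => ⟨i, by rw [← h, neg_neg]⟩⟩

lemma aux_convex {n N : ℕ} (μ : Measure H) [μ.IsAddHaarMeasure]
    (L : (H × ℝ) ≃L[ℝ] EuclideanSpace ℝ (Fin n))
    {K : Set (EuclideanSpace ℝ (Fin n))} (hK : IsCompact K) {γ : H → ℝ}
    (hγm : Measurable γ) {C : ℝ} (hC : ∀ z, |γ z| ≤ C) {p : ℝ} (hp : 1 ≤ p) (k : ℝ) (hk : 0 ≤ k) :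
    ConvexOn ℝ Set.univ (fun t : ℝ =>
      ∫ y : Fin N → EuclideanSpace ℝ (Fin n) in {x | ∀ i, x i ∈ K},
        ((volume (convexHull ℝ (Set.range (fun i => auxShear L γ t (y i)) ∪
          -Set.range (fun i => auxShear L γ t (y i))))).toReal / k) ^ p) := by
  have hp0 : 0 ≤ p := by linarith
  set G : ℝ → (Fin N → EuclideanSpace ℝ (Fin n)) → ℝ := fun t y =>
    (volume (convexHull ℝ (Set.range (fun i => auxShear L γ t (y i)) ∪
          -Set.range (fun i => auxShear L γ t (y i))))).toReal with hG
  have hGconv : ∀ y, ConvexOn ℝ Set.univ (fun t => G t y) := by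
    intro y
    have h := aux_shadow (volume : Measure (EuclideanSpace ℝ (Fin n))) μ L
      (Sum.elim y (fun i => - y i))
      (Sum.elim (fun i => γ (L.symm (y i)).1) (fun i => - γ (L.symm (y i)).1))
    convert h using 2 with t
    simp only [hG, aux_sym_range]
    congr 5
    ext i
    rcases i with i | i
    · simp [auxShear]
    · simp [auxShear]; abel
  have hGnn : ∀ t y, 0 ≤ G t y := fun t y => ENNReal.toReal_nonneg
  have hGm : ∀ t, Measurable (G t) := by
    intro t
    simp only [hG, aux_sym_range]
    apply Measurable.ennreal_toReal
    refine (aux_meas (volume : Measure (EuclideanSpace ℝ (Fin n)))).comp (measurable_pi_lambda _ ?_)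
    have hs : ∀ i : Fin N, Measurable fun y : Fin N → EuclideanSpace ℝ (Fin n) =>
        auxShear L γ t (y i) := fun i => (auxShear_measurable L hγm t).comp (measurable_pi_apply i)
    rintro (i | i)
    · exact hs i
    · exact (hs i).neg
  obtain ⟨R, hR⟩ := hK.isBounded.exists_norm_le
  have hset : ({x | ∀ i, x i ∈ K} : Set (Fin N → EuclideanSpace ℝ (Fin n))) =
      Set.univ.pi fun _ => K := by ext x; simp
  have hKN : IsCompact ({x | ∀ i, x i ∈ K} : Set (Fin N → EuclideanSpace ℝ (Fin n))) := by
    rw [hset]; exact isCompact_univ_pi fun _ => hK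
  have hint : ∀ t, IntegrableOn (fun y => (G t y / k) ^ p)
      ({x | ∀ i, x i ∈ K} : Set (Fin N → EuclideanSpace ℝ (Fin n))) := by
    intro t
    set R' := R + |t| * C * ‖L (0, 1)‖
    refine Measure.integrableOn_of_bounded (M :=
      ((volume (Metric.closedBall (0 : EuclideanSpace ℝ (Fin n)) R')).toReal / k) ^ p)
      hKN.measure_lt_top.ne ?_ ?_
    · exact (((hGm t).div_const k).pow_const p).aestronglyMeasurable
    · refine (ae_restrict_iff' hKN.measurableSet).2 (Filter.Eventually.of_forall fun y hy => ?_)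
      rw [Real.norm_of_nonneg (Real.rpow_nonneg (div_nonneg (hGnn t y) hk) p)]
      refine Real.rpow_le_rpow (div_nonneg (hGnn t y) hk) ?_ hp0
      refine div_le_div_of_nonneg_right ?_ hk
      refine ENNReal.toReal_mono measure_closedBall_lt_top.ne (measure_mono ?_)
      refine convexHull_min ?_ (convex_closedBall _ _)
      have hb : ∀ i, ‖auxShear L γ t (y i)‖ ≤ R' := by
        intro i
        refine (norm_add_le _ _).trans ?_
        rw [norm_smul, norm_mul, Real.norm_eq_abs, Real.norm_eq_abs]
        have h1 := hR _ (hy i)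
        have h2 := hC (L.symm (y i)).1
        have : |t| * |γ (L.symm (y i)).1| * ‖L (0, 1)‖ ≤ |t| * C * ‖L (0, 1)‖ := by gcongr
        exact add_le_add h1 this
      rw [aux_sym_range]
      rintro _ ⟨i | i, rfl⟩
      · simpa using hb i
      · simpa using hb i
  refine ⟨convex_univ, ?_⟩
  intro t _ s _ a b ha hb hab
  simp only [smul_eq_mul]
  rw [← integral_const_mul, ← integral_const_mul,
    ← integral_add ((hint t).const_mul a) ((hint s).const_mul b)]
  refine integral_mono (hint _) (((hint t).const_mul a).add ((hint s).const_mul b)) ?_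
  intro y
  have h1 := (hGconv y).2 (Set.mem_univ t) (Set.mem_univ s) ha hb hab
  simp only [smul_eq_mul] at h1
  have h2 := (convexOn_rpow hp).2 (Set.mem_Ici.2 (div_nonneg (hGnn t y) hk))
    (Set.mem_Ici.2 (div_nonneg (hGnn s y) hk)) ha hb hab
  simp only [smul_eq_mul] at h2
  refine le_trans (Real.rpow_le_rpow (div_nonneg (hGnn _ y) hk) ?_ hp0) h2
  calc G (a * t + b * s) y / k ≤ (a * G t y + b * G s y) / k := by gcongr
    _ = _ := by ring

end aux

/-- Coordinates `(z, c) ↦ z + c v` on the ambient space. -/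
def auxCoord [FiniteDimensional ℝ E] (v : E) (hv : v ≠ 0) :
    (((ℝ ∙ v)ᗮ : Submodule ℝ E) × ℝ) ≃L[ℝ] E :=
  LinearEquiv.toContinuousLinearEquiv
    { toFun := fun q => (q.1 : E) + q.2 • v
      invFun := fun x => (⟨projPerp v x, by
        rw [Submodule.mem_orthogonal_singleton_iff_inner_left]
        have : ⟪v, v⟫ ≠ 0 := inner_self_ne_zero.2 hv
        rw [projPerp, inner_sub_left, inner_smul_left]
        simp only [conj_trivial]
        field_simp
        ring⟩, ⟪x, v⟫ / ⟪v, v⟫)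
      map_add' := fun x y => by simp only [Prod.fst_add, Prod.snd_add, Submodule.coe_add]; module
      map_smul' := fun c x => by
        simp only [Prod.smul_fst, Prod.smul_snd, Submodule.coe_smul, RingHom.id_apply, smul_eq_mul]
        module
      left_inv := fun q => by
        have h : ⟪v, v⟫ ≠ 0 := inner_self_ne_zero.2 hv
        have h2 : ⟪(q.1 : E), v⟫ = 0 :=
          (Submodule.mem_orthogonal_singleton_iff_inner_left).1 q.1.2
        have h3 : ⟪(q.1 : E) + q.2 • v, v⟫ / ⟪v, v⟫ = q.2 := by
          rw [inner_add_left, h2, inner_smul_left]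
          simp only [conj_trivial]
          field_simp
          ring
        ext
        · simp only [projPerp, h3]; simp
        · exact h3
      right_inv := fun x => by simp [projPerp] }

lemma auxCoord_symm [FiniteDimensional ℝ E] (v : E) (hv : v ≠ 0) (x : E) :
    (((auxCoord v hv).symm x).1 : E) = projPerp v x := rfl

lemma auxCoord_one [FiniteDimensional ℝ E] (v : E) (hv : v ≠ 0) :
    auxCoord v hv (0, 1) = v := by
  change ((0 : ((ℝ ∙ v)ᗮ : Submodule ℝ E)) : E) + (1 : ℝ) • v = v
  simp

/-- Let `K_t`, `t ∈ I`, be an SRS-movement of a symmetric convex body `K ⊆ ℝⁿ` (with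
direction `v ≠ 0` and odd speed function `β`, each `K_t` convex).  Then for every real
`p ≥ 1` and every integer `N ≥ n`, the function `t ↦ 𝔼 V_{K_t, N}^p` is convex on `I`. -/
theorem momentV_convexOn_of_SRSMovement
    {n : ℕ} (K : Set (EuclideanSpace ℝ (Fin n))) (hK : IsSymConvexBody K)
    (v : EuclideanSpace ℝ (Fin n)) (hv : v ≠ 0) (β : EuclideanSpace ℝ (Fin n) → ℝ)
    (hβodd : ∀ x ∈ projPerp v '' K, β (-x) = -β x)
    (I : Set ℝ) (hI : Convex ℝ I) (h0I : (0 : ℝ) ∈ I)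
    (hmove : ∀ t ∈ I, Convex ℝ (RSFamily K v β t))
    (p : ℝ) (hp : 1 ≤ p) (N : ℕ) (hN : n ≤ N) :
    ConvexOn ℝ I (fun t => momentV n N (RSFamily K v β t) p) := by
  by_cases hne : ∃ t0 ∈ I, t0 ≠ 0
  swap
  · push Not at hne
    refine ⟨hI, fun x hx y hy a b ha hb hab => ?_⟩
    rw [hne x hx, hne y hy]
    simp only [smul_zero, add_zero, ← add_smul, hab, one_smul, le_refl]
  obtain ⟨t0, ht0I, ht0⟩ := hne
  obtain ⟨hKcp, hKcv, hKi, hKs⟩ := hK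
  let L := auxCoord v hv
  let γ : ((ℝ ∙ v)ᗮ : Submodule ℝ (EuclideanSpace ℝ (Fin n))) → ℝ := fun z => β z
  have hRS : ∀ t, RSFamily K v β t = auxShear L γ t '' K := by
    intro t
    unfold RSFamily
    congr 1
    ext1 x
    simp only [auxShear, L, auxCoord_one, γ, auxCoord_symm]
  let A : Set (((ℝ ∙ v)ᗮ : Submodule ℝ (EuclideanSpace ℝ (Fin n))) × ℝ) := L ⁻¹' K
  have hAimg : A = L.symm '' K := by
    simp only [A]; exact (L.toEquiv.image_symm_eq_preimage K).symm
  have hP : Prod.fst '' A = (fun x => (L.symm x).1) '' K := by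
    rw [hAimg, Set.image_image]
  have hspeed := aux_speed (A := A) (γ := γ) (t := t0)
    (by rw [hAimg]; exact hKcp.image L.symm.continuous)
    (hKcv.linear_preimage L.toLinearEquiv.toLinearMap)
    (by
      obtain ⟨x, hx⟩ := hKi
      refine ⟨L.symm x, ?_⟩
      refine interior_maximal (Set.preimage_mono interior_subset)
        (isOpen_interior.preimage L.continuous) ?_
      simpa using hx)
    (by
      rw [hP]
      rintro _ ⟨x, hx, rfl⟩
      refine ⟨-x, ?_, by simp⟩
      rw [hKs] at hx
      exact hx)
    (by
      rw [hP]
      rintro _ ⟨x, hx, rfl⟩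
      exact hβodd _ ⟨x, hx, rfl⟩)
    ht0
    (by
      have h := (hmove t0 ht0I).linear_preimage L.toLinearEquiv.toLinearMap
      refine Eq.subst (motive := fun S => Convex ℝ S) ?_ h
      rw [hRS]
      symm
      ext q
      constructor
      · rintro ⟨r, hr, rfl⟩
        refine ⟨L r, hr, ?_⟩
        have : (r.1, r.2 + t0 * γ r.1) = r + (t0 * γ r.1) • (0, (1 : ℝ)) := by
          ext <;> simp
        change _ = L (r.1, r.2 + t0 * γ r.1)
        simp only [this, map_add, map_smul, auxShear, L.symm_apply_apply]
      · rintro ⟨x, hx, hxq⟩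
        refine ⟨L.symm x, by simpa [A] using hx, ?_⟩
        have : q = L.symm (auxShear L γ t0 x) := by
          rw [hxq]; exact (L.symm_apply_apply q).symm
        rw [this]
        ext <;> simp [auxShear])
  obtain ⟨hγc, C, hγb⟩ := hspeed
  rw [hP] at hγc hγb
  set P := (fun x => (L.symm x).1) '' K with hPdef
  let γ' := (interior P).indicator γ
  have hγ'm : Measurable γ' := by
    classical
    have h := ContinuousOn.measurable_piecewise (s := interior P) (f := γ) (g := fun _ => (0 : ℝ))
      hγc continuousOn_const isOpen_interior.measurableSet
    have h2 := Set.piecewise_eq_indicator (s := interior P) (f := γ)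
    change Measurable ((interior P).indicator γ)
    rw [← h2]
    exact h
  have hγ'e : ∀ z ∈ interior P, γ' z = γ z := fun z hz => Set.indicator_of_mem hz γ
  have hγ'b : ∀ z, |γ' z| ≤ max C 0 := by
    intro z
    by_cases hz : z ∈ interior P
    · rw [hγ'e z hz]; exact (hγb z (interior_subset hz)).trans (le_max_left _ _)
    · simp [γ', hz]
  have hmain := aux_convex (N := N) Measure.addHaar L hKcp hγ'm hγ'b hp (volume K).toReal
    ENNReal.toReal_nonneg
  have heq : (fun t => momentV n N (RSFamily K v β t) p) = fun t => ((volume K).toReal ^ N)⁻¹ •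
      ∫ y : Fin N → EuclideanSpace ℝ (Fin n) in {x | ∀ i, x i ∈ K},
        ((volume (convexHull ℝ (Set.range (fun i => auxShear L γ' t (y i)) ∪
          -Set.range (fun i => auxShear L γ' t (y i))))).toReal / (volume K).toReal) ^ p := by
    ext t
    rw [hRS, aux_moment Measure.addHaar L hKcp hKcv hγ'm hγ'e t p, smul_eq_mul, div_eq_inv_mul]
  rw [heq]
  exact (hmain.smul (by positivity)).subset (Set.subset_univ _) hI
end
end

section
/- Let K be a symmetric convex body in ℝ^n and let K_t, t in a nondegenerate interval I, be an SRS-movement of K with speed function β. Then for every real p ≥ 1 and every integer N ≥ n, the function t ↦ 𝔼 V_{K_t, N}^p is strictly convex on I if and only if β is not linear (not the restriction of a linear functional). -/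
open MeasureTheory Set
open scoped RealInnerProductSpace

noncomputable section

variable {E : Type*} [NormedAddCommGroup E] [InnerProductSpace ℝ E]

/-- The shear `x ↦ x + t b(x) v`. -/
def shearMap {n : ℕ} (v : EuclideanSpace ℝ (Fin n)) (b : EuclideanSpace ℝ (Fin n) → ℝ) (t : ℝ)
    (x : EuclideanSpace ℝ (Fin n)) : EuclideanSpace ℝ (Fin n) := x + (t * b x) • v

/-- The cross polytope. -/
def crossP (N : ℕ) : Set (Fin N → ℝ) := {a | ∑ i, |a i| ≤ 1}

/-- Linear image of the cross polytope. -/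
def polyP {n N : ℕ} (x : Fin N → EuclideanSpace ℝ (Fin n)) : Set (EuclideanSpace ℝ (Fin n)) :=
  (fun a : Fin N → ℝ => ∑ i, a i • x i) '' crossP N

theorem crossP_convex (N : ℕ) : Convex ℝ (crossP N) := by
  intro a ha b hb s t hs ht hst
  simp only [crossP, mem_ofPred_eq, Pi.add_apply, Pi.smul_apply, smul_eq_mul] at *
  calc ∑ i, |s * a i + t * b i| ≤ ∑ i, (s * |a i| + t * |b i|) := by
        refine Finset.sum_le_sum fun i _ => ?_
        refine (abs_add_le _ _).trans ?_
        rw [abs_mul, abs_mul, abs_of_nonneg hs, abs_of_nonneg ht]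
    _ = s * ∑ i, |a i| + t * ∑ i, |b i| := by
        rw [Finset.sum_add_distrib, Finset.mul_sum, Finset.mul_sum]
    _ ≤ s * 1 + t * 1 := by gcongr
    _ = 1 := by linarith

theorem crossP_compact (N : ℕ) : IsCompact (crossP N) := by
  refine Metric.isCompact_of_isClosed_isBounded ?_ ?_
  · exact isClosed_le (by fun_prop) continuous_const
  · refine (Metric.isBounded_closedBall (x := (0 : Fin N → ℝ)) (r := 1)).subset ?_
    intro a ha
    rw [mem_closedBall_zero_iff, pi_norm_le_iff_of_nonneg zero_le_one]
    intro i
    rw [Real.norm_eq_abs]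
    exact (Finset.single_le_sum (f := fun i => |a i|) (fun j _ => abs_nonneg _)
      (Finset.mem_univ i)).trans ha

theorem zero_mem_crossP (N : ℕ) : (0 : Fin N → ℝ) ∈ crossP N := by
  simp [crossP]

theorem single_mem_crossP (N : ℕ) (i : Fin N) (s : ℝ) (hs : |s| ≤ 1) :
    Pi.single i s ∈ crossP N := by
  simp only [crossP, mem_ofPred_eq]
  rw [Finset.sum_eq_single i]
  · simpa using hs
  · intro j _ hj; simp [Pi.single_eq_of_ne hj]
  · simp

theorem hull_eq_polyP {n N : ℕ} (hN : 0 < N) (x : Fin N → EuclideanSpace ℝ (Fin n)) :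
    convexHull ℝ (Set.range x ∪ -Set.range x) = polyP x := by
  apply Subset.antisymm
  · refine convexHull_min ?_ ?_
    · rintro y (⟨i, rfl⟩ | hy)
      · refine ⟨Pi.single i 1, single_mem_crossP N i 1 (by simp), ?_⟩
        simp only
        rw [Finset.sum_eq_single i] <;> simp +contextual
      · obtain ⟨i, hi⟩ := hy
        refine ⟨Pi.single i (-1), single_mem_crossP N i (-1) (by simp), ?_⟩
        simp only
        rw [Finset.sum_eq_single i]
        · simp [hi]
        · intro j _ hj; simp [Pi.single_eq_of_ne hj]
        · simp
    · have := (crossP_convex N).linear_image (∑ i, (LinearMap.proj i : (Fin N → ℝ) →ₗ[ℝ] ℝ).smulRight (x i))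
      convert this using 1
      simp only [polyP]
      congr 1
      ext a
      simp
  · rintro y ⟨a, ha, rfl⟩
    simp only
    set Q := convexHull ℝ (Set.range x ∪ -Set.range x) with hQ
    have hQc : Convex ℝ Q := convex_convexHull _ _
    have hx : ∀ i, x i ∈ Q := fun i => subset_convexHull _ _ (Or.inl ⟨i, rfl⟩)
    have hx' : ∀ i, -x i ∈ Q := fun i => subset_convexHull _ _ (Or.inr (by simp))
    have h0 : (0 : EuclideanSpace ℝ (Fin n)) ∈ Q := by
      have := hQc (hx ⟨0, hN⟩) (hx' ⟨0, hN⟩) (a := 1/2) (b := 1/2) (by norm_num) (by norm_num)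
        (by norm_num)
      simpa using this
    let z : Fin N → EuclideanSpace ℝ (Fin n) := fun i => if 0 ≤ a i then x i else -x i
    have hz : ∀ i, z i ∈ Q := by
      intro i; simp only [z]; split_ifs
      · exact hx i
      · exact hx' i
    have haz : ∀ i, a i • x i = |a i| • z i := by
      intro i; simp only [z]; split_ifs with h
      · rw [abs_of_nonneg h]
      · rw [abs_of_neg (not_le.1 h)]; simp
    simp_rw [haz]
    set S := ∑ i, |a i| with hS
    have hS1 : S ≤ 1 := ha
    have hS0 : 0 ≤ S := Finset.sum_nonneg fun i _ => abs_nonneg _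
    rcases hS0.eq_or_lt with h | h
    · have : ∀ i, |a i| = 0 := fun i =>
        (Finset.sum_eq_zero_iff_of_nonneg (fun i _ => abs_nonneg (a i))).1 h.symm i (Finset.mem_univ i)
      simp [this, h0]
    · have h1 : ∑ i, (|a i| / S) • z i ∈ Q := by
        refine hQc.sum_mem (fun i _ => by positivity) ?_ (fun i _ => hz i)
        rw [← Finset.sum_div, ← hS, div_self h.ne']
      have h2 := hQc.smul_mem_of_zero_mem h0 h1 ⟨hS0, hS1⟩
      convert h2 using 1
      rw [Finset.smul_sum]
      refine Finset.sum_congr rfl fun i _ => ?_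
      rw [smul_smul, mul_div_cancel₀ _ h.ne']

theorem polyP_compact {n N : ℕ} (x : Fin N → EuclideanSpace ℝ (Fin n)) : IsCompact (polyP x) :=
  (crossP_compact N).image (by fun_prop)

theorem polyP_convex {n N : ℕ} (x : Fin N → EuclideanSpace ℝ (Fin n)) : Convex ℝ (polyP x) := by
  have := (crossP_convex N).linear_image (∑ i, (LinearMap.proj i : (Fin N → ℝ) →ₗ[ℝ] ℝ).smulRight (x i))
  convert this using 1
  simp only [polyP]
  congr 1
  ext a
  simp [polyP]

theorem polyP_ne_top {n N : ℕ} (x : Fin N → EuclideanSpace ℝ (Fin n)) : volume (polyP x) ≠ ⊤ :=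
  (polyP_compact x).measure_lt_top.ne

theorem polyP_measurable {n N : ℕ} :
    Measurable (fun x : Fin N → EuclideanSpace ℝ (Fin n) => volume (polyP x)) := by
  have hcl : IsClosed {q : (Fin N → EuclideanSpace ℝ (Fin n)) × EuclideanSpace ℝ (Fin n) |
      q.2 ∈ polyP q.1} := by
    have h1 : {q : (Fin N → EuclideanSpace ℝ (Fin n)) × EuclideanSpace ℝ (Fin n) |
      q.2 ∈ polyP q.1} = Prod.fst '' {r : ((Fin N → EuclideanSpace ℝ (Fin n)) ×
        EuclideanSpace ℝ (Fin n)) × crossP N | ∑ i, r.2.1 i • r.1.1 i = r.1.2} := by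
      ext q
      constructor
      · rintro ⟨a, ha, hq⟩
        exact ⟨(q, ⟨a, ha⟩), hq, rfl⟩
      · rintro ⟨⟨q', a⟩, hr, rfl⟩
        exact ⟨a.1, a.2, hr⟩
    rw [h1]
    have : CompactSpace (crossP N) := isCompact_iff_compactSpace.1 (crossP_compact N)
    refine isClosedMap_fst_of_compactSpace _ ?_
    refine isClosed_eq (continuous_finsetSum _ fun i _ => Continuous.fun_smul ?_ ?_) (by fun_prop)
    · exact (continuous_apply i).comp (continuous_subtype_val.comp continuous_snd)
    · exact (continuous_apply i).comp (continuous_fst.comp continuous_fst)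
  exact measurable_measure_prodMk_left hcl.measurableSet

theorem shear_measurable {n : ℕ} (v : EuclideanSpace ℝ (Fin n)) (b : EuclideanSpace ℝ (Fin n) → ℝ)
    (hb : Measurable b) (t : ℝ) : Measurable (shearMap v b t) := by
  unfold shearMap; fun_prop

theorem shear_measurePreserving {n : ℕ} (v : EuclideanSpace ℝ (Fin n))
    (b : EuclideanSpace ℝ (Fin n) → ℝ)
    (hb : Measurable b) (hinv : ∀ x (s : ℝ), b (x + s • v) = b x) (t : ℝ) :
    MeasurePreserving (shearMap v b t) volume volume := by
  refine ⟨shear_measurable v b hb t, ?_⟩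
  ext A hA
  rw [Measure.map_apply (shear_measurable v b hb t) hA]
  have hm := shear_measurable v b hb t
  let f : EuclideanSpace ℝ (Fin n) → ENNReal := A.indicator 1
  have hf : Measurable f := measurable_one.indicator hA
  let h : ℝ → ENNReal := (Icc (0:ℝ) 1).indicator 1
  have hh : Measurable h := measurable_one.indicator measurableSet_Icc
  have hh1 : ∫⁻ s, h s = 1 := by
    simp [h, lintegral_indicator_one measurableSet_Icc]
  have e1 : volume (shearMap v b t ⁻¹' A) = ∫⁻ x, f (shearMap v b t x) := by
    rw [← lintegral_indicator_one (hm hA)]; rfl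
  have e2 : ∀ s : ℝ, ∫⁻ x, f (shearMap v b t x) = ∫⁻ x, f (x + (s + t * b x) • v) := by
    intro s
    rw [← lintegral_add_right_eq_self (fun x => f (shearMap v b t x)) (s • v)]
    congr 1; ext x
    simp only [shearMap, hinv]
    congr 1
    module
  have e3 : ∫⁻ x, f (shearMap v b t x) = ∫⁻ s : ℝ, h s * ∫⁻ x, f (x + (s + t * b x) • v) := by
    simp_rw [← e2]
    rw [lintegral_mul_const _ hh, hh1, one_mul]
  have e4 : ∫⁻ s : ℝ, h s * ∫⁻ x, f (x + (s + t * b x) • v) =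
      ∫⁻ x, ∫⁻ s : ℝ, h s * f (x + (s + t * b x) • v) := by
    rw [lintegral_lintegral_swap]
    · congr 1; ext s
      rw [lintegral_const_mul]
      fun_prop
    · apply Measurable.aemeasurable
      fun_prop
  have e5 : ∀ x, ∫⁻ s : ℝ, h s * f (x + (s + t * b x) • v) =
      ∫⁻ s : ℝ, h (s - t * b x) * f (x + s • v) := by
    intro x
    rw [← lintegral_add_right_eq_self (fun s => h (s - t * b x) * f (x + s • v)) (t * b x)]
    simp
  have e6 : ∫⁻ x, ∫⁻ s : ℝ, h (s - t * b x) * f (x + s • v) =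
     ∫⁻ s : ℝ, ∫⁻ x, h (s - t * b x) * f (x + s • v) := by
    rw [lintegral_lintegral_swap]
    apply Measurable.aemeasurable
    fun_prop
  have e7 : ∀ s : ℝ, ∫⁻ x, h (s - t * b x) * f (x + s • v) = ∫⁻ x, h (s - t * b x) * f x := by
    intro s
    rw [← lintegral_add_right_eq_self (fun x => h (s - t * b x) * f x) (s • v)]
    simp [hinv]
  have e8 : ∫⁻ s : ℝ, ∫⁻ x, h (s - t * b x) * f x = ∫⁻ x, ∫⁻ s : ℝ, h (s - t * b x) * f x := by
    rw [lintegral_lintegral_swap]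
    apply Measurable.aemeasurable
    fun_prop
  have e9 : ∀ x, ∫⁻ s : ℝ, h (s - t * b x) * f x = f x := by
    intro x
    rw [lintegral_mul_const _ (by fun_prop), lintegral_sub_right_eq_self h, hh1, one_mul]
  rw [e1, e3, e4]
  simp_rw [e5]
  rw [e6]
  simp_rw [e7]
  rw [e8]
  simp_rw [e9]
  rw [lintegral_indicator_one hA]

theorem slicing {n : ℕ} (v : EuclideanSpace ℝ (Fin n)) (hv : v ≠ 0)
    (A : Set (EuclideanSpace ℝ (Fin n))) (hA : MeasurableSet A) :
    volume A = ∫⁻ x in {x | ⟪x, v⟫ / ⟪v, v⟫ ∈ Icc (0:ℝ) 1}, volume {s : ℝ | x + s • v ∈ A} := by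
  let f : EuclideanSpace ℝ (Fin n) → ENNReal := A.indicator 1
  have hf : Measurable f := measurable_one.indicator hA
  let h : ℝ → ENNReal := (Icc (0:ℝ) 1).indicator 1
  have hh : Measurable h := measurable_one.indicator measurableSet_Icc
  have hh1 : ∫⁻ s, h s = 1 := by
    simp [h, lintegral_indicator_one measurableSet_Icc]
  have hvv : ⟪v, v⟫ ≠ 0 := by simpa using hv
  have hS : MeasurableSet {x : EuclideanSpace ℝ (Fin n) | ⟪x, v⟫ / ⟪v, v⟫ ∈ Icc (0:ℝ) 1} := by
    have : Measurable fun x : EuclideanSpace ℝ (Fin n) => ⟪x, v⟫ / ⟪v, v⟫ := by fun_prop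
    exact this measurableSet_Icc
  have e1 : ∀ x, volume {s : ℝ | x + s • v ∈ A} = ∫⁻ s : ℝ, f (x + s • v) := by
    intro x
    have hm : Measurable fun s : ℝ => x + s • v := by fun_prop
    exact (lintegral_indicator_one (μ := volume) (hm hA)).symm
  rw [← lintegral_indicator hS]
  have e2 : ∀ x, ({x : EuclideanSpace ℝ (Fin n) | ⟪x, v⟫ / ⟪v, v⟫ ∈ Icc (0:ℝ) 1}).indicator
     (fun x => volume {s : ℝ | x + s • v ∈ A}) x = ∫⁻ s : ℝ, h (⟪x, v⟫ / ⟪v, v⟫) * f (x + s • v) := by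
    intro x
    rw [lintegral_const_mul _ (by fun_prop), ← e1]
    by_cases hx : ⟪x, v⟫ / ⟪v, v⟫ ∈ Icc (0:ℝ) 1
    · rw [indicator_of_mem (by exact hx)]; simp only [h]; rw [indicator_of_mem hx]; simp
    · rw [indicator_of_notMem (by exact hx)]; simp only [h]; rw [indicator_of_notMem hx]; simp
  simp_rw [e2]
  rw [lintegral_lintegral_swap (Measurable.aemeasurable (by fun_prop))]
  have e3 : ∀ s : ℝ, ∫⁻ x, h (⟪x, v⟫ / ⟪v, v⟫) * f (x + s • v) =
      ∫⁻ x, h (⟪x, v⟫ / ⟪v, v⟫ - s) * f x := by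
    intro s
    rw [← lintegral_add_right_eq_self (fun x => h (⟪x, v⟫ / ⟪v, v⟫ - s) * f x) (s • v)]
    congr 1; ext x
    congr 2
    rw [inner_add_left, inner_smul_left]
    field_simp
    simp
  simp_rw [e3]
  rw [lintegral_lintegral_swap (Measurable.aemeasurable (by fun_prop))]
  have e9 : ∀ x, ∫⁻ s : ℝ, h (⟪x, v⟫ / ⟪v, v⟫ - s) * f x = f x := by
    intro x
    rw [lintegral_mul_const _ (by fun_prop), lintegral_sub_left_eq_self h, hh1, one_mul]
  simp_rw [e9]
  rw [lintegral_indicator_one hA]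

theorem vol_interval_combo (S A B : Set ℝ) (hA : IsCompact A) (hAc : Convex ℝ A) (hAn : A.Nonempty)
    (hB : IsCompact B) (hBc : Convex ℝ B) (hBn : B.Nonempty) (a b : ℝ) (ha : 0 ≤ a) (hb : 0 ≤ b)
    (h : ∀ s ∈ S, ∃ α ∈ A, ∃ β ∈ B, s = a * α + b * β) :
    volume S ≤ ENNReal.ofReal a * volume A + ENNReal.ofReal b * volume B := by
  have eA := eq_Icc_of_connected_compact ⟨hAn, hAc.isPreconnected⟩ hA
  have eB := eq_Icc_of_connected_compact ⟨hBn, hBc.isPreconnected⟩ hB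
  have hA1 : sInf A ≤ sSup A := by
    obtain ⟨z, hz⟩ := hAn; rw [eA] at hz; exact hz.1.trans hz.2
  have hB1 : sInf B ≤ sSup B := by
    obtain ⟨z, hz⟩ := hBn; rw [eB] at hz; exact hz.1.trans hz.2
  generalize sInf A = p at *
  generalize sSup A = q at *
  generalize sInf B = r at *
  generalize sSup B = u at *
  subst eA eB
  have hsub : S ⊆ Icc (a * p + b * r) (a * q + b * u) := by
    intro s hs
    obtain ⟨α, hα, β, hβ, rfl⟩ := h s hs
    have h1 := hα.1; have h2 := hα.2; have h3 := hβ.1; have h4 := hβ.2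
    constructor <;> gcongr
  refine (measure_mono hsub).trans ?_
  rw [Real.volume_Icc, Real.volume_Icc, Real.volume_Icc, ← ENNReal.ofReal_mul ha,
    ← ENNReal.ofReal_mul hb, ← ENNReal.ofReal_add (mul_nonneg ha (by linarith))
      (mul_nonneg hb (by linarith))]
  apply le_of_eq; congr 1; ring

theorem slice_compact {n : ℕ} (v : EuclideanSpace ℝ (Fin n)) (hv : v ≠ 0)
    (P : Set (EuclideanSpace ℝ (Fin n))) (hP : IsCompact P) (y : EuclideanSpace ℝ (Fin n)) :
    IsCompact {s : ℝ | y + s • v ∈ P} := by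
  have h1 : Topology.IsClosedEmbedding (fun s : ℝ => y + s • v) :=
    (Homeomorph.addLeft y).isClosedEmbedding.comp (isClosedEmbedding_smul_left hv)
  exact h1.isCompact_preimage hP

theorem slice_convex {n : ℕ} (v : EuclideanSpace ℝ (Fin n))
    (P : Set (EuclideanSpace ℝ (Fin n))) (hP : Convex ℝ P) (y : EuclideanSpace ℝ (Fin n)) :
    Convex ℝ {s : ℝ | y + s • v ∈ P} := by
  intro s hs r hr a b ha hb hab
  have := hP hs hr ha hb hab
  have e : a • (y + s • v) + b • (y + r • v) = y + (a • s + b • r) • v := by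
    obtain rfl : a = 1 - b := by linarith
    simp only [smul_eq_mul]; module
  rw [e] at this
  exact this

theorem polyP_vol_convex {n N : ℕ} (x : Fin N → EuclideanSpace ℝ (Fin n)) (c : Fin N → ℝ)
    (v : EuclideanSpace ℝ (Fin n)) (hv : v ≠ 0) (t₁ t₂ a b : ℝ) (ha : 0 ≤ a) (hb : 0 ≤ b)
    (hab : a + b = 1) :
    volume (polyP fun i => x i + ((a * t₁ + b * t₂) * c i) • v) ≤
      ENNReal.ofReal a * volume (polyP fun i => x i + (t₁ * c i) • v) +
      ENNReal.ofReal b * volume (polyP fun i => x i + (t₂ * c i) • v) := by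
  have hsum : ∀ (t : ℝ) (l : Fin N → ℝ), ∑ i, l i • (x i + (t * c i) • v) =
      ∑ i, l i • x i + (t * ∑ i, l i * c i) • v := by
    intro t l
    simp only [smul_add, Finset.sum_add_distrib, Finset.mul_sum, Finset.sum_smul, smul_smul]
    congr 1
    refine Finset.sum_congr rfl fun i _ => ?_
    congr 1; ring
  have hmem : ∀ (y : EuclideanSpace ℝ (Fin n)) (t s : ℝ),
      y + s • v ∈ (polyP fun i => x i + (t * c i) • v) ↔
      ∃ l ∈ crossP N, ∑ i, l i • x i + (t * ∑ i, l i * c i) • v = y + s • v := by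
    intro y t s
    simp only [polyP, mem_image, hsum]
  set P : ℝ → Set (EuclideanSpace ℝ (Fin n)) := fun t => polyP fun i => x i + (t * c i) • v with hP
  have hPc : ∀ t, IsCompact (P t) := fun t => polyP_compact _
  have hPm : ∀ t, MeasurableSet (P t) := fun t => (hPc t).isClosed.measurableSet
  change volume (P (a * t₁ + b * t₂)) ≤ ENNReal.ofReal a * volume (P t₁) + ENNReal.ofReal b * volume (P t₂)
  have hmeas : ∀ t, Measurable fun y => volume {s : ℝ | y + s • v ∈ P t} := by
    intro t
    have : MeasurableSet {q : EuclideanSpace ℝ (Fin n) × ℝ | q.1 + q.2 • v ∈ P t} := by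
      have hm : Measurable fun q : EuclideanSpace ℝ (Fin n) × ℝ => q.1 + q.2 • v := by fun_prop
      exact hm (hPm t)
    exact measurable_measure_prodMk_left this
  rw [slicing v hv _ (hPm _), slicing v hv _ (hPm t₁), slicing v hv _ (hPm t₂),
    ← lintegral_const_mul _ (hmeas _), ← lintegral_const_mul _ (hmeas _),
    ← lintegral_add_left ((hmeas _).const_mul _)]
  refine lintegral_mono fun y => ?_
  simp only
  have key : ∀ s, y + s • v ∈ P (a * t₁ + b * t₂) → ∃ α, y + α • v ∈ P t₁ ∧ ∃ β, y + β • v ∈ P t₂ ∧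
      s = a * α + b * β := by
    intro s hs
    obtain ⟨l, hl, e⟩ := (hmem _ _ _).1 hs
    set C := ∑ i, l i * c i
    refine ⟨s + (t₁ - (a * t₁ + b * t₂)) * C, (hmem _ _ _).2 ⟨l, hl, ?_⟩,
      s + (t₂ - (a * t₁ + b * t₂)) * C, (hmem _ _ _).2 ⟨l, hl, ?_⟩, ?_⟩
    · have : ∑ i, l i • x i = y + s • v - ((a * t₁ + b * t₂) * C) • v := by rw [← e]; simp
      rw [this]; module
    · have : ∑ i, l i • x i = y + s • v - ((a * t₁ + b * t₂) * C) • v := by rw [← e]; simp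
      rw [this]; module
    · obtain rfl : a = 1 - b := by linarith
      ring
  by_cases hne : {s : ℝ | y + s • v ∈ P (a * t₁ + b * t₂)}.Nonempty
  · obtain ⟨s, hs⟩ := hne
    obtain ⟨α, hα, β, hβ, -⟩ := key s hs
    refine vol_interval_combo _ _ _ (slice_compact v hv _ (hPc _) y)
      (slice_convex v _ (polyP_convex _) y) ⟨α, hα⟩ (slice_compact v hv _ (hPc _) y)
      (slice_convex v _ (polyP_convex _) y) ⟨β, hβ⟩ a b ha hb ?_
    intro s hs
    obtain ⟨α, hα, β, hβ, h⟩ := key s hs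
    exact ⟨α, hα, β, hβ, h⟩
  · rw [not_nonempty_iff_eq_empty.1 hne]; simp

theorem polyP_usc {n N : ℕ} (x₀ : Fin N → EuclideanSpace ℝ (Fin n)) (h0 : volume (polyP x₀) = 0)
    (δ : ENNReal) (hδ : 0 < δ) : ∀ᶠ x in nhds x₀, volume (polyP x) < δ := by
  have h1 := tendsto_measure_cthickening_of_isCompact (μ := volume) (polyP_compact x₀)
  rw [h0] at h1
  have h2 := h1.eventually_lt_const hδ
  obtain ⟨r, hr, hr2⟩ := Metric.eventually_nhds_iff.1 h2
  have h3 : volume (Metric.cthickening (r/2) (polyP x₀)) < δ := hr2 (by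
    rw [Real.dist_eq, sub_zero, abs_of_pos (by positivity)]; linarith)
  filter_upwards [Metric.closedBall_mem_nhds x₀ (half_pos hr)] with x hx
  refine (measure_mono ?_).trans_lt h3
  rintro y ⟨a, ha, rfl⟩
  refine Metric.mem_cthickening_of_dist_le _ (∑ i, a i • x₀ i) _ _ ⟨a, ha, rfl⟩ ?_
  rw [dist_eq_norm, ← Finset.sum_sub_distrib]
  calc ‖∑ i, (a i • x i - a i • x₀ i)‖ ≤ ∑ i, |a i| * (r/2) := by
        refine (norm_sum_le _ _).trans (Finset.sum_le_sum fun i _ => ?_)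
        rw [← smul_sub, norm_smul, Real.norm_eq_abs, ← dist_eq_norm]
        gcongr
        exact (dist_le_pi_dist x x₀ i).trans hx
    _ = (∑ i, |a i|) * (r/2) := by rw [Finset.sum_mul]
    _ ≤ 1 * (r/2) := by gcongr; exact ha
    _ = r/2 := one_mul _

theorem polyP_lsc {n N : ℕ} (hN : n ≤ N) (x₀ : Fin N → EuclideanSpace ℝ (Fin n))
    (h0 : LinearIndependent ℝ (fun i : Fin n => x₀ (Fin.castLE hN i))) :
    ∃ δ : ENNReal, 0 < δ ∧ ∀ᶠ x in nhds x₀, δ ≤ volume (polyP x) := by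
  let e := (EuclideanSpace.basisFun (Fin n) ℝ).toBasis
  let D : (Fin N → EuclideanSpace ℝ (Fin n)) → ℝ := fun x => e.det (fun i => x (Fin.castLE hN i))
  have hD : Continuous D := by
    simp only [D, Module.Basis.det_apply]
    apply Continuous.matrix_det
    apply continuous_matrix
    intro i j
    simp only [e, Module.Basis.toMatrix_apply, OrthonormalBasis.coe_toBasis_repr_apply,
      EuclideanSpace.basisFun_repr]
    fun_prop
  have hD0 : D x₀ ≠ 0 := by
    have hsp : Submodule.span ℝ (Set.range fun i : Fin n => x₀ (Fin.castLE hN i)) = ⊤ :=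
      h0.span_eq_top_of_card_eq_finrank' (by simp)
    exact ((Module.Basis.is_basis_iff_det e).1 ⟨h0, hsp⟩).ne_zero
  let C : Set (EuclideanSpace ℝ (Fin n)) := {a | ∑ i, |a i| < 1}
  have hCo : IsOpen C := isOpen_lt (by fun_prop) continuous_const
  have hCpos : 0 < volume C := hCo.measure_pos _ ⟨0, by simp [C]⟩
  have hlow : ∀ x, ENNReal.ofReal |D x| * volume C ≤ volume (polyP x) := by
    intro x
    let f : EuclideanSpace ℝ (Fin n) →ₗ[ℝ] EuclideanSpace ℝ (Fin n) :=
      e.constr ℝ (fun i => x (Fin.castLE hN i))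
    have hdet : LinearMap.det f = D x := by
      have := e.det_comp f e
      rw [e.det_self, mul_one] at this
      rw [← this]
      simp only [D]
      congr 1
      ext i : 1
      simp [f, Module.Basis.constr_basis]
    rw [← hdet, ← Measure.addHaar_image_linearMap]
    refine measure_mono ?_
    rintro y ⟨a, ha, rfl⟩
    have hinj : Function.Injective (Fin.castLE hN) := Fin.castLE_injective hN
    let a' : Fin N → ℝ := Function.extend (Fin.castLE hN) (fun i => a i) 0
    have hsum : ∀ {M : Type} [AddCommMonoid M] (g : Fin N → M),
        (∀ j, j ∉ Set.range (Fin.castLE hN) → g j = 0) →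
        ∑ j, g j = ∑ i, g (Fin.castLE hN i) := by
      intro M _ g hg
      rw [← Finset.sum_image (s := Finset.univ) (g := Fin.castLE hN) (f := g) (fun i _ j _ h => hinj h)]
      symm
      apply Finset.sum_subset (Finset.subset_univ _)
      intro j _ hj
      apply hg
      rintro ⟨i, rfl⟩
      exact hj (Finset.mem_image_of_mem _ (Finset.mem_univ i))
    have ha1 : ∀ i, a' (Fin.castLE hN i) = a i := fun i => hinj.extend_apply _ _ i
    have ha0 : ∀ j, j ∉ Set.range (Fin.castLE hN) → a' j = 0 := fun j hj =>
      Function.extend_apply' _ _ _ hj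
    refine ⟨a', ?_, ?_⟩
    · change ∑ j, |a' j| ≤ 1
      rw [hsum (fun j => |a' j|) (fun j hj => by simp [ha0 j hj])]
      simp only [ha1]
      exact le_of_lt ha
    · simp only
      rw [hsum (fun j => a' j • x j) (fun j hj => by simp [ha0 j hj])]
      simp only [ha1, f, Module.Basis.constr_apply_fintype]
      rfl
  refine ⟨ENNReal.ofReal (|D x₀| / 2) * volume C, ?_, ?_⟩
  · apply ENNReal.mul_pos _ hCpos.ne'
    simp [hD0]
  · have : ∀ᶠ x in nhds x₀, |D x₀| / 2 < |D x| :=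
      (hD.abs.tendsto x₀).eventually_const_lt (half_lt_self (abs_pos.2 hD0))
    filter_upwards [this] with x hx
    refine le_trans ?_ (hlow x)
    gcongr

theorem selection_step {n : ℕ} (v : EuclideanSpace ℝ (Fin n))
    (O : Set (EuclideanSpace ℝ (Fin n))) (hO : IsOpen O) (h0 : 0 ∈ O)
    (c : EuclideanSpace ℝ (Fin n) → ℝ)
    (H : ∀ y : Fin n → EuclideanSpace ℝ (Fin n), (∀ i, y i ∈ O) → ¬LinearIndependent ℝ y →
      ¬LinearIndependent ℝ (fun i => y i + c (y i) • v))
    (w : EuclideanSpace ℝ (Fin n)) (hw : ⟪v, w⟫ ≠ 0) :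
    ∃ ℓ : EuclideanSpace ℝ (Fin n) →ₗ[ℝ] ℝ, ∀ u ∈ O, ⟪u, w⟫ = 0 → c u = ℓ u := by
  have hw0 : w ≠ 0 := by rintro rfl; simp at hw
  obtain _ | m := n
  · exact absurd (Subsingleton.elim w 0) hw0
  have : Fact (Module.finrank ℝ (EuclideanSpace ℝ (Fin (m+1))) = m + 1) := ⟨by simp⟩
  let V : Submodule ℝ (EuclideanSpace ℝ (Fin (m+1))) := (Submodule.span ℝ {w})ᗮ
  have hVr : Module.finrank ℝ V = m := Submodule.finrank_orthogonal_span_singleton hw0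
  have hV : ∀ u, u ∈ V ↔ ⟪u, w⟫ = 0 := by
    intro u
    rw [Submodule.mem_orthogonal_singleton_iff_inner_left]
  let f : Module.Basis (Fin m) ℝ V := Module.finBasisOfFinrankEq ℝ V hVr
  have hδ : ∃ δ : ℝ, 0 < δ ∧ ∀ i, δ • (f i : EuclideanSpace ℝ (Fin (m+1))) ∈ O := by
    have h1 : ∀ᶠ δ in nhds (0:ℝ), ∀ i, δ • (f i : EuclideanSpace ℝ (Fin (m+1))) ∈ O := by
      rw [Filter.eventually_all]
      intro i
      have hc : Continuous fun δ : ℝ => δ • (f i : EuclideanSpace ℝ (Fin (m+1))) := by fun_prop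
      exact hc.continuousAt.preimage_mem_nhds (hO.mem_nhds (by simpa using h0))
    obtain ⟨r, hr, h⟩ := Metric.eventually_nhds_iff.1 h1
    refine ⟨r/2, by positivity, h ?_⟩
    rw [Real.dist_eq, sub_zero, abs_of_pos (by positivity)]; linarith
  obtain ⟨δ, hδ0, hδ⟩ := hδ
  let ℓV : V →ₗ[ℝ] ℝ := f.constr ℝ (fun i => c (δ • (f i : EuclideanSpace ℝ (Fin (m+1)))) / δ)
  obtain ⟨ℓ, hℓ⟩ := LinearMap.exists_extend ℓV
  refine ⟨ℓ, fun u hu huw => ?_⟩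
  have huV : u ∈ V := (hV u).2 huw
  have e1 : ℓ u = ℓV ⟨u, huV⟩ := by rw [← hℓ]; rfl
  set a := f.repr ⟨u, huV⟩ with ha
  have e2 : ℓV ⟨u, huV⟩ = ∑ i, a i * (c (δ • (f i : EuclideanSpace ℝ (Fin (m+1)))) / δ) := by
    simp [ℓV, Module.Basis.constr_apply_fintype, ha]
  have e3 : u = ∑ i, a i • (f i : EuclideanSpace ℝ (Fin (m+1))) := by
    have := congrArg (Subtype.val) (f.sum_repr ⟨u, huV⟩)
    simp only [Submodule.coe_sum, Submodule.coe_smul] at this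
    rw [ha]; exact this.symm
  rw [e1, e2]
  by_contra hne
  let g : Fin m → EuclideanSpace ℝ (Fin (m+1)) := fun i => δ • (f i : EuclideanSpace ℝ (Fin (m+1)))
  let y : Fin (m+1) → EuclideanSpace ℝ (Fin (m+1)) := Fin.cons u g
  have hy : ∀ i, y i ∈ O := by
    intro i
    refine Fin.cases ?_ (fun j => ?_) i
    · exact hu
    · exact hδ j
  have e4 : u = ∑ i, (a i / δ) • g i := by
    rw [e3]
    refine Finset.sum_congr rfl fun i _ => ?_
    simp only [g]
    rw [smul_smul, div_mul_cancel₀ _ hδ0.ne']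
  have hdep : ¬ LinearIndependent ℝ y := by
    intro hli
    have := (linearIndependent_finCons.1 hli).2
    apply this
    rw [e4]
    exact Submodule.sum_mem _ fun i _ => Submodule.smul_mem _ _ (Submodule.subset_span ⟨i, rfl⟩)
  apply H y hy hdep
  refine linearIndependent_of_top_le_span_of_card_eq_finrank ?_ (by simp)
  set S := Submodule.span ℝ (Set.range fun i => y i + c (y i) • v) with hS
  have hz : ∀ i, y i + c (y i) • v ∈ S := fun i => Submodule.subset_span ⟨i, rfl⟩
  have hz0 : u + c u • v ∈ S := hz 0
  have hz1 : ∀ i, g i + c (g i) • v ∈ S := fun i => hz i.succ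
  have hv : v ∈ S := by
    have h1 : u + c u • v - ∑ i, (a i / δ) • (g i + c (g i) • v) ∈ S :=
      S.sub_mem hz0 (S.sum_mem fun i _ => S.smul_mem _ (hz1 i))
    have h2 : u + c u • v - ∑ i, (a i / δ) • (g i + c (g i) • v) =
      (c u - ∑ i, a i * (c (g i) / δ)) • v := by
      simp only [smul_add, Finset.sum_add_distrib, ← e4, sub_smul, Finset.sum_smul, smul_smul]
      rw [add_sub_add_left_eq_sub]
      congr 1
      refine Finset.sum_congr rfl fun i _ => ?_
      congr 1; ring
    rw [h2] at h1
    exact (S.smul_mem_iff (sub_ne_zero.2 hne)).1 h1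
  have hf : ∀ i, (f i : EuclideanSpace ℝ (Fin (m+1))) ∈ S := by
    intro i
    have h1 : g i ∈ S := by
      have := S.sub_mem (hz1 i) (S.smul_mem (c (g i)) hv)
      simpa using this
    exact (S.smul_mem_iff hδ0.ne').1 h1
  have hVS : V ≤ S := by
    intro q hq
    have := congrArg (Subtype.val) (f.sum_repr ⟨q, hq⟩)
    simp only [Submodule.coe_sum, Submodule.coe_smul] at this
    rw [← this]
    exact S.sum_mem fun i _ => S.smul_mem _ (hf i)
  intro q _
  have : q = (q - (⟪q, w⟫ / ⟪v, w⟫) • v) + (⟪q, w⟫ / ⟪v, w⟫) • v := by simp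
  rw [this]
  refine S.add_mem (hVS ((hV _).2 ?_)) (S.smul_mem _ hv)
  rw [inner_sub_left, inner_smul_left, conj_trivial, div_mul_cancel₀ _ hw, sub_self]

theorem projPerp_inner {n : ℕ} (v : EuclideanSpace ℝ (Fin n)) (hv : v ≠ 0)
    (x : EuclideanSpace ℝ (Fin n)) : ⟪projPerp v x, v⟫ = 0 := by
  have hvv : ⟪v, v⟫ ≠ 0 := by simpa using hv
  unfold projPerp
  rw [inner_sub_left, inner_smul_left, conj_trivial, div_mul_cancel₀ _ hvv, sub_self]

theorem projPerp_add_smul {n : ℕ} (v : EuclideanSpace ℝ (Fin n)) (hv : v ≠ 0)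
    (x : EuclideanSpace ℝ (Fin n)) (s : ℝ) : projPerp v (x + s • v) = projPerp v x := by
  have hvv : ⟪v, v⟫ ≠ 0 := by simpa using hv
  unfold projPerp
  rw [inner_add_left, inner_smul_left, add_div]
  simp only [conj_trivial]
  rw [mul_div_cancel_right₀ _ hvv]
  module

/-- `projPerp v` as a linear map. -/
def projPerpL {n : ℕ} (v : EuclideanSpace ℝ (Fin n)) :
    EuclideanSpace ℝ (Fin n) →ₗ[ℝ] EuclideanSpace ℝ (Fin n) where
  toFun := projPerp v
  map_add' x y := by
    simp only [projPerp, inner_add_left, add_div]; module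
  map_smul' r x := by
    simp only [projPerp, inner_smul_left, conj_trivial, mul_div_assoc, RingHom.id_apply]; module

theorem projPerpL_apply {n : ℕ} (v x : EuclideanSpace ℝ (Fin n)) :
    projPerpL v x = projPerp v x := rfl

theorem projPerp_continuous {n : ℕ} (v : EuclideanSpace ℝ (Fin n)) : Continuous (projPerp v) :=
  (projPerpL v).continuous_of_finiteDimensional

theorem projPerp_idem {n : ℕ} (v : EuclideanSpace ℝ (Fin n)) (hv : v ≠ 0)
    (x : EuclideanSpace ℝ (Fin n)) : projPerp v (projPerp v x) = projPerp v x := by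
  conv_lhs => enter [2]; unfold projPerp
  rw [sub_eq_add_neg, ← neg_smul, projPerp_add_smul v hv]

theorem selection {n : ℕ} (v : EuclideanSpace ℝ (Fin n)) (hv : v ≠ 0)
    (O : Set (EuclideanSpace ℝ (Fin n))) (hO : IsOpen O) (h0 : 0 ∈ O)
    (c : EuclideanSpace ℝ (Fin n) → ℝ) (hinv : ∀ x (s : ℝ), c (x + s • v) = c x)
    (H : ∀ y : Fin n → EuclideanSpace ℝ (Fin n), (∀ i, y i ∈ O) → ¬LinearIndependent ℝ y →
      ¬LinearIndependent ℝ (fun i => y i + c (y i) • v)) :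
    ∃ ℓ : EuclideanSpace ℝ (Fin n) →ₗ[ℝ] ℝ, ∀ u ∈ O, c u = ℓ (projPerp v u) := by
  have hvv : ⟪v, v⟫ ≠ 0 := by simpa using hv
  obtain ⟨ℓ, hℓ⟩ := selection_step v O hO h0 c H v hvv
  refine ⟨ℓ, fun u hu => ?_⟩
  have hcp : ∀ x, c (projPerp v x) = c x := by
    intro x
    unfold projPerp
    rw [sub_eq_add_neg, ← neg_smul, hinv]
  have hc0 : c 0 = 0 := by simpa using hℓ 0 h0 (by simp)
  by_cases hu0 : projPerp v u = 0
  · rw [← hcp, hu0, hc0, map_zero]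
  -- a hyperplane through `u` transversal to `v`
  have hune : u ≠ 0 := by
    rintro rfl; apply hu0; simp [projPerp]
  have huu : ⟪u, u⟫ ≠ 0 := by simpa using hune
  let w := v - (⟪v, u⟫ / ⟪u, u⟫) • u
  have hwu : ⟪u, w⟫ = 0 := by
    simp only [w]
    rw [inner_sub_right, inner_smul_right, real_inner_comm]
    field_simp
    simp
  have hwv : ⟪v, w⟫ ≠ 0 := by
    intro h
    have h1 : ⟪w, w⟫ = 0 := by
      nth_rewrite 1 [show w = v - (⟪v, u⟫ / ⟪u, u⟫) • u from rfl]
      rw [inner_sub_left, inner_smul_left, h, hwu]; simp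
    have h2 : w = 0 := by simpa using h1
    have h3 : v = (⟪v, u⟫ / ⟪u, u⟫) • u := sub_eq_zero.1 h2
    have h4 : ⟪v, u⟫ / ⟪u, u⟫ ≠ 0 := by
      intro h5; rw [h5] at h3; simp at h3; exact hv h3
    apply hu0
    have h5 : u = (0 : EuclideanSpace ℝ (Fin n)) + (⟪v, u⟫ / ⟪u, u⟫)⁻¹ • v := by
      rw [zero_add]
      nth_rewrite 2 [h3]
      rw [smul_smul, inv_mul_cancel₀ h4, one_smul]
    rw [h5, projPerp_add_smul v hv]
    simp [projPerp]
  obtain ⟨ℓ', hℓ'⟩ := selection_step v O hO h0 c H w hwv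
  have hev : ∀ᶠ r in nhds (0:ℝ), r • u ∈ O ∧ r • projPerp v u ∈ O := by
    have hc1 : Continuous fun r : ℝ => r • u := by fun_prop
    have hc2 : Continuous fun r : ℝ => r • projPerp v u := by fun_prop
    have m1 : ∀ᶠ r in nhds (0:ℝ), r • u ∈ O :=
      hc1.continuousAt.preimage_mem_nhds (hO.mem_nhds (by simpa using h0))
    have m2 : ∀ᶠ r in nhds (0:ℝ), r • projPerp v u ∈ O :=
      hc2.continuousAt.preimage_mem_nhds (hO.mem_nhds (by simpa using h0))
    exact m1.and m2
  obtain ⟨r, hr, h⟩ := Metric.eventually_nhds_iff.1 hev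
  have hr2 : r / 2 ≠ 0 := by positivity
  obtain ⟨h1, h2⟩ := h (y := r/2) (by
    rw [Real.dist_eq, sub_zero, abs_of_pos (by positivity)]; linarith)
  have k1 := hℓ' u hu hwu
  have k2 := hℓ' _ h1 (by rw [inner_smul_left, hwu, mul_zero])
  have k3 := hℓ _ h2 (by rw [inner_smul_left, projPerp_inner v hv, mul_zero])
  have k4 : c ((r/2) • projPerp v u) = c ((r/2) • u) := by
    rw [← hcp ((r/2) • u)]
    congr 1
    exact ((projPerpL v).map_smul _ _).symm
  rw [map_smul] at k2 k3
  rw [k1]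
  have : (r/2) * ℓ' u = (r/2) * ℓ (projPerp v u) := by
    rw [k4, k2] at k3; exact k3
  exact mul_left_cancel₀ hr2 this

/-- The cylinder over the projection of `K`. -/
def cylC {n : ℕ} (K : Set (EuclideanSpace ℝ (Fin n))) (v : EuclideanSpace ℝ (Fin n)) :
    Set (EuclideanSpace ℝ (Fin n)) := projPerp v ⁻¹' (projPerp v '' K)

open Classical in
/-- A measurable version of the speed function. -/
def spd {n : ℕ} (K : Set (EuclideanSpace ℝ (Fin n))) (v : EuclideanSpace ℝ (Fin n))
    (β : EuclideanSpace ℝ (Fin n) → ℝ) (x : EuclideanSpace ℝ (Fin n)) : ℝ :=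
  if x ∈ interior (cylC K v) then β (projPerp v x) else 0

theorem spd_of_mem {n : ℕ} {K : Set (EuclideanSpace ℝ (Fin n))} {v : EuclideanSpace ℝ (Fin n)}
    {β : EuclideanSpace ℝ (Fin n) → ℝ} {x : EuclideanSpace ℝ (Fin n)}
    (hx : x ∈ interior (cylC K v)) : spd K v β x = β (projPerp v x) := by
  simp [spd, hx]

theorem projPerp_sub_smul {n : ℕ} (v : EuclideanSpace ℝ (Fin n)) (hv : v ≠ 0)
    (x : EuclideanSpace ℝ (Fin n)) (s : ℝ) : projPerp v (x - s • v) = projPerp v x := by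
  rw [sub_eq_add_neg, ← neg_smul, projPerp_add_smul v hv]

theorem cylC_inv {n : ℕ} (K : Set (EuclideanSpace ℝ (Fin n))) (v : EuclideanSpace ℝ (Fin n))
    (hv : v ≠ 0) (x : EuclideanSpace ℝ (Fin n)) (s : ℝ) : x + s • v ∈ cylC K v ↔ x ∈ cylC K v := by
  simp only [cylC, mem_preimage, projPerp_add_smul v hv]

theorem intC_inv {n : ℕ} (K : Set (EuclideanSpace ℝ (Fin n))) (v : EuclideanSpace ℝ (Fin n))
    (hv : v ≠ 0) (x : EuclideanSpace ℝ (Fin n)) (s : ℝ) :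
    x + s • v ∈ interior (cylC K v) ↔ x ∈ interior (cylC K v) := by
  have h : ∀ (x : EuclideanSpace ℝ (Fin n)) (s : ℝ),
      x + s • v ∈ interior (cylC K v) → x ∈ interior (cylC K v) := by
    intro x s hx
    have hc : Continuous fun y : EuclideanSpace ℝ (Fin n) => y + s • v := by fun_prop
    refine mem_interior.2 ⟨_, ?_, isOpen_interior.preimage hc, hx⟩
    intro y hy
    exact (cylC_inv K v hv y s).1 (interior_subset hy)
  refine ⟨h x s, fun hx => h _ (-s) ?_⟩
  simpa using hx

theorem spd_inv {n : ℕ} (K : Set (EuclideanSpace ℝ (Fin n))) (v : EuclideanSpace ℝ (Fin n))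
    (hv : v ≠ 0) (β : EuclideanSpace ℝ (Fin n) → ℝ) (x : EuclideanSpace ℝ (Fin n)) (s : ℝ) :
    spd K v β (x + s • v) = spd K v β x := by
  by_cases hx : x ∈ interior (cylC K v)
  · rw [spd_of_mem hx, spd_of_mem ((intC_inv K v hv x s).2 hx), projPerp_add_smul v hv]
  · have hx' : x + s • v ∉ interior (cylC K v) := fun h => hx ((intC_inv K v hv x s).1 h)
    simp [spd, hx, hx']

theorem cylC_convex {n : ℕ} (K : Set (EuclideanSpace ℝ (Fin n))) (v : EuclideanSpace ℝ (Fin n))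
    (hK : Convex ℝ K) : Convex ℝ (cylC K v) :=
  (hK.linear_image (projPerpL v)).linear_preimage (projPerpL v)

theorem mem_RS {n : ℕ} (K : Set (EuclideanSpace ℝ (Fin n))) (v : EuclideanSpace ℝ (Fin n))
    (hv : v ≠ 0) (β : EuclideanSpace ℝ (Fin n) → ℝ) (t : ℝ) (y : EuclideanSpace ℝ (Fin n)) :
    y ∈ RSFamily K v β t ↔ y - (t * β (projPerp v y)) • v ∈ K := by
  constructor
  · rintro ⟨x, hx, rfl⟩
    simp only [projPerp_add_smul v hv, add_sub_cancel_right]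
    exact hx
  · intro h
    exact ⟨_, h, by simp only [projPerp_sub_smul v hv, sub_add_cancel]⟩

theorem RS_sub_cylC {n : ℕ} (K : Set (EuclideanSpace ℝ (Fin n))) (v : EuclideanSpace ℝ (Fin n))
    (hv : v ≠ 0) (β : EuclideanSpace ℝ (Fin n) → ℝ) (t : ℝ) : RSFamily K v β t ⊆ cylC K v := by
  rintro _ ⟨x, hx, rfl⟩
  exact (cylC_inv K v hv x _).2 ⟨x, hx, rfl⟩

theorem shear_inv {n : ℕ} (v : EuclideanSpace ℝ (Fin n)) (b : EuclideanSpace ℝ (Fin n) → ℝ)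
    (hinv : ∀ x (s : ℝ), b (x + s • v) = b x) (t s : ℝ) (x : EuclideanSpace ℝ (Fin n)) :
    shearMap v b s (shearMap v b t x) = shearMap v b (s + t) x := by
  simp only [shearMap, hinv]; module

theorem shear_zero {n : ℕ} (v : EuclideanSpace ℝ (Fin n)) (b : EuclideanSpace ℝ (Fin n) → ℝ)
    (x : EuclideanSpace ℝ (Fin n)) : shearMap v b 0 x = x := by
  simp [shearMap]

theorem mem_RS_of_intC {n : ℕ} (K : Set (EuclideanSpace ℝ (Fin n))) (v : EuclideanSpace ℝ (Fin n))
    (hv : v ≠ 0) (β : EuclideanSpace ℝ (Fin n) → ℝ) (t : ℝ) (y : EuclideanSpace ℝ (Fin n))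
    (hy : y ∈ interior (cylC K v)) :
    y ∈ RSFamily K v β t ↔ shearMap v (spd K v β) (-t) y ∈ K := by
  rw [mem_RS K v hv, shearMap, spd_of_mem hy, neg_mul, neg_smul, ← sub_eq_add_neg]

theorem supfun_concave {n : ℕ} (A C : Set (EuclideanSpace ℝ (Fin n)))
    (v : EuclideanSpace ℝ (Fin n)) (hA : Convex ℝ A) (hC : Convex ℝ C)
    (hne : ∀ x ∈ C, {s : ℝ | x + s • v ∈ A}.Nonempty)
    (hbd : ∀ x ∈ C, BddAbove {s : ℝ | x + s • v ∈ A}) :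
    ConcaveOn ℝ C (fun x => sSup {s : ℝ | x + s • v ∈ A}) := by
  refine ⟨hC, fun x hx y hy a b ha hb hab => ?_⟩
  simp only [smul_eq_mul]
  refine le_of_forall_pos_le_add fun ε hε => ?_
  obtain ⟨s, hs, hs1⟩ := exists_lt_of_lt_csSup (hne x hx) (sub_lt_self _ hε)
  obtain ⟨r, hr, hr1⟩ := exists_lt_of_lt_csSup (hne y hy) (sub_lt_self _ hε)
  have h1 : a * s + b * r ≤ sSup {s : ℝ | (a • x + b • y) + s • v ∈ A} := by
    refine le_csSup (hbd _ (hC hx hy ha hb hab)) ?_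
    have := hA hs hr ha hb hab
    have e : a • (x + s • v) + b • (y + r • v) = (a • x + b • y) + (a * s + b * r) • v := by
      module
    rw [e] at this
    exact this
  set X := sSup {s : ℝ | x + s • v ∈ A}
  set Y := sSup {s : ℝ | y + s • v ∈ A}
  have h2 : a * X ≤ a * (s + ε) := by gcongr; linarith
  have h3 : b * Y ≤ b * (r + ε) := by gcongr; linarith
  have h4 : a * ε + b * ε = ε := by rw [← add_mul, hab, one_mul]
  nlinarith

theorem beta_continuousOn {n : ℕ} (K : Set (EuclideanSpace ℝ (Fin n))) (hKc : IsCompact K)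
    (hK : Convex ℝ K) (v : EuclideanSpace ℝ (Fin n))
    (hv : v ≠ 0) (β : EuclideanSpace ℝ (Fin n) → ℝ) (t : ℝ) (ht : t ≠ 0)
    (hmove : Convex ℝ (RSFamily K v β t)) :
    ContinuousOn (fun x => β (projPerp v x)) (interior (cylC K v)) := by
  have hne : ∀ x ∈ cylC K v, {s : ℝ | x + s • v ∈ K}.Nonempty := by
    rintro x ⟨y, hy, hxy⟩
    simp only [projPerp] at hxy
    refine ⟨⟪y, v⟫ / ⟪v, v⟫ - ⟪x, v⟫ / ⟪v, v⟫, ?_⟩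
    have : x + (⟪y, v⟫ / ⟪v, v⟫ - ⟪x, v⟫ / ⟪v, v⟫) • v = y := by
      rw [sub_smul, add_sub_left_comm, ← hxy]; simp
    change _ ∈ K
    rw [this]; exact hy
  have hbd : ∀ x ∈ cylC K v, BddAbove {s : ℝ | x + s • v ∈ K} := fun x _ =>
    (slice_compact v hv K hKc x).bddAbove
  have hlub : ∀ x ∈ cylC K v, IsLUB {s : ℝ | x + s • v ∈ RSFamily K v β t}
      (sSup {s : ℝ | x + s • v ∈ K} + t * β (projPerp v x)) := by
    intro x hx
    have h0 := isLUB_csSup (hne x hx) (hbd x hx)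
    have key : ∀ s : ℝ, x + s • v ∈ RSFamily K v β t ↔ x + (s - t * β (projPerp v x)) • v ∈ K := by
      intro s
      rw [mem_RS K v hv, projPerp_add_smul v hv, sub_smul, add_sub_assoc]
    constructor
    · intro s hs
      have := h0.1 ((key s).1 hs)
      linarith
    · intro q hq
      have : sSup {s : ℝ | x + s • v ∈ K} ≤ q - t * β (projPerp v x) := by
        refine h0.2 fun s hs => ?_
        have hs' : s + t * β (projPerp v x) ∈ {s : ℝ | x + s • v ∈ RSFamily K v β t} := by
          refine (key _).2 ?_
          rw [add_sub_cancel_right]; exact hs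
        have := hq hs'
        linarith
      linarith
  have hne' : ∀ x ∈ cylC K v, {s : ℝ | x + s • v ∈ RSFamily K v β t}.Nonempty := by
    intro x hx
    by_contra h
    rw [not_nonempty_iff_eq_empty] at h
    have h1 := hlub x hx
    rw [h] at h1
    exact not_bddBelow_univ (α := ℝ) (by
      have := h1.2
      simp only [upperBounds_empty] at this
      exact ⟨_, this⟩)
  have hc1 := (supfun_concave K (cylC K v) v hK (cylC_convex K v hK) hne hbd).continuousOn_interior
  have hc2 := (supfun_concave _ (cylC K v) v hmove (cylC_convex K v hK) hne'
    (fun x hx => ⟨_, (hlub x hx).1⟩)).continuousOn_interior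
  refine ((hc2.sub hc1).div_const t).congr ?_
  intro x hx
  have hx' := interior_subset hx
  simp only [Pi.sub_apply]
  rw [(hlub x hx').csSup_eq (hne' x hx')]
  field_simp
  ring

theorem spd_measurable {n : ℕ} (K : Set (EuclideanSpace ℝ (Fin n)))
    (v : EuclideanSpace ℝ (Fin n)) (β : EuclideanSpace ℝ (Fin n) → ℝ)
    (hc : ContinuousOn (fun x => β (projPerp v x)) (interior (cylC K v))) :
    Measurable (spd K v β) := by
  classical
  have := ContinuousOn.measurable_piecewise (s := interior (cylC K v)) hc
    (continuousOn_const (c := (0:ℝ)) (s := (interior (cylC K v))ᶜ)) isOpen_interior.measurableSet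
  convert this using 1
  ext x
  by_cases hx : x ∈ interior (cylC K v) <;> simp [spd, Set.piecewise, hx]

theorem shear_continuousOn {n : ℕ} (K : Set (EuclideanSpace ℝ (Fin n)))
    (v : EuclideanSpace ℝ (Fin n)) (β : EuclideanSpace ℝ (Fin n) → ℝ)
    (hc : ContinuousOn (fun x => β (projPerp v x)) (interior (cylC K v))) (t : ℝ) :
    ContinuousOn (shearMap v (spd K v β) t) (interior (cylC K v)) := by
  have h1 : ContinuousOn (spd K v β) (interior (cylC K v)) :=
    hc.congr fun x hx => spd_of_mem hx
  unfold shearMap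
  fun_prop

theorem intK_sub {n : ℕ} (K : Set (EuclideanSpace ℝ (Fin n))) (v : EuclideanSpace ℝ (Fin n)) :
    interior K ⊆ interior (cylC K v) :=
  interior_mono fun x hx => ⟨x, hx, rfl⟩

theorem shear_mem_intC {n : ℕ} (K : Set (EuclideanSpace ℝ (Fin n))) (v : EuclideanSpace ℝ (Fin n))
    (hv : v ≠ 0) (b : EuclideanSpace ℝ (Fin n) → ℝ) (t : ℝ) (x : EuclideanSpace ℝ (Fin n)) :
    shearMap v b t x ∈ interior (cylC K v) ↔ x ∈ interior (cylC K v) :=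
  intC_inv K v hv x _

theorem zero_mem_int_RS {n : ℕ} (K : Set (EuclideanSpace ℝ (Fin n))) (hK : IsSymConvexBody K)
    (v : EuclideanSpace ℝ (Fin n)) (hv : v ≠ 0) (β : EuclideanSpace ℝ (Fin n) → ℝ)
    (hβodd : ∀ x ∈ projPerp v '' K, β (-x) = -β x)
    (hc : ContinuousOn (fun x => β (projPerp v x)) (interior (cylC K v)))
    (t : ℝ) (hmove : Convex ℝ (RSFamily K v β t)) :
    0 ∈ interior (RSFamily K v β t) := by
  obtain ⟨-, -, ⟨x₀, hx₀⟩, hsym⟩ := hK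
  have hmem : shearMap v (spd K v β) t x₀ ∈ interior (RSFamily K v β t) := by
    refine mem_interior.2 ⟨interior (cylC K v) ∩ shearMap v (spd K v β) (-t) ⁻¹' interior K, ?_,
      (shear_continuousOn K v β hc (-t)).isOpen_inter_preimage isOpen_interior isOpen_interior, ?_, ?_⟩
    · rintro y ⟨hy1, hy2⟩
      exact (mem_RS_of_intC K v hv β t y hy1).2 (interior_subset hy2)
    · exact (shear_mem_intC K v hv _ t x₀).2 (intK_sub K v hx₀)
    · simp only [mem_preimage]
      rw [shear_inv v _ (spd_inv K v hv β), neg_add_cancel, shear_zero]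
      exact hx₀
  set y := shearMap v (spd K v β) t x₀
  have hsymt : ∀ z ∈ RSFamily K v β t, -z ∈ RSFamily K v β t := by
    intro z hz
    have hz1 : projPerp v z ∈ projPerp v '' K := RS_sub_cylC K v hv β t hz
    rw [mem_RS K v hv] at hz ⊢
    have h1 : projPerp v (-z) = - projPerp v z := (projPerpL v).map_neg z
    rw [h1, hβodd _ hz1]
    rw [hsym]
    rw [Set.mem_neg]
    convert hz using 1
    module
  have hneg : -y ∈ interior (RSFamily K v β t) := by
    refine mem_interior.2 ⟨Neg.neg ⁻¹' interior (RSFamily K v β t), ?_,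
      isOpen_interior.preimage continuous_neg, by simpa using hmem⟩
    intro z hz
    have := hsymt _ (interior_subset hz)
    simpa using this
  have := hmove.interior hmem hneg (a := 1/2) (b := 1/2) (by norm_num) (by norm_num) (by norm_num)
  simpa using this

theorem linear_extends {n : ℕ} (K : Set (EuclideanSpace ℝ (Fin n))) (hK : IsSymConvexBody K)
    (v : EuclideanSpace ℝ (Fin n)) (hv : v ≠ 0) (β : EuclideanSpace ℝ (Fin n) → ℝ)
    (t : ℝ) (ht : t ≠ 0) (hmove : Convex ℝ (RSFamily K v β t))
    (h0 : 0 ∈ interior (RSFamily K v β t))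
    (ℓ : EuclideanSpace ℝ (Fin n) →ₗ[ℝ] ℝ)
    (hℓ : ∀ x ∈ interior (cylC K v), β (projPerp v x) = ℓ (projPerp v x)) :
    ∀ x ∈ projPerp v '' K, β x = ℓ x := by
  rintro _ ⟨x, hx, rfl⟩
  set d := t * (β (projPerp v x) - ℓ (projPerp v x)) with hd
  have step : ∀ z ∈ K, projPerp v z = projPerp v x → z + d • v ∈ K := by
    intro z hz hzx
    let y := z + (t * β (projPerp v x)) • v
    have hy : y ∈ RSFamily K v β t := ⟨z, hz, by simp only [hzx]; rfl⟩
    have hr : ∀ r : ℝ, r ∈ Ioo (0:ℝ) 1 → r • (z + d • v) ∈ K := by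
      intro r hr
      have h1 : r • y ∈ interior (RSFamily K v β t) := by
        have := hmove.combo_interior_self_mem_interior h0 hy (a := 1 - r) (b := r)
          (by linarith [hr.2]) hr.1.le (by ring)
        simpa using this
      have h2 : r • y ∈ interior (cylC K v) := interior_mono (RS_sub_cylC K v hv β t) h1
      have h3 := (mem_RS K v hv β t _).1 (interior_subset h1)
      rw [hℓ _ h2] at h3
      have h4 : projPerp v (r • y) = r • projPerp v x := by
        rw [← projPerpL_apply, map_smul, projPerpL_apply]
        simp only [y]
        rw [projPerp_add_smul v hv, hzx]
      rw [h4, map_smul] at h3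
      convert h3 using 1
      simp only [y, hd, smul_eq_mul]
      module
    have hcl : IsClosed K := hK.1.isClosed
    have hcont : Continuous fun r : ℝ => r • (z + d • v) := by fun_prop
    have hlim : Filter.Tendsto (fun r : ℝ => r • (z + d • v)) (nhdsWithin 1 (Iio 1))
        (nhds (z + d • v)) := by
      have := hcont.tendsto 1
      simp only [one_smul] at this
      exact this.mono_left nhdsWithin_le_nhds
    refine hcl.mem_of_tendsto hlim ?_
    filter_upwards [Ioo_mem_nhdsLT (show (0:ℝ) < 1 by norm_num)] with r h
    exact hr r h
  have hall : ∀ k : ℕ, x + ((k : ℝ) * d) • v ∈ K := by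
    intro k
    induction k with
    | zero => simpa using hx
    | succ k ih =>
      have := step _ ih (projPerp_add_smul v hv _ _)
      convert this using 1
      push_cast
      module
  have hd0 : d = 0 := by
    by_contra hne
    obtain ⟨R, hR⟩ := (slice_compact v hv K hK.1 x).isBounded.exists_norm_le
    obtain ⟨k, hk⟩ := exists_nat_gt (R / |d|)
    have h1 := hR _ (hall k)
    rw [Real.norm_eq_abs, abs_mul, Nat.abs_cast] at h1
    have h2 : 0 < |d| := abs_pos.2 hne
    rw [div_lt_iff₀ h2] at hk
    linarith
  have := (mul_eq_zero.1 (hd ▸ hd0)).resolve_left ht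
  linarith

theorem moment_formula {n N : ℕ} (hN : 0 < N) (K : Set (EuclideanSpace ℝ (Fin n)))
    (v : EuclideanSpace ℝ (Fin n)) (β b : EuclideanSpace ℝ (Fin n) → ℝ) (hb : Measurable b)
    (hinv : ∀ x (s : ℝ), b (x + s • v) = b x) (t p : ℝ) (D : Set (EuclideanSpace ℝ (Fin n)))
    (hD : MeasurableSet D)
    (hae : RSFamily K v β t =ᵐ[volume] shearMap v b (-t) ⁻¹' D) :
    momentV n N (RSFamily K v β t) p =
      (∫ x : Fin N → EuclideanSpace ℝ (Fin n) in {x | ∀ i, x i ∈ D},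
        ((volume (polyP fun i => shearMap v b t (x i))).toReal / (volume D).toReal) ^ p) /
      (volume D).toReal ^ N := by
  have hvol : volume (RSFamily K v β t) = volume D := by
    rw [measure_congr hae]
    exact (shear_measurePreserving v b hb hinv (-t)).measure_preimage hD.nullMeasurableSet
  unfold momentV
  rw [hvol]
  congr 1
  simp_rw [hull_eq_polyP hN]
  have hdom : ({x | ∀ i, x i ∈ RSFamily K v β t} : Set (Fin N → EuclideanSpace ℝ (Fin n)))
      =ᵐ[volume] {x | ∀ i, x i ∈ shearMap v b (-t) ⁻¹' D} := by
    have := Measure.ae_eq_set_pi (μ := fun _ : Fin N => (volume : Measure (EuclideanSpace ℝ (Fin n))))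
      (I := Set.univ) (s := fun _ => RSFamily K v β t) (t := fun _ => shearMap v b (-t) ⁻¹' D)
      (fun i _ => hae)
    have e : ∀ A : Set (EuclideanSpace ℝ (Fin n)), Set.univ.pi (fun _ : Fin N => A) =
      {x | ∀ i, x i ∈ A} := by intro A; ext x; simp
    rw [e, e] at this
    exact this
  rw [setIntegral_congr_set hdom]
  have hs : ∀ r, Measurable (shearMap v b r) := shear_measurable v b hb
  let Ψ : (Fin N → EuclideanSpace ℝ (Fin n)) ≃ᵐ (Fin N → EuclideanSpace ℝ (Fin n)) :=
    { toFun := fun x i => shearMap v b t (x i)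
      invFun := fun x i => shearMap v b (-t) (x i)
      left_inv := by
        intro x; ext1 i
        simp only [shear_inv v b hinv, neg_add_cancel, shear_zero]
      right_inv := by
        intro x; ext1 i
        simp only [shear_inv v b hinv, add_neg_cancel, shear_zero]
      measurable_toFun := measurable_pi_iff.2 fun i => (hs t).comp (measurable_pi_apply i)
      measurable_invFun := measurable_pi_iff.2 fun i => (hs (-t)).comp (measurable_pi_apply i) }
  have hΨ : MeasurePreserving Ψ volume volume :=
    volume_preserving_pi (fun _ : Fin N => shear_measurePreserving v b hb hinv t)
  rw [← hΨ.setIntegral_preimage_emb Ψ.measurableEmbedding]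
  have hpre : Ψ ⁻¹' {x | ∀ i, x i ∈ shearMap v b (-t) ⁻¹' D} = {x | ∀ i, x i ∈ D} := by
    ext x
    have : ∀ i, shearMap v b (-t) (Ψ x i) = x i := by
      intro i
      change shearMap v b (-t) (shearMap v b t (x i)) = x i
      rw [shear_inv v b hinv, neg_add_cancel, shear_zero]
    simp [this]
  rw [hpre]
  rfl

theorem moment_const {n N : ℕ} (hN : 0 < N) (K : Set (EuclideanSpace ℝ (Fin n)))
    (hK : MeasurableSet K)
    (v : EuclideanSpace ℝ (Fin n)) (hv : v ≠ 0) (β : EuclideanSpace ℝ (Fin n) → ℝ)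
    (ℓ : EuclideanSpace ℝ (Fin n) →ₗ[ℝ] ℝ) (hℓ : ∀ x ∈ projPerp v '' K, β x = ℓ x) (t p : ℝ) :
    momentV n N (RSFamily K v β t) p =
      (∫ x : Fin N → EuclideanSpace ℝ (Fin n) in {x | ∀ i, x i ∈ K},
        ((volume (polyP x)).toReal / (volume K).toReal) ^ p) / (volume K).toReal ^ N := by
  let b : EuclideanSpace ℝ (Fin n) → ℝ := fun x => ℓ (projPerp v x)
  have hb : Measurable b :=
    (ℓ.continuous_of_finiteDimensional.comp (projPerp_continuous v)).measurable
  have hinv : ∀ x (s : ℝ), b (x + s • v) = b x := fun x s => by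
    simp only [b, projPerp_add_smul v hv]
  have heq : RSFamily K v β t = shearMap v b (-t) ⁻¹' K := by
    ext y
    rw [mem_RS K v hv, mem_preimage, shearMap]
    have e : projPerp v y ∈ projPerp v '' K → y - (t * β (projPerp v y)) • v = y + (-t * b y) • v := by
      intro h
      rw [hℓ _ h]
      simp only [b]
      module
    constructor
    · intro h
      have h1 : projPerp v y ∈ projPerp v '' K := ⟨_, h, projPerp_sub_smul v hv _ _⟩
      rw [← e h1]; exact h
    · intro h
      have h1 : projPerp v y ∈ projPerp v '' K := ⟨_, h, projPerp_add_smul v hv _ _⟩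
      rw [e h1]; exact h
  rw [moment_formula hN K v β b hb hinv t p K hK (by rw [heq]; exact Filter.EventuallyEq.rfl)]
  have hP : ∀ x : Fin N → EuclideanSpace ℝ (Fin n),
      volume (polyP fun i => shearMap v b t (x i)) = volume (polyP x) := by
    intro x
    have e1 : (polyP fun i => shearMap v b t (x i)) = shearMap v b (-t) ⁻¹' polyP x := by
      have hlin : ∀ a : Fin N → ℝ, ∑ i, a i • shearMap v b t (x i) =
          shearMap v b t (∑ i, a i • x i) := by
        intro a
        have hbl : b (∑ i, a i • x i) = ∑ i, a i * b (x i) := by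
          simp only [b, ← projPerpL_apply, map_sum, map_smul, smul_eq_mul]
        simp only [shearMap, hbl, smul_add, Finset.sum_add_distrib, Finset.mul_sum,
          Finset.sum_smul, smul_smul]
        congr 1
        refine Finset.sum_congr rfl fun i _ => ?_
        congr 1; ring
      ext y
      simp only [polyP, mem_image, mem_preimage, hlin]
      refine exists_congr fun a => and_congr_right fun _ => ?_
      constructor
      · rintro rfl; rw [shear_inv v b hinv, neg_add_cancel, shear_zero]
      · intro h; rw [h, shear_inv v b hinv, add_neg_cancel, shear_zero]
    rw [e1]
    exact (shear_measurePreserving v b hb hinv (-t)).measure_preimage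
      (polyP_compact x).isClosed.measurableSet.nullMeasurableSet
  simp_rw [hP]

theorem RS_ae_eq {n : ℕ} (K : Set (EuclideanSpace ℝ (Fin n))) (hK : Convex ℝ K)
    (hKc : IsClosed K)
    (v : EuclideanSpace ℝ (Fin n)) (hv : v ≠ 0) (β : EuclideanSpace ℝ (Fin n) → ℝ)
    (hm : Measurable (spd K v β)) (t : ℝ) :
    RSFamily K v β t =ᵐ[volume] shearMap v (spd K v β) (-t) ⁻¹' interior K := by
  have h1 : volume (frontier (cylC K v)) = 0 := (cylC_convex K v hK).addHaar_frontier volume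
  have h2 : volume (frontier K) = 0 := hK.addHaar_frontier volume
  have hmp := shear_measurePreserving v (spd K v β) hm (spd_inv K v hv β) (-t)
  have h3 : volume (shearMap v (spd K v β) (-t) ⁻¹' frontier K) = 0 := by
    rw [hmp.measure_preimage isClosed_frontier.measurableSet.nullMeasurableSet, h2]
  have h1' := measure_eq_zero_iff_ae_notMem.1 h1
  have h3' := measure_eq_zero_iff_ae_notMem.1 h3
  refine Filter.eventuallyEq_set.2 ?_
  filter_upwards [h1', h3'] with y hy1 hy3
  by_cases hy : y ∈ interior (cylC K v)
  · rw [mem_RS_of_intC K v hv β t y hy, mem_preimage]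
    refine ⟨fun h => ?_, fun h => interior_subset h⟩
    by_contra h4
    exact hy3 ⟨subset_closure h, h4⟩
  · have hyC : y ∉ cylC K v := fun h => hy1 ⟨subset_closure h, hy⟩
    constructor
    · intro h; exact absurd (RS_sub_cylC K v hv β t h) hyC
    · intro h
      exact absurd ((shear_mem_intC K v hv _ (-t) y).1 (intK_sub K v h)) hy

theorem integral_lt_aux {α : Type*} [MeasurableSpace α] (μ : Measure α) (f g : α → ℝ)
    (hf : Integrable f μ) (hg : Integrable g μ) (hle : ∀ x, f x ≤ g x)
    (hlt : μ {x | f x < g x} ≠ 0) : ∫ x, f x ∂μ < ∫ x, g x ∂μ := by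
  rw [← sub_pos, ← integral_sub hg hf]
  rw [integral_pos_iff_support_of_nonneg (fun x => sub_nonneg.2 (hle x)) (hg.sub hf)]
  refine (pos_iff_ne_zero.2 hlt).trans_le (measure_mono ?_)
  intro x hx
  have hx' : f x < g x := hx
  simp only [Function.mem_support]
  exact (sub_pos.2 hx').ne'

theorem exists_config {n N : ℕ} (hN : n ≤ N) (K : Set (EuclideanSpace ℝ (Fin n)))
    (hK : IsSymConvexBody K)
    (v : EuclideanSpace ℝ (Fin n)) (hv : v ≠ 0) (β : EuclideanSpace ℝ (Fin n) → ℝ)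
    (hβodd : ∀ x ∈ projPerp v '' K, β (-x) = -β x)
    (hc : ContinuousOn (fun x => β (projPerp v x)) (interior (cylC K v)))
    (t₀ : ℝ) (ht₀ : t₀ ≠ 0) (hmove₀ : Convex ℝ (RSFamily K v β t₀))
    (hnl : ¬∃ ℓ : EuclideanSpace ℝ (Fin n) →ₗ[ℝ] ℝ, ∀ x ∈ projPerp v '' K, β x = ℓ x)
    (t t₁ : ℝ) (htt : t₁ ≠ t) (hmove : Convex ℝ (RSFamily K v β t)) :
    ∃ x : Fin N → EuclideanSpace ℝ (Fin n), (∀ i, x i ∈ interior K) ∧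
      volume (polyP fun i => shearMap v (spd K v β) t (x i)) = 0 ∧
      LinearIndependent ℝ (fun i : Fin n => shearMap v (spd K v β) t₁ (x (Fin.castLE hN i))) := by
  have hinv := spd_inv K v hv β
  have h0 := zero_mem_int_RS K hK v hv β hβodd hc t hmove
  have h0' := zero_mem_int_RS K hK v hv β hβodd hc t₀ hmove₀
  set O := interior (RSFamily K v β t) with hO
  have hOU : O ⊆ interior (cylC K v) := interior_mono (RS_sub_cylC K v hv β t)
  have hτ : t₁ - t ≠ 0 := sub_ne_zero.2 htt
  have hex : ∃ y : Fin n → EuclideanSpace ℝ (Fin n), (∀ i, y i ∈ O) ∧ ¬LinearIndependent ℝ y ∧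
      LinearIndependent ℝ (fun i => shearMap v (spd K v β) (t₁ - t) (y i)) := by
    by_contra hcon
    push Not at hcon
    obtain ⟨ℓ, hℓ⟩ := selection v hv O isOpen_interior h0 (fun x => (t₁ - t) * spd K v β x)
      (fun x s => by simp only [hinv]) hcon
    apply hnl
    refine ⟨(t₁ - t)⁻¹ • ℓ, linear_extends K hK v hv β t₀ ht₀ hmove₀ h0' _ fun x hx => ?_⟩
    have hs : ∃ s : ℝ, x + s • v ∈ O := by
      have hcont : Continuous fun r : ℝ => r • x := by fun_prop
      have hev : ∀ᶠ r in nhds (1:ℝ), r • x ∈ interior (cylC K v) :=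
        hcont.continuousAt.preimage_mem_nhds (isOpen_interior.mem_nhds (by simpa using hx))
      obtain ⟨ε, hε, h⟩ := Metric.eventually_nhds_iff.1 hev
      obtain ⟨r, hr⟩ : ∃ r : ℝ, r = 1 + ε / 2 := ⟨_, rfl⟩
      have hr1 : 1 < r := by rw [hr]; linarith
      have hrx : r • x ∈ cylC K v := interior_subset (h (by
        rw [Real.dist_eq, hr, add_sub_cancel_left, abs_of_pos (by positivity)]; linarith))
      obtain ⟨k, hk, hkx⟩ := hrx
      have hz : ∃ s : ℝ, r • x + s • v ∈ RSFamily K v β t := by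
        refine ⟨⟪k, v⟫ / ⟪v, v⟫ - ⟪r • x, v⟫ / ⟪v, v⟫ + t * β (projPerp v k), k, hk, ?_⟩
        change k + (t * β (projPerp v k)) • v = _
        have hkx' : k - (⟪k, v⟫ / ⟪v, v⟫) • v = r • x - (⟪r • x, v⟫ / ⟪v, v⟫) • v := hkx
        have hk' : k = r • x + (⟪k, v⟫ / ⟪v, v⟫ - ⟪r • x, v⟫ / ⟪v, v⟫) • v := by
          rw [sub_smul, add_sub_left_comm, ← hkx']; simp
        generalize hc1 : ⟪k, v⟫ / ⟪v, v⟫ - ⟪r • x, v⟫ / ⟪v, v⟫ = c1 at hk' ⊢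
        generalize hc2 : t * β (projPerp v k) = c2
        rw [add_smul, ← add_assoc, ← hk']
      obtain ⟨s, hs⟩ := hz
      have hrinv : r⁻¹ < 1 := inv_lt_one_of_one_lt₀ hr1
      have := hmove.combo_interior_self_mem_interior h0 hs (a := 1 - r⁻¹) (b := r⁻¹)
        (by linarith) (by positivity) (by ring)
      refine ⟨r⁻¹ * s, ?_⟩
      rw [smul_zero, zero_add, smul_add, smul_smul, inv_mul_cancel₀ (by positivity), one_smul,
        smul_smul] at this
      exact this
    obtain ⟨s, hs⟩ := hs
    have h1 := hℓ _ hs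
    simp only [hinv, projPerp_add_smul v hv, spd_of_mem hx] at h1
    rw [LinearMap.smul_apply, ← h1, smul_eq_mul, inv_mul_cancel_left₀ hτ]
  obtain ⟨y, hyO, hyd, hyi⟩ := hex
  have hinj : Function.Injective (Fin.castLE hN) := Fin.castLE_injective hN
  let Y : Fin N → EuclideanSpace ℝ (Fin n) := Function.extend (Fin.castLE hN) y 0
  have hY1 : ∀ i, Y (Fin.castLE hN i) = y i := fun i => hinj.extend_apply _ _ i
  have hY0 : ∀ j, j ∉ Set.range (Fin.castLE hN) → Y j = 0 := fun j hj =>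
    Function.extend_apply' _ _ _ hj
  have hYO : ∀ j, Y j ∈ O := by
    intro j
    by_cases hj : j ∈ Set.range (Fin.castLE hN)
    · obtain ⟨i, rfl⟩ := hj; rw [hY1]; exact hyO i
    · rw [hY0 j hj]; exact h0
  refine ⟨fun j => shearMap v (spd K v β) (-t) (Y j), fun j => ?_, ?_, ?_⟩
  · refine mem_interior.2 ⟨interior (cylC K v) ∩ shearMap v (spd K v β) t ⁻¹' O, ?_,
      (shear_continuousOn K v β hc t).isOpen_inter_preimage isOpen_interior isOpen_interior, ?_, ?_⟩
    · rintro z ⟨hz1, hz2⟩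
      have h1 := (mem_RS_of_intC K v hv β t _ ((shear_mem_intC K v hv _ t z).2 hz1)).1
        (interior_subset hz2)
      rw [shear_inv v _ hinv, neg_add_cancel, shear_zero] at h1
      exact h1
    · exact (shear_mem_intC K v hv _ (-t) _).2 (hOU (hYO j))
    · simp only [mem_preimage]
      rw [shear_inv v _ hinv, add_neg_cancel, shear_zero]
      exact hYO j
  · simp only [shear_inv v _ hinv, add_neg_cancel, shear_zero]
    let S := Submodule.span ℝ (Set.range y)
    have hS : S ≠ ⊤ := by
      intro h
      exact hyd (linearIndependent_of_top_le_span_of_card_eq_finrank h.ge (by simp))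
    refine measure_mono_null ?_ (Measure.addHaar_submodule volume S hS)
    rintro z ⟨a, -, rfl⟩
    refine S.sum_mem fun j _ => S.smul_mem _ ?_
    change Y j ∈ S
    by_cases hj : j ∈ Set.range (Fin.castLE hN)
    · obtain ⟨i, rfl⟩ := hj; rw [hY1]; exact Submodule.subset_span ⟨i, rfl⟩
    · rw [hY0 j hj]; exact S.zero_mem
  · simp only [shear_inv v _ hinv, hY1, ← sub_eq_add_neg]
    exact hyi

theorem strict_dir {n N : ℕ} (hN0 : 0 < N) (hN : n ≤ N) (K : Set (EuclideanSpace ℝ (Fin n)))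
    (hK : IsSymConvexBody K)
    (v : EuclideanSpace ℝ (Fin n)) (hv : v ≠ 0) (β : EuclideanSpace ℝ (Fin n) → ℝ)
    (hβodd : ∀ x ∈ projPerp v '' K, β (-x) = -β x)
    (I : Set ℝ) (hI : Convex ℝ I) (hInd : ∃ a ∈ I, ∃ b ∈ I, a ≠ b)
    (hmove : ∀ t ∈ I, Convex ℝ (RSFamily K v β t)) (p : ℝ) (hp : 1 ≤ p)
    (hnl : ¬∃ ℓ : EuclideanSpace ℝ (Fin n) →ₗ[ℝ] ℝ, ∀ x ∈ projPerp v '' K, β x = ℓ x) :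
    StrictConvexOn ℝ I (fun t => momentV n N (RSFamily K v β t) p) := by
  obtain ⟨t₀, ht₀I, ht₀⟩ : ∃ t₀ ∈ I, t₀ ≠ 0 := by
    obtain ⟨a, ha, b, hb, hab⟩ := hInd
    by_cases h : a = 0
    · exact ⟨b, hb, fun h' => hab (h.trans h'.symm)⟩
    · exact ⟨a, ha, h⟩
  have hc := beta_continuousOn K hK.1 hK.2.1 v hv β t₀ ht₀ (hmove t₀ ht₀I)
  have hm := spd_measurable K v β hc
  have hinv := spd_inv K v hv β
  have hae := RS_ae_eq K hK.2.1 hK.1.isClosed v hv β hm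
  set D := interior K with hD
  have hDm : MeasurableSet D := isOpen_interior.measurableSet
  set V := (volume D).toReal with hV
  have hVfin : volume D ≠ ⊤ :=
    ((measure_mono interior_subset).trans_lt hK.1.measure_lt_top).ne
  have hVpos : 0 < V := ENNReal.toReal_pos (isOpen_interior.measure_pos _ hK.2.2.1).ne' hVfin
  let DN : Set (Fin N → EuclideanSpace ℝ (Fin n)) := {x | ∀ i, x i ∈ D}
  have hDNeq : DN = Set.univ.pi fun _ => D := by ext x; simp [DN]
  have hDNo : IsOpen DN := by
    rw [hDNeq]; exact isOpen_set_pi finite_univ fun _ _ => isOpen_interior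
  have hDNfin : volume DN ≠ ⊤ := by
    rw [hDNeq, volume_pi_pi]
    exact ENNReal.prod_ne_top fun _ _ => hVfin
  let G : ℝ → (Fin N → EuclideanSpace ℝ (Fin n)) → ENNReal := fun t x =>
    volume (polyP fun i => shearMap v (spd K v β) t (x i))
  have hGm : ∀ t, Measurable (G t) := fun t =>
    polyP_measurable.comp (measurable_pi_iff.2 fun i =>
      (shear_measurable v _ hm t).comp (measurable_pi_apply i))
  let F : ℝ → (Fin N → EuclideanSpace ℝ (Fin n)) → ℝ := fun t x => ((G t x).toReal / V) ^ p
  have hGle : ∀ t ∈ I, ∀ x ∈ DN, (G t x).toReal ≤ V := by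
    intro t ht x hx
    have hvol : volume (RSFamily K v β t) = volume D := by
      rw [measure_congr (hae t)]
      exact (shear_measurePreserving v _ hm hinv (-t)).measure_preimage hDm.nullMeasurableSet
    rw [hV, ← hvol]
    have hfin : volume (RSFamily K v β t) ≠ ⊤ := by rw [hvol]; exact hVfin
    refine ENNReal.toReal_mono hfin (measure_mono ?_)
    rw [← hull_eq_polyP hN0]
    have hmem : ∀ i, shearMap v (spd K v β) t (x i) ∈ RSFamily K v β t := by
      intro i
      rw [mem_RS_of_intC K v hv β t _ ((shear_mem_intC K v hv _ t _).2 (intK_sub K v (hx i))),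
        shear_inv v _ hinv, neg_add_cancel, shear_zero]
      exact interior_subset (hx i)
    have hneg : ∀ i, -shearMap v (spd K v β) t (x i) ∈ RSFamily K v β t := by
      intro i
      have hz := hmem i
      set z := shearMap v (spd K v β) t (x i)
      have hz1 : projPerp v z ∈ projPerp v '' K := RS_sub_cylC K v hv β t hz
      rw [mem_RS K v hv] at hz ⊢
      have h1 : projPerp v (-z) = - projPerp v z := (projPerpL v).map_neg z
      rw [h1, hβodd _ hz1, hK.2.2.2, Set.mem_neg]
      convert hz using 1
      module
    refine convexHull_min ?_ (hmove t ht)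
    rintro z (⟨i, rfl⟩ | ⟨i, hi⟩)
    · exact hmem i
    · have := hneg i
      simp only at hi
      rw [hi, neg_neg] at this
      exact this
  have hint : ∀ t ∈ I, IntegrableOn (F t) DN := by
    intro t ht
    have hFm : Measurable (F t) := by
      have := (hGm t).ennreal_toReal
      simp only [F]
      fun_prop
    refine Measure.integrableOn_of_bounded (M := 1) hDNfin hFm.aestronglyMeasurable ?_
    filter_upwards [ae_restrict_mem hDNo.measurableSet] with x hx
    have h1 := hGle t ht x hx
    have h2 : 0 ≤ (G t x).toReal / V := by positivity
    rw [Real.norm_of_nonneg (Real.rpow_nonneg h2 p)]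
    exact Real.rpow_le_one h2 ((div_le_one hVpos).2 h1) (by linarith)
  have hform : ∀ t, momentV n N (RSFamily K v β t) p = (∫ x in DN, F t x) / V ^ N := fun t =>
    moment_formula hN0 K v β _ hm hinv t p D hDm (hae t)
  refine ⟨hI, fun t₁ ht₁ t₂ ht₂ hne a b ha hb hab => ?_⟩
  simp only [hform, smul_eq_mul]
  set t := a * t₁ + b * t₂ with htdef
  have htI : t ∈ I := hI ht₁ ht₂ ha.le hb.le hab
  have htt : t₁ ≠ t := by
    intro h
    apply hne
    have : b * (t₁ - t₂) = 0 := by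
      have : t₁ = (a + b) * t₁ := by rw [hab, one_mul]
      linarith
    rcases mul_eq_zero.1 this with h | h
    · exact absurd h hb.ne'
    · linarith
  have hGc : ∀ x, G t x ≤ ENNReal.ofReal a * G t₁ x + ENNReal.ofReal b * G t₂ x := fun x =>
    polyP_vol_convex x (fun i => spd K v β (x i)) v hv t₁ t₂ a b ha.le hb.le hab
  have hGfin : ∀ s x, G s x ≠ ⊤ := fun s x => polyP_ne_top _
  have htoR : ∀ x, (ENNReal.ofReal a * G t₁ x + ENNReal.ofReal b * G t₂ x).toReal =
      a * (G t₁ x).toReal + b * (G t₂ x).toReal := by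
    intro x
    rw [ENNReal.toReal_add (ENNReal.mul_ne_top ENNReal.ofReal_ne_top (hGfin _ _))
      (ENNReal.mul_ne_top ENNReal.ofReal_ne_top (hGfin _ _)), ENNReal.toReal_mul,
      ENNReal.toReal_mul, ENNReal.toReal_ofReal ha.le, ENNReal.toReal_ofReal hb.le]
  have hfinR : ∀ x, ENNReal.ofReal a * G t₁ x + ENNReal.ofReal b * G t₂ x ≠ ⊤ := fun x =>
    ENNReal.add_ne_top.2 ⟨ENNReal.mul_ne_top ENNReal.ofReal_ne_top (hGfin _ _),
      ENNReal.mul_ne_top ENNReal.ofReal_ne_top (hGfin _ _)⟩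
  have hpow : ∀ x, ((a * (G t₁ x).toReal + b * (G t₂ x).toReal) / V) ^ p ≤
      a * F t₁ x + b * F t₂ x := by
    intro x
    have h1 : 0 ≤ (G t₁ x).toReal / V := by positivity
    have h2 : 0 ≤ (G t₂ x).toReal / V := by positivity
    have := (convexOn_rpow hp).2 (mem_Ici.2 h1) (mem_Ici.2 h2) ha.le hb.le hab
    simp only [smul_eq_mul] at this
    have e : (a * (G t₁ x).toReal + b * (G t₂ x).toReal) / V =
        a * ((G t₁ x).toReal / V) + b * ((G t₂ x).toReal / V) := by ring
    rw [e]; exact this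
  have hle : ∀ x, F t x ≤ a * F t₁ x + b * F t₂ x := by
    intro x
    refine le_trans ?_ (hpow x)
    have := ENNReal.toReal_mono (hfinR x) (hGc x)
    rw [htoR] at this
    simp only [F]
    gcongr
  have hlt : ∀ x, G t x < ENNReal.ofReal a * G t₁ x → F t x < a * F t₁ x + b * F t₂ x := by
    intro x hx
    refine lt_of_lt_of_le ?_ (hpow x)
    have := (ENNReal.toReal_lt_toReal (hGfin _ _) (hfinR x)).2 (hx.trans_le le_self_add)
    rw [htoR] at this
    simp only [F]
    refine Real.rpow_lt_rpow (by positivity) ?_ (by linarith)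
    gcongr
  obtain ⟨x₀, hx₀D, hx₀0, hx₀i⟩ := exists_config hN K hK v hv β hβodd hc t₀ ht₀ (hmove t₀ ht₀I) hnl
    t t₁ htt (hmove t htI)
  have hcont : ∀ s, ContinuousAt (fun (x : Fin N → EuclideanSpace ℝ (Fin n)) i =>
      shearMap v (spd K v β) s (x i)) x₀ := by
    intro s
    refine continuousAt_pi.2 fun i => ?_
    have h1 : ContinuousAt (shearMap v (spd K v β) s) (x₀ i) :=
      (shear_continuousOn K v β hc s).continuousAt (isOpen_interior.mem_nhds (intK_sub K v (hx₀D i)))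
    exact ContinuousAt.comp (f := fun x : Fin N → EuclideanSpace ℝ (Fin n) => x i) h1
      (continuous_apply i).continuousAt
  obtain ⟨δ, hδ, hlsc⟩ := polyP_lsc hN (fun i => shearMap v (spd K v β) t₁ (x₀ i)) hx₀i
  have husc := polyP_usc _ hx₀0 (ENNReal.ofReal a * δ)
    (ENNReal.mul_pos (by simpa using ha) hδ.ne')
  have hev : ∀ᶠ x in nhds x₀, x ∈ DN ∧ F t x < a * F t₁ x + b * F t₂ x := by
    have e1 := (hcont t).eventually husc
    have e2 := (hcont t₁).eventually hlsc
    filter_upwards [e1, e2, hDNo.mem_nhds hx₀D] with x h1 h2 h3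
    refine ⟨h3, hlt x (lt_of_lt_of_le h1 ?_)⟩
    gcongr
  have hposm : (volume.restrict DN) {x | F t x < a * F t₁ x + b * F t₂ x} ≠ 0 := by
    obtain ⟨W, hW, hWo, hxW⟩ := eventually_nhds_iff.1 hev
    have h1 : 0 < volume W := hWo.measure_pos _ ⟨x₀, hxW⟩
    have h2 : volume W = (volume.restrict DN) W := by
      rw [Measure.restrict_apply hWo.measurableSet, inter_eq_left.2 fun x hx => (hW x hx).1]
    rw [h2] at h1
    exact (h1.trans_le (measure_mono fun x hx => (hW x hx).2)).ne'
  have hfinal := integral_lt_aux (volume.restrict DN) (F t) (fun x => a * F t₁ x + b * F t₂ x)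
    (hint t htI) (((hint t₁ ht₁).const_mul a).add ((hint t₂ ht₂).const_mul b)) hle hposm
  rw [integral_add ((hint t₁ ht₁).const_mul a) ((hint t₂ ht₂).const_mul b), integral_const_mul,
    integral_const_mul] at hfinal
  rw [← mul_div_assoc, ← mul_div_assoc, ← add_div]
  gcongr

/-- Let `K_t`, `t` in a nondegenerate interval `I`, be an SRS-movement of a symmetric
convex body `K ⊆ ℝⁿ` with speed function `β`.  Then for every real `p ≥ 1` and integer
`N ≥ n`, the function `t ↦ 𝔼 V_{K_t, N}^p` is strictly convex on `I` if and only if `β`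
is not the restriction of a linear functional. -/
theorem momentV_strictConvexOn_iff_of_SRSMovement
    {n : ℕ} (K : Set (EuclideanSpace ℝ (Fin n))) (hK : IsSymConvexBody K)
    (v : EuclideanSpace ℝ (Fin n)) (hv : v ≠ 0) (β : EuclideanSpace ℝ (Fin n) → ℝ)
    (hβodd : ∀ x ∈ projPerp v '' K, β (-x) = -β x)
    (I : Set ℝ) (hI : Convex ℝ I) (h0I : (0 : ℝ) ∈ I)
    (hInd : ∃ a ∈ I, ∃ b ∈ I, a ≠ b)
    (hmove : ∀ t ∈ I, Convex ℝ (RSFamily K v β t))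
    (p : ℝ) (hp : 1 ≤ p) (N : ℕ) (hN : n ≤ N) :
    StrictConvexOn ℝ I (fun t => momentV n N (RSFamily K v β t) p) ↔
      ¬∃ ℓ : EuclideanSpace ℝ (Fin n) →ₗ[ℝ] ℝ, ∀ x ∈ projPerp v '' K, β x = ℓ x := by
  have hn : 0 < n := by
    rcases Nat.eq_zero_or_pos n with h | h
    · subst h; exact absurd (Subsingleton.elim v 0) hv
    · exact h
  have hN0 : 0 < N := hn.trans_le hN
  constructor
  · rintro hs ⟨ℓ, hℓ⟩
    obtain ⟨a, ha, b, hb, hab⟩ := hInd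
    have h := hs.2 ha hb hab (show (0:ℝ) < 1/2 by norm_num)
      (show (0:ℝ) < 1/2 by norm_num) (by norm_num)
    simp only [moment_const hN0 K hK.1.isClosed.measurableSet v hv β ℓ hℓ, smul_eq_mul] at h
    linarith
  · exact strict_dir hN0 hN K hK v hv β hβodd I hI hInd hmove p hp
end
end

section
/- Let p ≥ 1 be real and N ≥ n an integer. If a symmetric convex body K ⊂ ℝ^n maximizes 𝔼 U_{K, N+1}^p over all symmetric convex bodies in ℝ^n, or maximizes 𝔼 V_{K, N}^p over all symmetric convex bodies in ℝ^n, then K is SRS-indecomposable. -/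
open MeasureTheory Set
open scoped RealInnerProductSpace

noncomputable section

variable {E : Type*} [NormedAddCommGroup E] [InnerProductSpace ℝ E]

open Filter Topology ENNReal

abbrev Eu (n : ℕ) := EuclideanSpace ℝ (Fin n)

def hgt {n : ℕ} (v : Eu n) : Eu n →L[ℝ] ℝ := (⟪v, v⟫ : ℝ)⁻¹ • innerSL ℝ v

lemma hgt_self {n : ℕ} {v : Eu n} (hv : v ≠ 0) : hgt v v = 1 := by
  have : (⟪v, v⟫ : ℝ) ≠ 0 := inner_self_ne_zero.2 hv
  simp only [hgt, ContinuousLinearMap.smul_apply, innerSL_apply_apply, smul_eq_mul]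
  exact inv_mul_cancel₀ this

lemma projPerp_eq {n : ℕ} (v x : Eu n) : projPerp v x = x - hgt v x • v := by
  simp only [projPerp, hgt, ContinuousLinearMap.smul_apply, innerSL_apply_apply, smul_eq_mul]
  rw [real_inner_comm, div_eq_inv_mul]

lemma hgt_proj {n : ℕ} {v : Eu n} (hv : v ≠ 0) (x : Eu n) : hgt v (projPerp v x) = 0 := by
  rw [projPerp_eq, map_sub, map_smul, hgt_self hv]; simp

lemma proj_add {n : ℕ} (v x y : Eu n) : projPerp v (x + y) = projPerp v x + projPerp v y := by
  simp only [projPerp_eq, map_add, add_smul]; abel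

lemma proj_smul {n : ℕ} (v x : Eu n) (c : ℝ) : projPerp v (c • x) = c • projPerp v x := by
  simp only [projPerp_eq, map_smul, smul_sub, smul_smul, smul_eq_mul]

lemma proj_neg {n : ℕ} (v x : Eu n) : projPerp v (-x) = - projPerp v x := by
  have := proj_smul v x (-1); simpa using this

lemma proj_self {n : ℕ} {v : Eu n} (hv : v ≠ 0) : projPerp v v = 0 := by
  rw [projPerp_eq, hgt_self hv]; simp

lemma proj_add_smul {n : ℕ} {v : Eu n} (hv : v ≠ 0) (x : Eu n) (c : ℝ) :
    projPerp v (x + c • v) = projPerp v x := by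
  rw [proj_add, proj_smul, proj_self hv]; simp

abbrev Hyp {n : ℕ} (v : Eu n) : Submodule ℝ (Eu n) := (hgt v).ker

lemma proj_of_mem {n : ℕ} (v : Eu n) (y : Hyp v) : projPerp v (y : Eu n) = y := by
  have : hgt v (y : Eu n) = 0 := y.2
  rw [projPerp_eq, this]; simp

lemma proj_mem {n : ℕ} {v : Eu n} (hv : v ≠ 0) (x : Eu n) : projPerp v x ∈ Hyp v := hgt_proj hv x

def crd {n : ℕ} {v : Eu n} (hv : v ≠ 0) : Eu n ≃L[ℝ] (Hyp v × ℝ) :=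
  (ContinuousLinearEquiv.equivOfRightInverse (hgt v)
    ((ContinuousLinearMap.id ℝ ℝ).smulRight v) (fun r => by simp [hgt_self hv])).trans
    (ContinuousLinearEquiv.prodComm ℝ ℝ (Hyp v))

lemma crd_snd {n : ℕ} {v : Eu n} (hv : v ≠ 0) (x : Eu n) : (crd hv x).2 = hgt v x := rfl

lemma crd_fst {n : ℕ} {v : Eu n} (hv : v ≠ 0) (x : Eu n) :
    ((crd hv x).1 : Eu n) = projPerp v x := by
  rw [projPerp_eq]; rfl

lemma crd_symm {n : ℕ} {v : Eu n} (hv : v ≠ 0) (y : Hyp v) (r : ℝ) :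
    (crd hv).symm (y, r) = (y : Eu n) + r • v := by
  rw [ContinuousLinearEquiv.symm_apply_eq]
  refine Prod.ext ?_ ?_
  · apply Subtype.ext
    rw [crd_fst, proj_add_smul hv, proj_of_mem]
  · rw [crd_snd, map_add, map_smul, hgt_self hv]
    have : hgt v (y : Eu n) = 0 := y.2
    simp [this]

lemma crd_mp {n : ℕ} {v : Eu n} (hv : v ≠ 0) :
    ∃ μ : Measure (Hyp v), SFinite μ ∧
      MeasurePreserving (crd hv) (volume : Measure (Eu n)) (μ.prod volume) := by
  let c := Measure.addHaarScalarFactor (Measure.map (crd hv) (volume : Measure (Eu n)))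
    ((Measure.addHaar : Measure (Hyp v)).prod volume)
  refine ⟨c • Measure.addHaar, inferInstance, (crd hv).continuous.measurable, ?_⟩
  have h := Measure.isAddLeftInvariant_eq_smul (Measure.map (crd hv) (volume : Measure (Eu n)))
    ((Measure.addHaar : Measure (Hyp v)).prod volume)
  rw [h, Measure.prod_smul_left]

/-- convex hull of a family -/
def hull {n : ℕ} {ι : Type} (y : ι → Eu n) : Set (Eu n) := convexHull ℝ (range y)

lemma mem_hull {n : ℕ} {ι : Type} [Fintype ι] (y : ι → Eu n) (z : Eu n) :
    z ∈ hull y ↔ ∃ w ∈ stdSimplex ℝ ι, ∑ j, w j • y j = z := by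
  classical
  rw [hull, ← Set.image_univ]
  have : y '' univ = (Fintype.linearCombination ℝ y) '' (range fun i j : ι => if i = j then (1:ℝ) else 0) := by
    rw [← range_comp, image_univ]
    congr 1
    ext i : 1
    simp [Fintype.linearCombination_apply]
  rw [this, ← LinearMap.image_convexHull, convexHull_basis_eq_stdSimplex]
  simp [Fintype.linearCombination_apply]

lemma hull_compact {n : ℕ} {ι : Type} [Fintype ι] (y : ι → Eu n) : IsCompact (hull y) :=
  (Set.finite_range y).isCompact_convexHull ℝ

lemma hull_vol_ne_top {n : ℕ} {ι : Type} [Fintype ι] (y : ι → Eu n) : volume (hull y) ≠ ∞ :=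
  (hull_compact y).measure_lt_top.ne

lemma measurable_hull {n : ℕ} {ι : Type} [Fintype ι] :
    Measurable (fun y : ι → Eu n => volume (hull y)) := by
  have hc : IsClosed {q : (ι → Eu n) × Eu n | q.2 ∈ hull q.1} := by
    have h1 : IsClosed {q : stdSimplex ℝ ι × ((ι → Eu n) × Eu n) |
        ∑ j, (q.1 : ι → ℝ) j • q.2.1 j = q.2.2} := by
      apply isClosed_eq
      · refine continuous_finsetSum _ fun j _ => ?_
        have e1 : Continuous fun q : stdSimplex ℝ ι × ((ι → Eu n) × Eu n) => (q.1 : ι → ℝ) j :=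
          (continuous_apply j).comp (continuous_subtype_val.comp continuous_fst)
        have e2 : Continuous fun q : stdSimplex ℝ ι × ((ι → Eu n) × Eu n) => q.2.1 j :=
          (continuous_apply j).comp (continuous_fst.comp continuous_snd)
        exact e1.smul e2
      · fun_prop
    have h2 := isClosedMap_snd_of_compactSpace _ h1
    convert h2 using 1
    ext q
    simp only [mem_setOf_eq, mem_hull, mem_image, Prod.exists]
    constructor
    · rintro ⟨w, hw, h⟩
      exact ⟨⟨w, hw⟩, q.1, q.2, h, rfl⟩
    · rintro ⟨w, a, b, h, rfl⟩
      exact ⟨w.1, w.2, h⟩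
  exact measurable_measure_prodMk_left hc.measurableSet

lemma vol_fiber {n : ℕ} {v : Eu n} (hv : v ≠ 0) {μ : Measure (Hyp v)} [SFinite μ]
    (hμ : MeasurePreserving (crd hv) (volume : Measure (Eu n)) (μ.prod volume))
    {A : Set (Eu n)} (hA : MeasurableSet A) :
    volume A = ∫⁻ y, volume {r : ℝ | (y : Eu n) + r • v ∈ A} ∂μ := by
  have hm : MeasurableSet ((crd hv).symm ⁻¹' A) := (crd hv).symm.continuous.measurable hA
  have h1 : volume A = (μ.prod volume) ((crd hv).symm ⁻¹' A) := by
    rw [← hμ.measure_preimage hm.nullMeasurableSet, ← preimage_comp]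
    simp
  rw [h1, Measure.prod_apply hm]
  congr 1
  ext y
  congr 1
  ext r
  simp only [mem_preimage, mem_setOf_eq, crd_symm hv]

lemma fiber_meas {n : ℕ} {v : Eu n} (hv : v ≠ 0)
    {A : Set (Eu n)} (hA : MeasurableSet A) :
    Measurable fun y : Hyp v => volume {r : ℝ | (y : Eu n) + r • v ∈ A} := by
  have hm : MeasurableSet ((crd hv).symm ⁻¹' A) := (crd hv).symm.continuous.measurable hA
  convert measurable_measure_prodMk_left (ν := (volume : Measure ℝ)) hm using 3 with y
  ext r
  simp only [mem_preimage, mem_setOf_eq, crd_symm hv]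

lemma seg_vol {S : Set ℝ} (hS : Convex ℝ S) {a b : ℝ} (ha : a ∈ S) (hb : b ∈ S) :
    ENNReal.ofReal (a - b) ≤ volume S := by
  have : Icc b a ⊆ S := by
    have := hS.ordConnected
    exact this.out hb ha
  calc _ = volume (Icc b a) := by rw [Real.volume_Icc]
    _ ≤ _ := measure_mono this

lemma rs_convex {n : ℕ} {v : Eu n} (hv : v ≠ 0) {ι : Type} [Fintype ι] (a : ι → Eu n) (b : ι → ℝ) :
    2 * volume (hull a) ≤ volume (hull fun j => a j + b j • v) +
      volume (hull fun j => a j + (-b j) • v) := by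
  obtain ⟨μ, _, hμ⟩ := crd_mp hv
  have hmeas : ∀ y : ι → Eu n, MeasurableSet (hull y) := fun y => (hull_compact y).measurableSet
  rw [vol_fiber hv hμ (hmeas _), vol_fiber hv hμ (hmeas _), vol_fiber hv hμ (hmeas _)]
  rw [← lintegral_const_mul' _ _ (by simp)]
  rw [← lintegral_add_left (fiber_meas hv (hmeas _))]
  refine lintegral_mono fun y => ?_
  have hcv : ∀ (c : ι → Eu n), Convex ℝ {r : ℝ | (y : Eu n) + r • v ∈ hull c} := by
    intro c r hr s hs α γ hα hγ h
    have : α • ((y : Eu n) + r • v) + γ • ((y : Eu n) + s • v) ∈ hull c :=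
      (convex_convexHull ℝ (range c)) hr hs hα hγ h
    simp only [mem_setOf_eq]
    convert this using 1
    rw [smul_add, smul_add, smul_smul, smul_smul, add_smul, smul_eq_mul, smul_eq_mul]
    nth_rw 1 [← one_smul ℝ (y : Eu n), ← h, add_smul]
    abel
  have key : ∀ r, (y : Eu n) + r • v ∈ hull a → ∃ s : ℝ,
      (y : Eu n) + (r + s) • v ∈ hull (fun j => a j + b j • v) ∧
      (y : Eu n) + (r - s) • v ∈ hull (fun j => a j + (-b j) • v) := by
    intro r hr
    obtain ⟨w, hw, h⟩ := (mem_hull _ _).1 hr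
    refine ⟨∑ j, w j * b j, (mem_hull _ _).2 ⟨w, hw, ?_⟩, (mem_hull _ _).2 ⟨w, hw, ?_⟩⟩
    · simp only [smul_add, Finset.sum_add_distrib, h, smul_smul, ← Finset.sum_smul, add_smul]
      abel
    · simp only [smul_add, Finset.sum_add_distrib, h, smul_smul, ← Finset.sum_smul, mul_neg,
        Finset.sum_neg_distrib]
      rw [sub_smul, neg_smul]
      abel
  have h2 : volume {r : ℝ | (y : Eu n) + r • v ∈ hull a} ≤
      (volume {r : ℝ | (y : Eu n) + r • v ∈ hull (fun j => a j + b j • v)} +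
      volume {r : ℝ | (y : Eu n) + r • v ∈ hull (fun j => a j + (-b j) • v)}) / 2 := by
    refine (Real.volume_le_diam _).trans (Metric.ediam_le fun r hr s hs => ?_)
    wlog hrs : s ≤ r generalizing r s
    · rw [edist_comm]; exact this s hs r hr (le_of_not_ge hrs)
    rw [ENNReal.le_div_iff_mul_le (by simp) (by simp), edist_dist, Real.dist_eq,
      abs_of_nonneg (by linarith)]
    obtain ⟨r', h1, h2⟩ := key r hr
    obtain ⟨s', h3, h4⟩ := key s hs
    refine le_trans ?_ (add_le_add (seg_vol (hcv _) h1 h3) (seg_vol (hcv _) h2 h4))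
    refine le_trans ?_ (ENNReal.ofReal_add_le)
    rw [← ENNReal.ofReal_ofNat, ← ENNReal.ofReal_mul (by linarith)]
    apply ENNReal.ofReal_le_ofReal
    linarith
  rw [ENNReal.le_div_iff_mul_le (by simp) (by simp)] at h2
  rw [mul_comm]; exact h2

def shear {n : ℕ} (v : Eu n) (g : Eu n → ℝ) (x : Eu n) : Eu n := x + g (projPerp v x) • v

lemma proj_shear {n : ℕ} {v : Eu n} (hv : v ≠ 0) (g : Eu n → ℝ) (x : Eu n) :
    projPerp v (shear v g x) = projPerp v x := proj_add_smul hv _ _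

lemma shear_shear {n : ℕ} {v : Eu n} (hv : v ≠ 0) (g h : Eu n → ℝ) (x : Eu n)
    (hgh : h (projPerp v x) = - g (projPerp v x)) : shear v h (shear v g x) = x := by
  rw [shear, proj_shear hv, hgh, shear]; simp

lemma proj_continuous {n : ℕ} (v : Eu n) : Continuous (projPerp v) := by
  have : projPerp v = fun x => x - hgt v x • v := funext fun x => projPerp_eq v x
  rw [this]; fun_prop

lemma shear_measurable_s7 {n : ℕ} (v : Eu n) {g : Eu n → ℝ} (hg : Measurable g) :
    Measurable (shear v g) := by
  unfold shear
  exact measurable_id.add ((hg.comp (proj_continuous v).measurable).smul_const v)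

def shearEquiv {n : ℕ} {v : Eu n} (hv : v ≠ 0) {g : Eu n → ℝ} (hg : Measurable g) :
    Eu n ≃ᵐ Eu n where
  toFun := shear v g
  invFun := shear v (fun x => - g x)
  left_inv := fun x => shear_shear hv _ _ x rfl
  right_inv := fun x => shear_shear hv _ _ x (by simp)
  measurable_toFun := shear_measurable_s7 v hg
  measurable_invFun := shear_measurable_s7 v hg.neg

lemma shear_mp {n : ℕ} {v : Eu n} (hv : v ≠ 0) {g : Eu n → ℝ} (hg : Measurable g) :
    MeasurePreserving (shear v g) (volume : Measure (Eu n)) volume := by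
  obtain ⟨μ, _, hμ⟩ := crd_mp hv
  let e := (crd hv).toHomeomorph.toMeasurableEquiv
  have h1 : MeasurePreserving e (volume : Measure (Eu n)) (μ.prod volume) := hμ
  have h2 := h1.symm
  have h3 : MeasurePreserving (fun q : Hyp v × ℝ => (id q.1, (fun (y : Hyp v) (r : ℝ) => r + g y) q.1 q.2))
      (μ.prod volume) (μ.prod volume) := by
    refine MeasurePreserving.skew_product (μc := (volume : Measure ℝ)) (μd := (volume : Measure ℝ))
      (g := fun (y : Hyp v) (r : ℝ) => r + g y) (MeasurePreserving.id μ) ?_ ?_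
    · exact (measurable_snd (α := Hyp v) (β := ℝ)).add (hg.comp (measurable_subtype_coe.comp measurable_fst))
    · refine ae_of_all _ fun y => ?_
      exact (measurePreserving_add_right volume (g y)).map_eq
  convert (h2.comp h3).comp h1 using 1
  ext1 x
  change _ = (crd hv).symm (_, _)
  rw [crd_symm]
  change shear v g x = ((crd hv x).1 : Eu n) + ((crd hv x).2 + g ((crd hv x).1 : Eu n)) • v
  rw [crd_fst, crd_snd, projPerp_eq, shear, projPerp_eq, add_smul]
  abel

lemma hull_usc {n : ℕ} {ι : Type} [Fintype ι] (y0 : ι → Eu n) (h0 : volume (hull y0) = 0) :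
    Tendsto (fun y : ι → Eu n => volume (hull y)) (𝓝 y0) (𝓝 0) := by
  have h1 : Tendsto (fun r => volume (Metric.cthickening r (hull y0))) (𝓝 0) (𝓝 0) := by
    have := tendsto_measure_cthickening_of_isCompact (μ := (volume : Measure (Eu n))) (hull_compact y0)
    rwa [h0] at this
  have h2 : Tendsto (fun y : ι → Eu n => dist y y0) (𝓝 y0) (𝓝 0) := by
    have : Continuous fun y : ι → Eu n => dist y y0 := by fun_prop
    simpa using this.tendsto y0
  refine tendsto_of_tendsto_of_tendsto_of_le_of_le tendsto_const_nhds (h1.comp h2)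
    (fun _ => zero_le) (fun y => ?_)
  refine measure_mono (convexHull_min ?_ ((convex_convexHull ℝ (range y0)).cthickening _))
  rintro _ ⟨j, rfl⟩
  refine Metric.mem_cthickening_of_dist_le _ (y0 j) _ _ (subset_convexHull ℝ _ ⟨j, rfl⟩) ?_
  exact dist_le_pi_dist y y0 j

def dete {n : ℕ} (d : Fin n → Eu n) : ℝ := (EuclideanSpace.basisFun (Fin n) ℝ).toBasis.det d

lemma dete_cont {n : ℕ} : Continuous (dete (n := n)) := by
  unfold dete
  simp only [Module.Basis.det_apply]
  refine Continuous.matrix_det ?_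
  refine continuous_matrix fun i j => ?_
  simp only [Module.Basis.toMatrix_apply]
  simp
  fun_prop

lemma dete_ne {n : ℕ} {d : Fin n → Eu n} (h : LinearIndependent ℝ d) : dete d ≠ 0 := by
  have := (Module.Basis.is_basis_iff_det (EuclideanSpace.basisFun (Fin n) ℝ).toBasis (v := d)).1
    ⟨h, h.span_eq_top_of_card_eq_finrank' (by simp)⟩
  exact this.ne_zero

lemma hull_lower {n : ℕ} : ∃ κ : ℝ, 0 < κ ∧ ∀ (A : Set (Eu n)) (z0 : Eu n) (d : Fin n → Eu n),
    Convex ℝ A → z0 ∈ A → (∀ i, z0 + d i ∈ A) → ENNReal.ofReal (κ * |dete d|) ≤ volume A := by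
  let S : Set (Eu n) := {w | (∀ i, 0 < w i) ∧ ∑ i, w i < 1}
  have hS : IsOpen S := by
    have h1 : IsOpen {w : Eu n | ∀ i, 0 < w i} := by
      simp only [setOf_forall]
      exact isOpen_iInter_of_finite fun i => isOpen_lt continuous_const (by fun_prop)
    have h2 : IsOpen {w : Eu n | ∑ i, w i < 1} := isOpen_lt (by fun_prop) continuous_const
    exact h1.inter h2
  have hw : (WithLp.toLp 2 (fun _ => 1 / ((n : ℝ) + 1)) : Eu n) ∈ S := by
    constructor
    · intro i; simp; positivity
    · simp
      rw [← div_eq_mul_inv, div_lt_one (by positivity)]; linarith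
  obtain ⟨r, hr, hb⟩ := Metric.isOpen_iff.1 hS _ hw
  set B := Metric.ball (WithLp.toLp 2 (fun _ => 1 / ((n : ℝ) + 1)) : Eu n) r with hB
  have hB0 : 0 < volume B := Metric.measure_ball_pos _ _ hr
  have hBt : volume B ≠ ∞ := measure_ball_lt_top.ne
  refine ⟨(volume B).toReal, ENNReal.toReal_pos hB0.ne' hBt, fun A z0 d hA hz hd => ?_⟩
  let b := (EuclideanSpace.basisFun (Fin n) ℝ).toBasis
  let L := Matrix.toLin b b (b.toMatrix d)
  have hL : ∀ w : Eu n, L w = ∑ i, w i • d i := by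
    intro w
    have : w = ∑ i, w i • b i := by
      have h := (b.sum_repr w).symm
      have h' : ∀ i, b.repr w i = w i := fun i => by simp [b]
      simpa only [h'] using h
    conv_lhs => rw [this]
    rw [map_sum]
    refine Finset.sum_congr rfl fun i _ => ?_
    rw [map_smul]
    congr 1
    simp only [L]
    rw [Matrix.toLin_self, Module.Basis.sum_toMatrix_smul_self]
  have hdet : LinearMap.det L = dete d := by
    simp only [L, LinearMap.det_toLin]
    rfl
  have hsub : (fun x => z0 + x) '' (L '' B) ⊆ A := by
    rintro _ ⟨_, ⟨w, hwB, rfl⟩, rfl⟩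
    obtain ⟨h1, h2⟩ := hb hwB
    simp only [hL]
    have := hA.sum_mem (t := Finset.univ) (w := (Fin.cons (1 - ∑ i, w i) (fun i => w i) : Fin (n+1) → ℝ))
      (z := (Fin.cons z0 (fun i => z0 + d i) : Fin (n+1) → Eu n)) ?_ ?_ ?_
    · convert this using 1
      rw [Fin.sum_univ_succ]
      simp only [Fin.cons_zero, Fin.cons_succ, smul_add, Finset.sum_add_distrib, ← Finset.sum_smul,
        sub_smul, one_smul]
      abel
    · intro i _
      refine Fin.cases ?_ (fun i => ?_) i
      · simp only [Fin.cons_zero]; linarith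
      · simp only [Fin.cons_succ]; exact (h1 i).le
    · rw [Fin.sum_univ_succ]; simp
    · intro i _
      refine Fin.cases ?_ (fun i => ?_) i
      · simpa using hz
      · simpa using hd i
  refine le_trans (le_of_eq ?_) (measure_mono hsub)
  rw [image_add_left, measure_preimage_add, Measure.addHaar_image_linearMap, hdet,
    ENNReal.ofReal_mul (by positivity), ENNReal.ofReal_toReal hBt, mul_comm]

lemma clo_neg {n : ℕ} (A : Set (Eu n)) : closure (-A) = - closure A :=
  ((Homeomorph.neg (Eu n)).preimage_closure A).symm

lemma int_neg {n : ℕ} (A : Set (Eu n)) : interior (-A) = - interior A :=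
  ((Homeomorph.neg (Eu n)).preimage_interior A).symm

def cyl {n : ℕ} (v : Eu n) (K : Set (Eu n)) : Set (Eu n) := {x | projPerp v x ∈ projPerp v '' K}

def flo {n : ℕ} (v : Eu n) (K : Set (Eu n)) (x : Eu n) : ℝ :=
  sInf (hgt v '' (K ∩ {z | projPerp v z = projPerp v x}))

lemma flo_compact {n : ℕ} (v : Eu n) {K : Set (Eu n)} (hK : IsCompact K) (x : Eu n) :
    IsCompact (hgt v '' (K ∩ {z | projPerp v z = projPerp v x})) := by
  refine (hK.inter_right ?_).image (hgt v).continuous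
  exact isClosed_eq (proj_continuous v) continuous_const

lemma flo_le {n : ℕ} (v : Eu n) {K : Set (Eu n)} (hK : IsCompact K) {x z : Eu n} (hz : z ∈ K)
    (h : projPerp v z = projPerp v x) : flo v K x ≤ hgt v z :=
  csInf_le (flo_compact v hK x).bddBelow ⟨z, ⟨hz, h⟩, rfl⟩

lemma flo_mem {n : ℕ} (v : Eu n) {K : Set (Eu n)} (hK : IsCompact K) {x : Eu n} (hx : x ∈ cyl v K) :
    ∃ z ∈ K, projPerp v z = projPerp v x ∧ hgt v z = flo v K x := by
  obtain ⟨z, hz, hzx⟩ := hx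
  obtain ⟨w, ⟨h1, h2⟩, h3⟩ := (flo_compact v hK x).sInf_mem ⟨_, z, ⟨hz, hzx⟩, rfl⟩
  exact ⟨w, h1, h2, h3⟩

lemma flo_conv {n : ℕ} {v : Eu n} (hv : v ≠ 0) {K : Set (Eu n)} (hK : IsCompact K) (σ : Eu n → ℝ)
    (hc : Convex ℝ (shear v σ '' K)) :
    ConvexOn ℝ (cyl v K) (fun x => flo v K x + σ (projPerp v x)) := by
  have key : ∀ ⦃x⦄, x ∈ cyl v K → ∀ ⦃y⦄, y ∈ cyl v K → ∀ ⦃a b : ℝ⦄, 0 ≤ a → 0 ≤ b → a + b = 1 →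
      ∃ w ∈ K, projPerp v w = projPerp v (a • x + b • y) ∧
        hgt v w + σ (projPerp v w) = a * (flo v K x + σ (projPerp v x)) +
          b * (flo v K y + σ (projPerp v y)) := by
    intro x hx y hy a b ha hb hab
    obtain ⟨z1, h1, h2, h3⟩ := flo_mem v hK hx
    obtain ⟨z2, k1, k2, k3⟩ := flo_mem v hK hy
    obtain ⟨w, hw, h⟩ := hc ⟨z1, h1, rfl⟩ ⟨z2, k1, rfl⟩ ha hb hab
    refine ⟨w, hw, ?_, ?_⟩
    · have := congrArg (projPerp v) h
      rw [proj_shear hv, proj_add, proj_smul, proj_smul, proj_shear hv, proj_shear hv, h2, k2] at this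
      rw [this, proj_add, proj_smul, proj_smul]
    · have := congrArg (hgt v) h
      simp only [shear, map_add, map_smul, hgt_self hv, h2, k2, h3, k3, smul_eq_mul, mul_one] at this
      exact this
  refine ⟨?_, ?_⟩
  · intro x hx y hy a b ha hb hab
    obtain ⟨w, hw, h, -⟩ := key hx hy ha hb hab
    exact ⟨w, hw, h⟩
  · intro x hx y hy a b ha hb hab
    obtain ⟨w, hw, h, h'⟩ := key hx hy ha hb hab
    simp only [smul_eq_mul]
    rw [← h', ← h]
    have := flo_le v hK hw h
    linarith

structure SD {n : ℕ} (K : Set (Eu n)) (v : Eu n) (γ : Eu n → ℝ) : Prop where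
  hv : v ≠ 0
  hK : IsSymConvexBody K
  odd : ∀ x ∈ projPerp v '' K, γ (-x) = - γ x
  cp : Convex ℝ (shear v γ '' K)
  cm : Convex ℝ (shear v (fun x => - γ x) '' K)

lemma SD.neg {n : ℕ} {K : Set (Eu n)} {v : Eu n} {γ : Eu n → ℝ} (h : SD K v γ) :
    SD K v (fun x => - γ x) where
  hv := h.hv
  hK := h.hK
  odd := fun x hx => by rw [h.odd x hx]
  cp := h.cm
  cm := by simpa using h.cp

lemma zero_int {n : ℕ} {K : Set (Eu n)} (hK : IsSymConvexBody K) : (0 : Eu n) ∈ interior K := by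
  obtain ⟨x, hx⟩ := hK.2.2.1
  have hx' : -x ∈ interior K := by
    have : interior K = - interior K := by
      conv_lhs => rw [hK.2.2.2]
      exact (int_neg K)
    rw [this]; simpa using hx
  have := hK.2.1.interior hx hx' (a := 1/2) (b := 1/2) (by norm_num) (by norm_num) (by norm_num)
  simpa using this

lemma proj_zero {n : ℕ} (v : Eu n) : projPerp v (0 : Eu n) = 0 := by simp [projPerp]

lemma SD.zero {n : ℕ} {K : Set (Eu n)} {v : Eu n} {γ : Eu n → ℝ} (h : SD K v γ) : γ 0 = 0 := by
  have := h.odd 0 ⟨0, interior_subset (zero_int h.hK), proj_zero v⟩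
  simp at this; linarith

lemma SD.cont {n : ℕ} {K : Set (Eu n)} {v : Eu n} {γ : Eu n → ℝ} (h : SD K v γ) :
    ContinuousOn (fun x => γ (projPerp v x)) (interior (cyl v K)) := by
  have h1 := (flo_conv h.hv h.hK.1 γ h.cp).continuousOn_interior
  have h0 : Convex ℝ (shear v (fun _ => 0) '' K) := by
    have : shear v (fun _ => 0) = id := by ext1 x; simp [shear]
    rw [this, image_id]; exact h.hK.2.1
  have h2 := (flo_conv h.hv h.hK.1 _ h0).continuousOn_interior
  refine (h1.sub h2).congr fun x _ => ?_
  simp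

lemma cyl_proj {n : ℕ} {v : Eu n} {K : Set (Eu n)} {x y : Eu n}
    (h : y = x + (hgt v y - hgt v x) • v) (hv : v ≠ 0)
    (hx : x ∈ interior (cyl v K)) : y ∈ interior (cyl v K) := by
  set c := (hgt v y - hgt v x)
  have ho : IsOpen ((fun z => z - c • v) ⁻¹' (interior (cyl v K))) :=
    isOpen_interior.preimage (by fun_prop)
  refine interior_maximal (t := (fun z => z - c • v) ⁻¹' (interior (cyl v K))) ?_ ho ?_
  · intro z hz
    have := interior_subset (s := cyl v K) hz
    simp only [cyl, mem_setOf_eq] at this ⊢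
    have e := proj_add_smul hv (z - c • v) c
    rw [sub_add_cancel] at e
    rw [e]; exact this
  · simp only [mem_preimage]
    rw [h]; simpa using hx

lemma cyl_iff {n : ℕ} {v : Eu n} {K : Set (Eu n)} {x y : Eu n} (hv : v ≠ 0)
    (h : projPerp v x = projPerp v y) :
    x ∈ interior (cyl v K) ↔ y ∈ interior (cyl v K) := by
  rw [projPerp_eq, projPerp_eq] at h
  constructor
  · refine cyl_proj ?_ hv
    rw [sub_smul, ← sub_eq_zero]
    rw [← sub_eq_zero] at h
    rw [← neg_eq_zero, ← h]; abel
  · refine cyl_proj ?_ hv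
    rw [sub_smul, ← sub_eq_zero]
    rw [← sub_eq_zero] at h
    rw [← h]; abel

lemma proj_proj {n : ℕ} {v : Eu n} (hv : v ≠ 0) (x : Eu n) :
    projPerp v (projPerp v x) = projPerp v x := proj_of_mem v ⟨_, proj_mem hv x⟩

open Classical in
def gex {n : ℕ} (K : Set (Eu n)) (v : Eu n) (γ : Eu n → ℝ) : Eu n → ℝ :=
  (interior (cyl v K)).piecewise (fun x => γ (projPerp v x)) (fun _ => 0)

lemma gex_proj {n : ℕ} {K : Set (Eu n)} {v : Eu n} (hv : v ≠ 0) {γ : Eu n → ℝ} {x : Eu n}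
    (hx : x ∈ interior (cyl v K)) : gex K v γ (projPerp v x) = γ (projPerp v x) := by
  classical
  have : projPerp v x ∈ interior (cyl v K) := (cyl_iff hv (proj_proj hv x)).2 hx
  rw [gex, piecewise_eq_of_mem _ _ _ this, proj_proj hv]

lemma gex_neg {n : ℕ} {K : Set (Eu n)} {v : Eu n} {γ : Eu n → ℝ} :
    gex K v (fun x => - γ x) = fun x => - gex K v γ x := by
  classical
  ext x
  by_cases hx : x ∈ interior (cyl v K) <;> simp [gex, hx]

lemma SD.gex_meas {n : ℕ} {K : Set (Eu n)} {v : Eu n} {γ : Eu n → ℝ} (h : SD K v γ) :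
    Measurable (gex K v γ) := by
  classical
  exact h.cont.measurable_piecewise continuousOn_const isOpen_interior.measurableSet

lemma SD.shear_eq {n : ℕ} {K : Set (Eu n)} {v : Eu n} {γ : Eu n → ℝ} (h : SD K v γ)
    {x : Eu n} (hx : x ∈ interior (cyl v K)) : shear v (gex K v γ) x = shear v γ x := by
  rw [shear, gex_proj h.hv hx, shear]

lemma SD.shear_cont {n : ℕ} {K : Set (Eu n)} {v : Eu n} {γ : Eu n → ℝ} (h : SD K v γ) :
    ContinuousOn (shear v (gex K v γ)) (interior (cyl v K)) := by
  have : ContinuousOn (shear v γ) (interior (cyl v K)) := by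
    unfold shear
    exact continuousOn_id.add (h.cont.smul continuousOn_const)
  exact this.congr fun x hx => h.shear_eq hx

lemma SD.pre_open {n : ℕ} {K : Set (Eu n)} {v : Eu n} {γ : Eu n → ℝ} (h : SD K v γ)
    {O : Set (Eu n)} (hO : IsOpen O) (hsub : O ⊆ interior (cyl v K)) :
    IsOpen (shear v (gex K v γ) ⁻¹' O) := by
  have := h.shear_cont.isOpen_inter_preimage isOpen_interior hO
  convert this using 1
  refine (inter_eq_right.2 fun x hx => ?_).symm
  exact (cyl_iff h.hv (proj_shear h.hv _ x)).1 (hsub hx)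

lemma int_sub_cyl {n : ℕ} (K : Set (Eu n)) (v : Eu n) : interior K ⊆ interior (cyl v K) :=
  interior_mono fun x hx => ⟨x, hx, rfl⟩

lemma SD.pre_eq {n : ℕ} {K : Set (Eu n)} {v : Eu n} {γ : Eu n → ℝ} (h : SD K v γ) :
    shear v (gex K v γ) ⁻¹' (interior (shear v γ '' K)) = interior K := by
  have hsub : interior (shear v γ '' K) ⊆ interior (cyl v K) := by
    refine interior_mono ?_
    rintro _ ⟨x, hx, rfl⟩
    exact ⟨x, hx, (proj_shear h.hv _ _).symm⟩
  apply subset_antisymm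
  · refine interior_maximal ?_ (h.pre_open isOpen_interior hsub)
    intro u hu
    have hQ := hsub hu
    have hQu := (cyl_iff h.hv (proj_shear h.hv _ u)).1 hQ
    obtain ⟨w, hw, hwu⟩ := interior_subset hu
    rw [h.shear_eq hQu] at hwu
    have e1 := shear_shear h.hv γ (fun x => - γ x) u rfl
    have e2 := shear_shear h.hv γ (fun x => - γ x) w rfl
    rw [← e1, ← hwu, e2]; exact hw
  · intro x hx
    have ho := h.neg.pre_open (isOpen_interior (s := K)) (int_sub_cyl K v)
    refine interior_maximal ?_ ho ?_
    · intro y hy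
      have hQy := (cyl_iff h.hv (proj_shear h.hv _ y)).1 (int_sub_cyl K v hy)
      refine ⟨_, interior_subset hy, ?_⟩
      rw [h.neg.shear_eq hQy]
      exact shear_shear h.hv _ _ y (by simp)
    · rw [mem_preimage, gex_neg, shear_shear h.hv _ _ x rfl]; exact hx

lemma SD.sym {n : ℕ} {K : Set (Eu n)} {v : Eu n} {γ : Eu n → ℝ} (h : SD K v γ) :
    shear v γ '' K = - (shear v γ '' K) := by
  have key : ∀ x ∈ K, - shear v γ x ∈ shear v γ '' K := by
    intro x hx
    refine ⟨-x, ?_, ?_⟩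
    · rw [h.hK.2.2.2]; simpa using hx
    · rw [shear, proj_neg, h.odd _ ⟨x, hx, rfl⟩, shear, neg_smul]; abel
  apply subset_antisymm
  · rintro _ ⟨x, hx, rfl⟩; exact key x hx
  · intro y hy
    obtain ⟨x, hx, e⟩ := hy
    have := key x hx
    rwa [e, neg_neg] at this

lemma SD.bdd {n : ℕ} {K : Set (Eu n)} {v : Eu n} {γ : Eu n → ℝ} (h : SD K v γ) :
    Bornology.IsBounded (shear v γ '' K) := by
  have h0 := int_sub_cyl K v (zero_int h.hK)
  have hc : ContinuousAt (fun x => γ (projPerp v x)) 0 :=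
    h.cont.continuousAt (isOpen_interior.mem_nhds h0)
  obtain ⟨δ, hδ, hd⟩ := Metric.continuousAt_iff.1 hc 1 one_pos
  simp only [dist_zero_right, proj_zero, h.zero] at hd
  obtain ⟨R, hR0, hR⟩ := h.hK.1.isBounded.exists_pos_norm_le
  set l := min 1 (δ / (2 * R)) with hl
  have hl0 : 0 < l := by positivity
  have hl1 : l ≤ 1 := min_le_left _ _
  have hl2 : l * (2 * R) ≤ δ := by
    rw [← le_div_iff₀ (by positivity)]; exact min_le_right _ _
  refine (Metric.isBounded_closedBall (x := (0 : Eu n)) (r := (R + ‖v‖) / l)).subset ?_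
  rintro _ ⟨x, hx, rfl⟩
  have hz : (0 : Eu n) ∈ shear v γ '' K :=
    ⟨0, interior_subset (zero_int h.hK), by simp [shear, proj_zero, h.zero]⟩
  have hm := h.cp ⟨x, hx, rfl⟩ hz hl0.le (by linarith : 0 ≤ 1 - l) (by ring)
  rw [smul_zero, add_zero] at hm
  obtain ⟨w, hw, e⟩ := hm
  have hp : projPerp v w = projPerp v (l • x) := by
    have := congrArg (projPerp v) e
    rw [proj_shear h.hv, proj_smul, proj_shear h.hv] at this
    rw [this, proj_smul]
  have hlx : ‖l • x‖ < δ := by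
    rw [norm_smul, Real.norm_of_nonneg hl0.le]
    have := mul_le_mul_of_nonneg_left (hR x hx) hl0.le
    nlinarith [mul_pos hl0 hR0]
  have hb := hd hlx
  rw [← hp] at hb
  simp only [Real.norm_eq_abs] at hb
  have hn : ‖l • shear v γ x‖ ≤ R + ‖v‖ := by
    rw [← e, shear]
    refine (norm_add_le _ _).trans (add_le_add (hR w hw) ?_)
    rw [norm_smul, Real.norm_eq_abs]
    nlinarith [norm_nonneg v]
  rw [norm_smul, Real.norm_of_nonneg hl0.le] at hn
  rw [mem_closedBall_zero_iff, le_div_iff₀ hl0]; linarith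

lemma SD.body {n : ℕ} {K : Set (Eu n)} {v : Eu n} {γ : Eu n → ℝ} (h : SD K v γ) :
    IsSymConvexBody (closure (interior (shear v γ '' K))) := by
  have hb : Bornology.IsBounded (interior (shear v γ '' K)) := h.bdd.subset interior_subset
  refine ⟨hb.isCompact_closure, h.cp.interior.closure, ?_, ?_⟩
  · refine ⟨shear v (gex K v γ) 0, interior_maximal subset_closure isOpen_interior ?_⟩
    have := zero_int h.hK
    rw [← h.pre_eq] at this
    exact this
  · conv_lhs => rw [h.sym, int_neg, clo_neg]

def fam {n M : ℕ} {ι : Type} (c : ι → ℝ) (f : ι → Fin M) (x : Fin M → Eu n) : ι → Eu n :=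
  fun j => c j • x (f j)

def hh {n M : ℕ} {ι : Type} (c : ι → ℝ) (f : ι → Fin M) (V p : ℝ) (x : Fin M → Eu n) : ℝ :=
  ((volume (hull (fam c f x))).toReal / V) ^ p

def mom {n M : ℕ} {ι : Type} (c : ι → ℝ) (f : ι → Fin M) (K : Set (Eu n)) (p : ℝ) : ℝ :=
  (∫ x : Fin M → Eu n in {x | ∀ i, x i ∈ K}, hh c f (volume K).toReal p x) /
    (volume K).toReal ^ M

lemma fam_cont {n M : ℕ} {ι : Type} (c : ι → ℝ) (f : ι → Fin M) :
    Continuous (fam (n := n) c f) := by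
  unfold fam; fun_prop

lemma hh_meas {n M : ℕ} {ι : Type} [Fintype ι] (c : ι → ℝ) (f : ι → Fin M) (V p : ℝ) :
    Measurable (hh (n := n) c f V p) := by
  have h1 : Measurable fun x : Fin M → Eu n => volume (hull (fam c f x)) :=
    measurable_hull.comp (fam_cont c f).measurable
  exact ((h1.ennreal_toReal).div_const V).pow_const p

lemma hh_nonneg {n M : ℕ} {ι : Type} (c : ι → ℝ) (f : ι → Fin M) {V : ℝ} (hV : 0 ≤ V) (p : ℝ)
    (x : Fin M → Eu n) : 0 ≤ hh c f V p x := by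
  unfold hh; positivity

lemma hh_bdd {n M : ℕ} {ι : Type} [Fintype ι] {c : ι → ℝ} (hc : ∀ j, |c j| ≤ 1) (f : ι → Fin M)
    {V p : ℝ} (hV : 0 ≤ V) (hp : 1 ≤ p) {A : Set (Eu n)} (hA : Bornology.IsBounded A) :
    ∃ C : ℝ, ∀ x : Fin M → Eu n, (∀ i, x i ∈ A) → hh c f V p x ≤ C := by
  obtain ⟨R, hR0, hR⟩ := hA.exists_pos_norm_le
  refine ⟨((volume (Metric.closedBall (0 : Eu n) R)).toReal / V) ^ p, fun x hx => ?_⟩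
  unfold hh
  refine Real.rpow_le_rpow (by positivity) ?_ (by linarith)
  refine div_le_div_of_nonneg_right ?_ hV
  refine ENNReal.toReal_mono measure_closedBall_lt_top.ne (measure_mono ?_)
  refine convexHull_min ?_ (convex_closedBall _ _)
  rintro _ ⟨j, rfl⟩
  rw [mem_closedBall_zero_iff, fam, norm_smul, Real.norm_eq_abs]
  have := hR _ (hx (f j))
  nlinarith [hc j, abs_nonneg (c j), norm_nonneg (x (f j))]

lemma box_meas {n M : ℕ} {A : Set (Eu n)} (hA : MeasurableSet A) :
    MeasurableSet {x : Fin M → Eu n | ∀ i, x i ∈ A} := by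
  have : {x : Fin M → Eu n | ∀ i, x i ∈ A} = Set.pi univ fun _ => A := by ext; simp
  rw [this]; exact MeasurableSet.univ_pi fun _ => hA

lemma box_fin {n M : ℕ} {A : Set (Eu n)} (hA : volume A ≠ ∞) :
    volume {x : Fin M → Eu n | ∀ i, x i ∈ A} ≠ ∞ := by
  have : {x : Fin M → Eu n | ∀ i, x i ∈ A} = Set.pi univ fun _ => A := by ext; simp
  rw [this, volume_pi_pi]
  exact ENNReal.prod_ne_top fun _ _ => hA

lemma box_ae {n M : ℕ} {A B : Set (Eu n)} (h : A =ᵐ[volume] B) :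
    ({x : Fin M → Eu n | ∀ i, x i ∈ A} : Set _) =ᵐ[volume] {x : Fin M → Eu n | ∀ i, x i ∈ B} := by
  have e : ∀ A : Set (Eu n), {x : Fin M → Eu n | ∀ i, x i ∈ A} = Set.pi univ fun _ => A := by
    intro A; ext; simp
  rw [e, e, volume_pi]
  exact Measure.ae_eq_set_pi fun _ _ => h

lemma hh_int {n M : ℕ} {ι : Type} [Fintype ι] {c : ι → ℝ} (hc : ∀ j, |c j| ≤ 1) (f : ι → Fin M)
    {V p : ℝ} (hV : 0 ≤ V) (hp : 1 ≤ p) {A B : Set (Eu n)} (hA : Bornology.IsBounded A)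
    (hBm : MeasurableSet B) (hB : volume B ≠ ∞)
    (T : (Fin M → Eu n) → (Fin M → Eu n)) (hT : Measurable T)
    (hTB : ∀ x, (∀ i, x i ∈ B) → ∀ i, T x i ∈ A) :
    IntegrableOn (fun x => hh c f V p (T x)) {x : Fin M → Eu n | ∀ i, x i ∈ B} := by
  obtain ⟨C, hC⟩ := hh_bdd hc f hV hp hA
  refine Measure.integrableOn_of_bounded (M := C) (box_fin hB)
    ((hh_meas c f V p).comp hT).aestronglyMeasurable ?_
  refine (ae_restrict_iff' (box_meas hBm)).2 (ae_of_all _ fun x hx => ?_)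
  rw [Real.norm_of_nonneg (hh_nonneg c f hV p _)]
  exact hC _ (hTB x hx)

/-- the coordinatewise shear -/
def shM {n : ℕ} (M : ℕ) (v : Eu n) (g : Eu n → ℝ) (x : Fin M → Eu n) : Fin M → Eu n :=
  fun i => shear v g (x i)

lemma shM_meas {n M : ℕ} (v : Eu n) {g : Eu n → ℝ} (hg : Measurable g) :
    Measurable (shM M v g) :=
  measurable_pi_lambda _ fun i => (shear_measurable_s7 v hg).comp (measurable_pi_apply i)

lemma shM_integral {n M : ℕ} {v : Eu n} (hv : v ≠ 0) {g : Eu n → ℝ} (hg : Measurable g)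
    (U : Set (Eu n)) (F : (Fin M → Eu n) → ℝ) :
    ∫ x in {x : Fin M → Eu n | ∀ i, x i ∈ U}, F x =
      ∫ x in {x : Fin M → Eu n | ∀ i, x i ∈ shear v g ⁻¹' U}, F (shM M v g x) := by
  have h1 : MeasurePreserving (shM M v g) (volume : Measure (Fin M → Eu n)) volume := by
    rw [volume_pi]
    exact measurePreserving_pi _ _ fun _ => shear_mp hv hg
  have h2 : MeasurableEmbedding (shM M v g) :=
    (MeasurableEquiv.piCongrRight (fun _ : Fin M => shearEquiv hv hg)).measurableEmbedding
  exact (h1.setIntegral_preimage_emb h2 F _).symm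

lemma hh_convex {n M : ℕ} {ι : Type} [Fintype ι] (c : ι → ℝ) (f : ι → Fin M)
    {V p : ℝ} (hV : 0 ≤ V) (hp : 1 ≤ p) {v : Eu n} (hv : v ≠ 0) (g : Eu n → ℝ)
    (x : Fin M → Eu n) :
    2 * hh c f V p x ≤ hh c f V p (shM M v g x) + hh c f V p (shM M v (fun x => - g x) x) := by
  have h := rs_convex hv (fam c f x) (fun j => c j * g (projPerp v (x (f j))))
  have e1 : (fun j => fam c f x j + (c j * g (projPerp v (x (f j)))) • v) =
      fam c f (shM M v g x) := by
    ext1 j; simp only [fam, shM, shear, smul_add, smul_smul]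
  have e2 : (fun j => fam c f x j + (-(c j * g (projPerp v (x (f j))))) • v) =
      fam c f (shM M v (fun x => - g x) x) := by
    ext1 j; simp only [fam, shM, shear, smul_add, smul_smul, mul_neg]
  rw [e1, e2] at h
  have h' := ENNReal.toReal_mono (ENNReal.add_ne_top.2 ⟨hull_vol_ne_top _, hull_vol_ne_top _⟩) h
  rw [ENNReal.toReal_add (hull_vol_ne_top _) (hull_vol_ne_top _), ENNReal.toReal_mul] at h'
  simp only [ENNReal.toReal_ofNat] at h'
  unfold hh
  set u := (volume (hull (fam c f (shM M v g x)))).toReal with hu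
  set w := (volume (hull (fam c f (shM M v (fun x => - g x) x)))).toReal with hw
  set z := (volume (hull (fam c f x))).toReal with hz
  have hu0 : 0 ≤ u / V := by positivity
  have hw0 : 0 ≤ w / V := by positivity
  have hz0 : 0 ≤ z / V := by positivity
  have hle : z / V ≤ (1/2 : ℝ) * (u / V) + (1/2 : ℝ) * (w / V) := by
    have : z ≤ (1/2 : ℝ) * u + 1/2 * w := by linarith
    have := div_le_div_of_nonneg_right this hV
    calc _ ≤ _ := this
      _ = _ := by ring
  have h3 := (convexOn_rpow hp).2 (mem_Ici.2 hu0) (mem_Ici.2 hw0)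
    (by norm_num : (0:ℝ) ≤ 1/2) (by norm_num : (0:ℝ) ≤ 1/2) (by norm_num)
  simp only [smul_eq_mul] at h3
  have h4 := Real.rpow_le_rpow hz0 hle (by linarith : 0 ≤ p)
  linarith

lemma conv_ae {n : ℕ} {U : Set (Eu n)} (hU : Convex ℝ U) (ho : IsOpen U) :
    closure U =ᵐ[volume] U := by
  refine (ae_eq_set.2 ⟨?_, ?_⟩)
  · have := hU.addHaar_frontier volume
    rwa [frontier, ho.interior_eq] at this
  · rw [diff_eq_empty.2 subset_closure]; simp

lemma int_ae {n : ℕ} {K : Set (Eu n)} (hK : Convex ℝ K) (hc : IsCompact K) :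
    K =ᵐ[volume] interior K := by
  refine (ae_eq_set.2 ⟨?_, ?_⟩)
  · have := hK.addHaar_frontier volume
    rwa [frontier, hc.isClosed.closure_eq] at this
  · rw [diff_eq_empty.2 interior_subset]; simp

lemma SD.mom_le {n M : ℕ} {ι : Type} [Fintype ι] (c : ι → ℝ) (f : ι → Fin M)
    {p : ℝ} {K : Set (Eu n)} {v : Eu n} {γ : Eu n → ℝ} (h : SD K v γ)
    (hmax : ∀ K' : Set (Eu n), IsSymConvexBody K' → mom c f K' p ≤ mom c f K p) :
    ∫ x in {x : Fin M → Eu n | ∀ i, x i ∈ interior K},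
        hh c f (volume K).toReal p (shM M v (gex K v γ) x) ≤
      ∫ x in {x : Fin M → Eu n | ∀ i, x i ∈ interior K}, hh c f (volume K).toReal p x := by
  set U := interior (shear v γ '' K) with hU
  have hUc : Convex ℝ U := h.cp.interior
  have hUo : IsOpen U := isOpen_interior
  have a1 := conv_ae hUc hUo
  have a2 := int_ae h.hK.2.1 h.hK.1
  have hvol : volume (closure U) = volume K := by
    rw [measure_congr a1, measure_congr a2, ← h.pre_eq,
      (shear_mp h.hv h.gex_meas).measure_preimage hUo.measurableSet.nullMeasurableSet]
  have hm := hmax _ h.body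
  rw [← hU] at hm
  unfold mom at hm
  rw [hvol] at hm
  have hpos : 0 < (volume K).toReal := by
    refine ENNReal.toReal_pos ?_ h.hK.1.measure_lt_top.ne
    exact (Measure.measure_pos_of_nonempty_interior _ h.hK.2.2.1).ne'
  rw [div_le_div_iff_of_pos_right (by positivity)] at hm
  rw [setIntegral_congr_set (box_ae a1), setIntegral_congr_set (box_ae a2),
    shM_integral h.hv h.gex_meas, h.pre_eq] at hm
  exact hm

lemma SD.main4 {n M : ℕ} {ι : Type} [Fintype ι] {c : ι → ℝ} (hc : ∀ j, |c j| ≤ 1) (f : ι → Fin M)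
    {p : ℝ} (hp : 1 ≤ p) {K : Set (Eu n)} {v : Eu n} {γ : Eu n → ℝ} (h : SD K v γ)
    (hmax : ∀ K' : Set (Eu n), IsSymConvexBody K' → mom c f K' p ≤ mom c f K p)
    (d : (Fin M → Eu n) → (Fin n → Eu n)) (hd : Continuous d) (z0 : (Fin M → Eu n) → Eu n)
    (hz0 : ∀ x, z0 x ∈ hull (fam c f x)) (hzd : ∀ x i, z0 x + d x i ∈ hull (fam c f x))
    (x0 : Fin M → Eu n) (hx0 : ∀ i, x0 i ∈ interior K) (hdeg : volume (hull (fam c f x0)) = 0) :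
    dete (d (fun i => shear v γ (x0 i))) = 0 := by
  by_contra hne
  obtain ⟨κ, hκ, hlow⟩ := hull_lower (n := n)
  set V := (volume K).toReal with hVdef
  have hV : 0 < V := by
    refine ENNReal.toReal_pos ?_ h.hK.1.measure_lt_top.ne
    exact (Measure.measure_pos_of_nonempty_interior _ h.hK.2.2.1).ne'
  set S := {x : Fin M → Eu n | ∀ i, x i ∈ interior K} with hS
  have hSo : IsOpen S := by
    have : S = Set.pi univ fun _ => interior K := by ext; simp [hS]
    rw [this]; exact isOpen_set_pi finite_univ fun _ _ => isOpen_interior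
  set Tp := shM M v (gex K v γ) with hTp
  set Tm := shM M v (fun x => - gex K v γ x) with hTm
  have ip := h.mom_le c f hmax
  have im := h.neg.mom_le c f hmax
  rw [gex_neg] at im
  have hfin : volume (interior K) ≠ ∞ := (measure_mono interior_subset).trans_lt h.hK.1.measure_lt_top |>.ne
  have hom : MeasurableSet (interior K) := isOpen_interior.measurableSet
  have I0 : IntegrableOn (fun x => hh c f V p x) S :=
    hh_int hc f hV.le hp (h.hK.1.isBounded.subset interior_subset) hom hfin id measurable_id
      (fun x hx => hx)
  have Ip : IntegrableOn (fun x => hh c f V p (Tp x)) S := by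
    refine hh_int hc f hV.le hp (h.bdd.subset interior_subset) hom hfin _ (shM_meas v h.gex_meas) ?_
    intro x hx i
    have := hx i
    rw [← h.pre_eq] at this
    exact this
  have Im : IntegrableOn (fun x => hh c f V p (Tm x)) S := by
    refine hh_int hc f hV.le hp (h.neg.bdd.subset interior_subset) hom hfin _
      (shM_meas v h.gex_meas.neg) ?_
    intro x hx i
    have := hx i
    rw [← h.neg.pre_eq, gex_neg] at this
    exact this
  let G : (Fin M → Eu n) → ℝ := fun x => (hh c f V p (Tp x) + hh c f V p (Tm x)) - 2 * hh c f V p x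
  have hG0 : ∀ x, 0 ≤ G x := fun x => by
    have := hh_convex c f hV.le hp h.hv (gex K v γ) x
    simp only [G]; linarith
  have IG : IntegrableOn G S := (Ip.add Im).sub (I0.const_mul 2)
  have hGi : ∫ x in S, G x = 0 := by
    apply le_antisymm _ (integral_nonneg hG0)
    have e : ∫ x in S, G x = ((∫ x in S, hh c f V p (Tp x)) + ∫ x in S, hh c f V p (Tm x)) -
        2 * ∫ x in S, hh c f V p x := by
      simp only [G]
      have Ipm : IntegrableOn (fun x => hh c f V p (Tp x) + hh c f V p (Tm x)) S := Ip.add Im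
      have I2 : IntegrableOn (fun x => 2 * hh c f V p x) S := I0.const_mul 2
      rw [integral_sub Ipm I2, integral_add Ip Im, integral_const_mul]
    rw [e]; linarith
  have hGae := (integral_eq_zero_iff_of_nonneg hG0 IG).1 hGi
  have hae : volume ({x | ¬ G x = 0} ∩ S) = 0 := by
    rw [← Measure.restrict_apply' hSo.measurableSet]
    exact hGae
  have hpos : 0 < volume ({x | ¬ G x = 0} ∩ S) := by
    refine Measure.measure_pos_of_mem_nhds _ ?_ (x := x0)
    refine inter_mem ?_ (hSo.mem_nhds hx0)
    have hTc : ContinuousAt Tp x0 := by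
      refine continuousAt_pi.2 fun i => ?_
      have hq := int_sub_cyl K v (hx0 i)
      exact ContinuousAt.comp (f := fun x : Fin M → Eu n => x i)
        (h.shear_cont.continuousAt (isOpen_interior.mem_nhds hq)) (continuous_apply i).continuousAt
    have hTx : Tp x0 = fun i => shear v γ (x0 i) :=
      funext fun i => h.shear_eq (int_sub_cyl K v (hx0 i))
    have hdc : ContinuousAt (fun x => |dete (d (Tp x))|) x0 :=
      continuous_abs.continuousAt.comp
        ((dete_cont.comp hd).continuousAt.comp (f := Tp) hTc)
    set m := |dete (d (Tp x0))| / 2 with hm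
    have hm0 : 0 < m := by
      have : 0 < |dete (d (Tp x0))| := by rw [hTx]; exact abs_pos.2 hne
      linarith
    have ev1 : ∀ᶠ x in 𝓝 x0, m < |dete (d (Tp x))| :=
      hdc.eventually_const_lt (by linarith)
    set η := (κ * m / V) ^ p with hη
    have hη0 : 0 < η := by positivity
    have ht : Tendsto (fun x => hh c f V p x) (𝓝 x0) (𝓝 0) := by
      have t1 := (hull_usc _ hdeg).comp (fam_cont c f).continuousAt
      have t2 := (ENNReal.tendsto_toReal (by simp : (0 : ℝ≥0∞) ≠ ∞)).comp t1
      have t3 := (t2.div_const V).rpow_const (p := p) (Or.inr (by linarith))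
      simp only [ENNReal.toReal_zero, zero_div] at t3
      rw [Real.zero_rpow (by linarith)] at t3
      exact t3
    have ev2 : ∀ᶠ x in 𝓝 x0, hh c f V p x < η / 2 := ht.eventually_lt_const (by linarith)
    filter_upwards [ev1, ev2] with x h1 h2
    have h3 : η ≤ hh c f V p (Tp x) := by
      refine Real.rpow_le_rpow (by positivity) ?_ (by linarith)
      refine div_le_div_of_nonneg_right ?_ hV.le
      have := hlow _ _ (d (Tp x)) (convex_convexHull ℝ _) (hz0 (Tp x)) (hzd (Tp x))
      have := (ENNReal.ofReal_le_iff_le_toReal (hull_vol_ne_top _)).1 this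
      refine le_trans ?_ this
      exact mul_le_mul_of_nonneg_left h1.le hκ.le
    have h4 := hh_nonneg c f hV.le p (Tm x)
    have : 0 < G x := by simp only [G]; linarith
    exact this.ne'
  exact hpos.ne' hae

def prL {n : ℕ} (v : Eu n) : Eu n →ₗ[ℝ] Eu n where
  toFun := projPerp v
  map_add' := proj_add v
  map_smul' := fun c x => proj_smul v x c

lemma prL_apply {n : ℕ} (v x : Eu n) : prL v x = projPerp v x := rfl

/-- the degeneracy property -/
def DegP {n : ℕ} (K : Set (Eu n)) (v : Eu n) (γ : Eu n → ℝ) : Prop :=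
  ∀ z : Fin n → Eu n, (∀ i, z i ∈ interior K) → ∀ W : Submodule ℝ (Eu n), W ≠ ⊤ →
    (∀ i, z i ∈ W) → ¬ LinearIndependent ℝ (fun i => shear v γ (z i))

lemma key_step {k : ℕ} {K : Set (Eu (k + 1))} {v : Eu (k + 1)} {γ : Eu (k + 1) → ℝ}
    (hv : v ≠ 0) (star : DegP K v γ) (b : Module.Basis (Fin k) ℝ (Hyp v))
    (m ℓ : Eu (k + 1) →ₗ[ℝ] ℝ) (t : ℝ) (ht : t ≠ 0)
    (hm : ∀ i, t • ((b i : Eu (k + 1)) + m (b i) • v) ∈ interior K)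
    (hγ : ∀ i, γ (t • (b i : Eu (k + 1))) = t * ℓ (b i))
    (x : Eu (k + 1)) (hx : x ∈ interior K) (hxm : hgt v x = m (projPerp v x)) :
    γ (projPerp v x) = ℓ (projPerp v x) := by
  set tl : Fin k → Eu (k + 1) := fun i => t • ((b i : Eu (k + 1)) + m (b i) • v) with htl
  have hptl : ∀ i, projPerp v (tl i) = t • (b i : Eu (k + 1)) := fun i => by
    rw [htl]; simp only; rw [proj_smul, proj_add_smul hv, proj_of_mem]
  have hgtl : ∀ i, hgt v (tl i) = t * m (b i) := fun i => by
    have : hgt v (b i : Eu (k + 1)) = 0 := (b i).2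
    simp [htl, this, hgt_self hv]
  let L : (Eu (k + 1) →ₗ[ℝ] ℝ) → Eu (k + 1) →ₗ[ℝ] ℝ :=
    fun q => (hgt v : Eu (k + 1) →ₗ[ℝ] ℝ) - q ∘ₗ prL v
  have hL : ∀ q x, L q x = hgt v x - q (projPerp v x) := fun q x => rfl
  have hst : ∀ i, shear v γ (tl i) = tl i + (t * ℓ (b i)) • v := fun i => by
    rw [shear, hptl, hγ]
  have h1 := star (Fin.cons x tl) (fun i => by
      refine Fin.cases ?_ (fun i => ?_) i
      · simpa using hx
      · rw [Fin.cons_succ]; exact hm i) (LinearMap.ker (L m)) (fun e => by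
      have : v ∈ LinearMap.ker (L m) := by rw [e]; trivial
      rw [LinearMap.mem_ker, hL, hgt_self hv, proj_self hv, map_zero] at this
      norm_num at this) (fun i => by
      rw [LinearMap.mem_ker, hL]
      refine Fin.cases ?_ (fun i => ?_) i
      · simp only [Fin.cons_zero]; rw [hxm, sub_self]
      · simp only [Fin.cons_succ]; rw [hptl, hgtl, map_smul, smul_eq_mul, sub_self])
  have e : (fun i => shear v γ ((Fin.cons x tl : Fin (k + 1) → Eu (k + 1)) i)) =
      Fin.cons (shear v γ x) (fun i => shear v γ (tl i)) := by
    funext i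
    refine Fin.cases ?_ (fun i => ?_) i <;> simp
  rw [e, linearIndependent_finCons] at h1
  have hli : LinearIndependent ℝ (fun i => shear v γ (tl i)) := by
    refine LinearIndependent.of_comp (prL v) ?_
    have : (prL v ∘ fun i => shear v γ (tl i)) = fun i => t • (b i : Eu (k + 1)) := by
      funext i
      simp only [Function.comp_apply, prL_apply]
      rw [proj_shear hv, hptl]
    rw [this]
    have hb : LinearIndependent ℝ (fun i => (b i : Eu (k + 1))) :=
      b.linearIndependent.map' (Hyp v).subtype (Submodule.ker_subtype _)
    exact hb.units_smul (fun _ => Units.mk0 t ht)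
  have hmem : shear v γ x ∈ Submodule.span ℝ (range fun i => shear v γ (tl i)) := by
    by_contra hc; exact h1 ⟨hli, hc⟩
  have hsub : Submodule.span ℝ (range fun i => shear v γ (tl i)) ≤ LinearMap.ker (L (m + ℓ)) := by
    rw [Submodule.span_le]
    rintro _ ⟨i, rfl⟩
    simp only [SetLike.mem_coe, LinearMap.mem_ker, hL]
    rw [proj_shear hv, hst, hptl, map_add, hgtl, map_smul, map_smul, hgt_self hv]
    simp only [LinearMap.add_apply, smul_eq_mul]; ring
  have := hsub hmem
  rw [LinearMap.mem_ker, hL, proj_shear hv, shear, map_add, map_smul, hgt_self hv, hxm] at this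
  simp only [LinearMap.add_apply, smul_eq_mul] at this
  linarith

lemma exists_small {n k : ℕ} {K : Set (Eu n)} (hK : (0 : Eu n) ∈ interior K) (u : Fin k → Eu n) :
    ∃ t : ℝ, 0 < t ∧ t ≤ 1 ∧ ∀ i, t • u i ∈ interior K := by
  have h : ∀ i, ∀ᶠ t : ℝ in 𝓝[>] 0, t • u i ∈ interior K := fun i => by
    have hc : ContinuousAt (fun t : ℝ => t • u i) 0 := by fun_prop
    have : interior K ∈ 𝓝 ((fun t : ℝ => t • u i) 0) := by
      simpa using isOpen_interior.mem_nhds hK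
    exact nhdsWithin_le_nhds (hc this)
  have h2 : ∀ᶠ t : ℝ in 𝓝[>] 0, t ≤ 1 :=
    nhdsWithin_le_nhds (Iic_mem_nhds (by norm_num))
  obtain ⟨t, h1, h2, h3⟩ := ((eventually_all.2 h).and (h2.and self_mem_nhdsWithin)).exists
  exact ⟨t, h3, h2, h1⟩

lemma star_int {k : ℕ} {K : Set (Eu (k + 1))} {v : Eu (k + 1)} {γ : Eu (k + 1) → ℝ}
    (h : SD K v γ) (star : DegP K v γ) :
    ∃ ℓ : Eu (k + 1) →ₗ[ℝ] ℝ, ∀ x ∈ interior K, γ (projPerp v x) = ℓ (projPerp v x) := by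
  have hv := h.hv
  have h0 := zero_int h.hK
  have hfr : Module.finrank ℝ (Hyp v) = k := by
    have h1 := LinearMap.finrank_range_add_finrank_ker (hgt v : Eu (k + 1) →ₗ[ℝ] ℝ)
    have h2 : LinearMap.range (hgt v : Eu (k + 1) →ₗ[ℝ] ℝ) = ⊤ := by
      rw [LinearMap.range_eq_top]
      intro r
      exact ⟨r • v, by simp [hgt_self hv]⟩
    rw [h2, finrank_top, finrank_euclideanSpace_fin, Module.finrank_self] at h1
    have : Module.finrank ℝ (Hyp v) =
      Module.finrank ℝ (LinearMap.ker (hgt v : Eu (k + 1) →ₗ[ℝ] ℝ)) := rfl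
    omega
  let b0 : Module.Basis (Fin k) ℝ (Hyp v) := Module.finBasisOfFinrankEq ℝ _ hfr
  obtain ⟨t0, ht0, -, hb0⟩ := exists_small h0 (fun i => (b0 i : Eu (k + 1)))
  let b : Module.Basis (Fin k) ℝ (Hyp v) := b0.unitsSMul (fun _ => Units.mk0 t0 ht0.ne')
  have hb : ∀ i, (b i : Eu (k + 1)) ∈ interior K := fun i => by
    have : (b i : Eu (k + 1)) = t0 • (b0 i : Eu (k + 1)) := by
      simp only [b, Module.Basis.unitsSMul_apply]; rfl
    rw [this]; exact hb0 i
  let ℓ0 : Hyp v →ₗ[ℝ] ℝ := b.constr ℝ (fun i => γ (b i : Eu (k + 1)))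
  let pH : Eu (k + 1) →ₗ[ℝ] Hyp v := (prL v).codRestrict (Hyp v) (fun x => proj_mem hv x)
  let ℓ : Eu (k + 1) →ₗ[ℝ] ℝ := ℓ0 ∘ₗ pH
  have hℓ : ∀ y : Hyp v, ℓ (y : Eu (k + 1)) = ℓ0 y := fun y => by
    have : pH (y : Eu (k + 1)) = y := Subtype.ext (proj_of_mem v y)
    simp only [ℓ, LinearMap.comp_apply, this]
  have hℓb : ∀ i, ℓ (b i : Eu (k + 1)) = γ (b i : Eu (k + 1)) := fun i => by
    rw [hℓ]; exact b.constr_basis ℝ _ i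
  refine ⟨ℓ, ?_⟩
  have s1 : ∀ y : Hyp v, (y : Eu (k + 1)) ∈ interior K → γ (y : Eu (k + 1)) = ℓ (y : Eu (k + 1)) := by
    intro y hy
    have := key_step hv star b 0 ℓ 1 one_ne_zero (fun i => by simpa using hb i)
      (fun i => by rw [one_smul, one_mul, hℓb]) y hy (by
        have : hgt v (y : Eu (k + 1)) = 0 := y.2
        simpa using this)
    rwa [proj_of_mem] at this
  intro x hx
  by_cases hy : projPerp v x = 0
  · rw [hy, h.zero, map_zero]
  obtain ⟨m, hm⟩ : ∃ m : Eu (k + 1) →ₗ[ℝ] ℝ, hgt v x = m (projPerp v x) := by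
    refine ⟨(hgt v x) • (hgt (projPerp v x) : Eu (k + 1) →ₗ[ℝ] ℝ), ?_⟩
    have := hgt_self hy
    simp [this]
  obtain ⟨t, ht, ht1, htm⟩ := exists_small h0 (fun i => (b i : Eu (k + 1)) + m (b i) • v)
  refine key_step hv star b m ℓ t ht.ne' htm (fun i => ?_) x hx hm
  have hi : t • (b i : Eu (k + 1)) ∈ interior K := by
    have := h.hK.2.1.interior h0 (hb i) (by linarith : 0 ≤ 1 - t) ht.le (by ring)
    simpa using this
  have := s1 (t • b i) hi
  rw [Submodule.coe_smul] at this
  rw [this, map_smul, smul_eq_mul]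

lemma star_lin {k : ℕ} {K : Set (Eu (k + 1))} {v : Eu (k + 1)} {γ : Eu (k + 1) → ℝ}
    (h : SD K v γ) (star : DegP K v γ) :
    ∃ ℓ : Eu (k + 1) →ₗ[ℝ] ℝ, ∀ x ∈ projPerp v '' K, γ x = ℓ x := by
  obtain ⟨ℓ, hℓ⟩ := star_int h star
  refine ⟨ℓ, ?_⟩
  have hv := h.hv
  have h0 := zero_int h.hK
  rintro _ ⟨x, hx, rfl⟩
  set y := projPerp v x with hy
  set D := γ y - ℓ y with hD
  have step : ∀ w ∈ K, projPerp v w = y → w + D • v ∈ K := by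
    intro w hw hwy
    have hin : ∀ l ∈ Ico (0:ℝ) 1, l • (w + D • v) ∈ K := by
      intro l hl
      have hz : (0 : Eu (k + 1)) ∈ shear v γ '' K :=
        ⟨0, interior_subset h0, by simp [shear, proj_zero, h.zero]⟩
      have hm := h.cp ⟨w, hw, rfl⟩ hz hl.1 (by linarith [hl.2] : 0 ≤ 1 - l) (by ring)
      rw [smul_zero, add_zero] at hm
      obtain ⟨u, hu, e⟩ := hm
      have hpu : projPerp v u = l • y := by
        have := congrArg (projPerp v) e
        rw [proj_shear hv, proj_smul, proj_shear hv, hwy] at this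
        exact this
      have hlw : l • w ∈ interior K := by
        have := h.hK.2.1.combo_interior_self_mem_interior h0 hw (by linarith [hl.2] : 0 < 1 - l)
          hl.1 (by ring)
        simpa using this
      have hg := hℓ _ hlw
      rw [proj_smul, hwy, map_smul, smul_eq_mul] at hg
      rw [shear, hpu, hg, shear, hwy] at e
      have : l • (w + D • v) = u := by
        have : u = l • (w + γ y • v) - (l * ℓ y) • v := by rw [← e]; abel
        rw [this, hD]; module
      rw [this]; exact hu
    have ht : Tendsto (fun l : ℝ => l • (w + D • v)) (𝓝[<] 1) (𝓝 (w + D • v)) := by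
      have hc : ContinuousAt (fun l : ℝ => l • (w + D • v)) 1 := by fun_prop
      have := hc.tendsto.mono_left (nhdsWithin_le_nhds (s := Iio 1))
      simpa using this
    refine h.hK.1.isClosed.mem_of_tendsto ht ?_
    filter_upwards [Ico_mem_nhdsLT (by norm_num : (0:ℝ) < 1)] with l hl using hin l hl
  have iter : ∀ j : ℕ, x + (j * D) • v ∈ K := by
    intro j
    induction j with
    | zero => simpa using hx
    | succ j ih =>
      have := step _ ih (proj_add_smul hv _ _)
      convert this using 1
      push_cast; module
  obtain ⟨R, hR0, hR⟩ := h.hK.1.isBounded.exists_pos_norm_le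
  by_contra hne
  have hD0 : 0 < |D| * ‖v‖ := mul_pos (abs_pos.2 (sub_ne_zero.2 hne)) (norm_pos_iff.2 hv)
  obtain ⟨j, hj⟩ := exists_nat_gt (2 * R / (|D| * ‖v‖))
  rw [div_lt_iff₀ hD0] at hj
  have a1 := hR _ (iter j)
  have a2 := hR _ hx
  have a3 : ‖((j : ℝ) * D) • v‖ ≤ ‖x + ((j:ℝ) * D) • v‖ + ‖x‖ := by
    have := norm_sub_le (x + ((j:ℝ) * D) • v) x
    simpa using this
  rw [norm_smul, Real.norm_eq_abs, abs_mul, Nat.abs_cast] at a3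
  nlinarith

lemma star_U {n N : ℕ} (hN : n ≤ N) {p : ℝ} (hp : 1 ≤ p) {K : Set (Eu n)} {v : Eu n}
    {γ : Eu n → ℝ} (h : SD K v γ)
    (hmax : ∀ K' : Set (Eu n), IsSymConvexBody K' → momentU n (N + 1) K' p ≤ momentU n (N + 1) K p) :
    DegP K v γ := by
  intro z hz W hW hzW hli
  have e : ∀ x : Fin (N + 1) → Eu n, fam (fun _ => (1:ℝ)) id x = x := fun x => by
    funext j; simp [fam]
  have em : ∀ K' : Set (Eu n), momentU n (N + 1) K' p =
      mom (fun _ : Fin (N + 1) => (1:ℝ)) id K' p := fun K' => by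
    simp only [momentU, mom, hh, e, hull]
  let x0 : Fin (N + 1) → Eu n := Fin.cons 0 (fun i : Fin N => if hi : (i : ℕ) < n then z ⟨i, hi⟩ else 0)
  have hx0 : ∀ A : Set (Eu n), 0 ∈ A → (∀ i, z i ∈ A) → ∀ i, x0 i ∈ A := by
    intro A h0 hA i
    refine Fin.cases h0 (fun i => ?_) i
    simp only [x0, Fin.cons_succ]
    split_ifs
    · exact hA _
    · exact h0
  have := h.main4 (c := fun _ : Fin (N + 1) => (1:ℝ)) (by simp) id hp
    (fun K' hK' => by rw [← em, ← em]; exact hmax K' hK')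
    (fun x i => x (Fin.succ (Fin.castLE hN i)) - x 0) (by fun_prop) (fun x => x 0)
    (fun x => by rw [e]; exact subset_convexHull ℝ _ ⟨0, rfl⟩)
    (fun x i => by rw [e]; simp only [add_sub_cancel]; exact subset_convexHull ℝ _ ⟨_, rfl⟩)
    x0 (hx0 _ (zero_int h.hK) hz) (by
      refine measure_mono_null ?_ (Measure.addHaar_submodule volume W hW)
      rw [e]
      refine convexHull_min ?_ W.convex
      rintro _ ⟨i, rfl⟩
      exact hx0 W W.zero_mem hzW i)
  refine dete_ne ?_ this
  convert hli using 2 with i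
  simp [x0, shear, proj_zero, h.zero]

lemma star_V {n N : ℕ} (hn : 0 < n) (hN : n ≤ N) {p : ℝ} (hp : 1 ≤ p) {K : Set (Eu n)} {v : Eu n}
    {γ : Eu n → ℝ} (h : SD K v γ)
    (hmax : ∀ K' : Set (Eu n), IsSymConvexBody K' → momentV n N K' p ≤ momentV n N K p) :
    DegP K v γ := by
  intro z hz W hW hzW hli
  let c : Fin N ⊕ Fin N → ℝ := Sum.elim (fun _ => 1) (fun _ => -1)
  let f : Fin N ⊕ Fin N → Fin N := Sum.elim id id
  have e : ∀ x : Fin N → Eu n, range (fam c f x) = range x ∪ - range x := fun x => by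
    ext y
    simp only [Set.mem_range, Set.mem_union, Set.mem_neg, Sum.exists, fam, c, f, Sum.elim_inl,
      Sum.elim_inr, one_smul, id, neg_smul, neg_eq_iff_eq_neg, eq_neg_iff_add_eq_zero]
  have em : ∀ K' : Set (Eu n), momentV n N K' p = mom c f K' p := fun K' => by
    simp only [momentV, mom, hh, e, hull]
  let x0 : Fin N → Eu n := fun i : Fin N => if hi : (i : ℕ) < n then z ⟨i, hi⟩ else 0
  have hx0 : ∀ A : Set (Eu n), 0 ∈ A → (∀ i, z i ∈ A) → ∀ i, x0 i ∈ A := by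
    intro A h0 hA i
    simp only [x0]
    split_ifs
    · exact hA _
    · exact h0
  have hl : ∀ (x : Fin N → Eu n) i, x i ∈ hull (fam c f x) := fun x i => by
    refine subset_convexHull ℝ _ ?_
    rw [e]; exact Or.inl ⟨i, rfl⟩
  have hr : ∀ (x : Fin N → Eu n) i, - x i ∈ hull (fam c f x) := fun x i => by
    refine subset_convexHull ℝ _ ?_
    rw [e]; exact Or.inr ⟨i, by simp⟩
  have := h.main4 (c := c) (by rintro (j | j) <;> simp [c]) f hp
    (fun K' hK' => by rw [← em, ← em]; exact hmax K' hK')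
    (fun x i => x (Fin.castLE hN i)) (by fun_prop) (fun x => 0)
    (fun x => by
      have := (convex_convexHull ℝ (range (fam c f x))) (hl x ⟨0, by omega⟩) (hr x ⟨0, by omega⟩)
        (by norm_num : (0:ℝ) ≤ 1/2) (by norm_num : (0:ℝ) ≤ 1/2) (by norm_num)
      simpa [hull] using this)
    (fun x i => by rw [zero_add]; exact hl x _)
    x0 (hx0 _ (zero_int h.hK) hz) (by
      refine measure_mono_null ?_ (Measure.addHaar_submodule volume W hW)
      refine convexHull_min ?_ W.convex
      rintro _ ⟨i, rfl⟩
      exact W.smul_mem _ (hx0 W W.zero_mem hzW _))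
  refine dete_ne ?_ this
  convert hli using 2 with i
  simp [x0]

/-- Let `p ≥ 1` and `N ≥ n`.  If a symmetric convex body `K ⊆ ℝⁿ` maximizes
`𝔼 U_{K, N+1}^p` or maximizes `𝔼 V_{K, N}^p` among all symmetric convex bodies in `ℝⁿ`,
then `K` is SRS-indecomposable. -/
theorem maximizer_not_SRSDecomposable
    {n : ℕ} (p : ℝ) (hp : 1 ≤ p) (N : ℕ) (hN : n ≤ N)
    (K : Set (EuclideanSpace ℝ (Fin n))) (hK : IsSymConvexBody K)
    (hmax : (∀ K' : Set (EuclideanSpace ℝ (Fin n)), IsSymConvexBody K' →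
              momentU n (N + 1) K' p ≤ momentU n (N + 1) K p) ∨
            (∀ K' : Set (EuclideanSpace ℝ (Fin n)), IsSymConvexBody K' →
              momentV n N K' p ≤ momentV n N K p)) :
    ¬ IsSRSDecomposable K := by
  rintro ⟨v, β, ε, hε, hv, hodd, hconv, hnl⟩
  have sd : SD K v (fun x => ε / 2 * β x) :=
    { hv := hv
      hK := hK
      odd := fun x hx => by simp only [hodd x hx]; ring
      cp := hconv (ε / 2) ⟨by linarith, by linarith⟩
      cm := by
        have := hconv (-(ε / 2)) ⟨by linarith, by linarith⟩
        unfold RSFamily at this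
        simp only [neg_mul] at this
        exact this }
  have hn : 0 < n := by
    rcases Nat.eq_zero_or_pos n with rfl | hn
    · exact absurd (Subsingleton.elim v 0) hv
    · exact hn
  have star : DegP K v (fun x => ε / 2 * β x) := by
    rcases hmax with hmax | hmax
    · exact star_U hN hp sd hmax
    · exact star_V hn hN hp sd hmax
  obtain ⟨k, rfl⟩ : ∃ k, n = k + 1 := ⟨n - 1, by omega⟩
  obtain ⟨ℓ, hℓ⟩ := star_lin sd star
  refine hnl ⟨(ε / 2)⁻¹ • ℓ, fun x hx => ?_⟩
  rw [LinearMap.smul_apply, ← hℓ x hx, smul_eq_mul]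
  field_simp
end
end
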